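/- arXiv:1611.00265 — 17 statements merged into one kernel-verified Lean document; each statement's English description precedes it below -/
import Mathlib

section
/- Let X be an ∞-pseudo-metric space, let R, ε₀, ε₁ > 0, and let φ = {φ_s}_{s∈S} be a partition of unity on X that is (ε₀,R)-continuous as a map X → ℓ¹(S). Suppose {C_s}_{s∈S} is a family of pairwise disjoint sets and for each s ∈ S there is an (ε₁,R)-continuous function f_s from the stratum φ_s⁻¹((0,1]) to the unit sphere of ℓ¹(C_s). Then the function f : X → ℓ¹(⋃_{s∈S} C_s) defined by f(x) = Σ_{s∈S} φ_s(x)·f_s(x) takes values in the unit sphere of ℓ¹(⋃_{s∈S} C_s) and is (ε₀+ε₁, R)-continuous. -/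
open scoped ENNReal

theorem abs_sub_le_abs_add_abs_aux (a b : ℝ) : |a - b| ≤ |a| + |b| := by
  simpa [sub_eq_add_neg] using abs_add_le a (-b)

/-- If `φ` is an `(ε₀,R)`-continuous partition of unity on an ∞-pseudo-metric
space `X` and each stratum `φ_s⁻¹(0,1]` carries an `(ε₁,R)`-continuous map `f_s` into the
unit sphere of `ℓ¹(C_s)` (the `C_s` pairwise disjoint, modeled as a sigma type), then
`f(x) = Σ_s φ_s(x)·f_s(x)` takes values in the unit sphere of `ℓ¹(⋃_s C_s)` and is
`(ε₀+ε₁,R)`-continuous. -/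
theorem stmt0 {X S : Type} [PseudoEMetricSpace X] (C : S → Type)
    (R ε₀ ε₁ : ℝ) (hR : 0 < R) (hε₀ : 0 < ε₀) (hε₁ : 0 < ε₁)
    (φ : S → X → ℝ)
    (hφ01 : ∀ s x, 0 ≤ φ s x ∧ φ s x ≤ 1)
    (hφsum : ∀ x, HasSum (fun s => φ s x) 1)
    (hφcont : ∀ x y : X, edist x y ≤ ENNReal.ofReal R →
      (∑' s, |φ s x - φ s y|) ≤ ε₀)
    (f : ∀ s, X → C s → ℝ)
    (hfl1 : ∀ s x, 0 < φ s x → Summable (fun c => |f s x c|))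
    (hfsphere : ∀ s x, 0 < φ s x → (∑' c, |f s x c|) = 1)
    (hfcont : ∀ s, ∀ x y : X, 0 < φ s x → 0 < φ s y →
      edist x y ≤ ENNReal.ofReal R → (∑' c, |f s x c - f s y c|) ≤ ε₁) :
    (∀ x : X, (∑' p : Σ s, C s, |φ p.1 x * f p.1 x p.2|) = 1) ∧
    (∀ x y : X, edist x y ≤ ENNReal.ofReal R →
      (∑' p : Σ s, C s, |φ p.1 x * f p.1 x p.2 - φ p.1 y * f p.1 y p.2|) ≤ ε₀ + ε₁) := by
  have hin : ∀ s x, HasSum (fun c => |φ s x * f s x c|) (φ s x) := by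
    intro s x
    rcases (hφ01 s x).1.eq_or_lt with h | h
    · simp only [← h, zero_mul, abs_zero]
      exact hasSum_zero
    · have h1 := (hfl1 s x h).hasSum.mul_left (φ s x)
      rw [hfsphere s x h, mul_one] at h1
      simpa only [abs_mul, abs_of_pos h] using h1
  have hsig : ∀ x, Summable (fun p : Σ s, C s => |φ p.1 x * f p.1 x p.2|) := by
    intro x
    rw [summable_sigma_of_nonneg (fun _ => abs_nonneg _)]
    refine ⟨fun s => (hin s x).summable, ?_⟩
    simp only [(hin _ x).tsum_eq]
    exact (hφsum x).summable
  refine ⟨fun x => ?_, fun x y hxy => ?_⟩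
  · rw [(hsig x).tsum_sigma' (fun s => (hin s x).summable)]
    simp only [(hin _ x).tsum_eq]
    exact (hφsum x).tsum_eq
  · have hsub : Summable (fun p : Σ s, C s =>
        |φ p.1 x * f p.1 x p.2 - φ p.1 y * f p.1 y p.2|) :=
      Summable.of_nonneg_of_le (fun _ => abs_nonneg _) (fun _ => abs_sub_le_abs_add_abs_aux _ _)
        ((hsig x).add (hsig y))
    have hsubin : ∀ s, Summable (fun c => |φ s x * f s x c - φ s y * f s y c|) := fun s =>
      Summable.of_nonneg_of_le (fun _ => abs_nonneg _) (fun _ => abs_sub_le_abs_add_abs_aux _ _)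
        ((hin s x).summable.add (hin s y).summable)
    have hφsub : Summable (fun s => |φ s x - φ s y|) :=
      ((hφsum x).summable.sub (hφsum y).summable).abs
    have hb : ∀ s, (∑' c, |φ s x * f s x c - φ s y * f s y c|)
        ≤ |φ s x - φ s y| + φ s x * ε₁ := by
      intro s
      rcases (hφ01 s x).1.eq_or_lt with h | h
      · have h2 := (hin s y).tsum_eq
        simp only [← h, zero_mul, zero_sub, abs_neg, add_zero, h2]
        exact le_abs_self _
      rcases (hφ01 s y).1.eq_or_lt with h' | h'
      · have h2 := (hin s x).tsum_eq
        simp only [← h', zero_mul, sub_zero, h2, abs_of_pos h]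
        have := mul_pos h hε₁
        linarith
      have hfs : Summable (fun c => |f s x c - f s y c|) :=
        Summable.of_nonneg_of_le (fun _ => abs_nonneg _) (fun _ => abs_sub_le_abs_add_abs_aux _ _)
          ((hfl1 s x h).add (hfl1 s y h'))
      have hA := (hfl1 s y h').hasSum.mul_left |φ s x - φ s y|
      rw [hfsphere s y h', mul_one] at hA
      have hB := hA.add (hfs.hasSum.mul_left (φ s x))
      have hpt : ∀ c, |φ s x * f s x c - φ s y * f s y c|
          ≤ |φ s x - φ s y| * |f s y c| + φ s x * |f s x c - f s y c| := by
        intro c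
        have e : φ s x * f s x c - φ s y * f s y c
            = (φ s x - φ s y) * f s y c + φ s x * (f s x c - f s y c) := by ring
        have e2 := abs_add_le ((φ s x - φ s y) * f s y c) (φ s x * (f s x c - f s y c))
        rw [← e, abs_mul, abs_mul, abs_of_pos h] at e2
        exact e2
      have hle := hasSum_le hpt (hsubin s).hasSum hB
      have := mul_le_mul_of_nonneg_left (hfcont s x y h h' hxy) h.le
      linarith
    rw [hsub.tsum_sigma]
    have hR2 := hφsub.hasSum.add ((hφsum x).mul_right ε₁)
    have hsg : Summable (fun s => ∑' c, |φ s x * f s x c - φ s y * f s y c|) := hsub.sigma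
    have := Summable.tsum_le_tsum hb hsg hR2.summable
    rw [hR2.tsum_eq] at this
    have := hφcont x y hxy
    linarith
end

section
/- Let X be an ∞-pseudo-metric space, let m be a positive integer, and let R, ε > 0. Let 𝒱 = {V_s}_{s∈S} be a cover of X of multiplicity at most m at each point (each x ∈ X belongs to at most m of the sets V_s) and of Lebesgue number at least 4mR/ε (for every x ∈ X there is s ∈ S with B(x, 4mR/ε) ⊆ V_s). Then the partition of unity φ_R^𝒱 associated to 𝒱 is a well-defined partition of unity on X indexed by S and is (ε, R)-continuous as a map X → ℓ¹(S). -/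
open scoped ENNReal

/-- There is a chain `x = x_0, x_1, …, x_k` with `x_k ∉ V` and consecutive distances `≤ R`. -/
def HasChain {X : Type} [PseudoEMetricSpace X] (R : ℝ) (x : X) (V : Set X) (k : ℕ) : Prop :=
  ∃ c : ℕ → X, c 0 = x ∧ c k ∉ V ∧ ∀ i < k, edist (c i) (c (i + 1)) ≤ ENNReal.ofReal R

/-- The index `i_R(x,V)`: the smallest `k` admitting such a chain, `∞` if none exists. -/
noncomputable def idxR {X : Type} [PseudoEMetricSpace X] (R : ℝ) (x : X) (V : Set X) : ℕ∞ :=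
  sInf {n : ℕ∞ | ∃ k : ℕ, (k : ℕ∞) = n ∧ HasChain R x V k}

open Classical in
/-- The partition of unity `φ_R^𝒱` associated to a cover `𝒱 = {V_s}`. -/
noncomputable def phiV {X S : Type} [PseudoEMetricSpace X] (R : ℝ) (V : S → Set X)
    (s : S) (x : X) : ℝ :=
  if ∀ t, idxR R x (V t) ≠ ⊤ then
    ((idxR R x (V s)).toNat : ℝ) / ∑' t, ((idxR R x (V t)).toNat : ℝ)
  else if idxR R x (V s) = ⊤ then 1 / ({t | idxR R x (V t) = ⊤}.ncard : ℝ) else 0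

theorem idxR_le {X : Type} [PseudoEMetricSpace X] {R : ℝ} {x : X} {V : Set X} {k : ℕ}
    (h : HasChain R x V k) : idxR R x V ≤ k := sInf_le ⟨k, rfl, h⟩

theorem hasChain_of_ne_top {X : Type} [PseudoEMetricSpace X] {R : ℝ} {x : X} {V : Set X}
    (h : idxR R x V ≠ ⊤) : HasChain R x V (idxR R x V).toNat := by
  have hne : {n : ℕ∞ | ∃ k : ℕ, (k : ℕ∞) = n ∧ HasChain R x V k}.Nonempty := by
    by_contra hc
    rw [Set.not_nonempty_iff_eq_empty] at hc
    apply h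
    unfold idxR
    rw [hc, sInf_empty]
  obtain ⟨k, hk, hc⟩ := csInf_mem hne
  have : idxR R x V = k := hk.symm
  rw [this]
  simpa using hc

theorem HasChain.step {X : Type} [PseudoEMetricSpace X] {R : ℝ} {x y : X} {V : Set X} {k : ℕ}
    (hxy : edist x y ≤ ENNReal.ofReal R) (h : HasChain R y V k) : HasChain R x V (k + 1) := by
  obtain ⟨c, h0, hk, hc⟩ := h
  refine ⟨fun n => Nat.casesOn n x c, rfl, hk, ?_⟩
  intro i hi
  cases i with
  | zero => simpa [h0] using hxy
  | succ j => exact hc j (by omega)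

theorem idxR_step {X : Type} [PseudoEMetricSpace X] {R : ℝ} {x y : X} {V : Set X}
    (hxy : edist x y ≤ ENNReal.ofReal R) (h : idxR R y V ≠ ⊤) :
    idxR R x V ≠ ⊤ ∧ (idxR R x V).toNat ≤ (idxR R y V).toNat + 1 := by
  have h1 := idxR_le ((hasChain_of_ne_top h).step hxy)
  have h2 : idxR R x V ≠ ⊤ := ne_top_of_le_ne_top (ENat.natCast_ne_top _) h1
  refine ⟨h2, ?_⟩
  have := ENat.toNat_le_toNat h1 (ENat.natCast_ne_top _)
  rwa [ENat.toNat_coe] at this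

theorem idxR_zero {X : Type} [PseudoEMetricSpace X] {R : ℝ} {x : X} {V : Set X}
    (h : x ∉ V) : idxR R x V = 0 := by
  have : HasChain R x V 0 := ⟨fun _ => x, rfl, h, by simp⟩
  simpa using idxR_le this

theorem HasChain.lt {X : Type} [PseudoEMetricSpace X] {R r : ℝ} (hR : 0 < R) {x : X} {V : Set X}
    {k : ℕ} (hr : EMetric.closedBall x (ENNReal.ofReal r) ⊆ V)
    (h : HasChain R x V k) : r < k * R := by
  obtain ⟨c, h0, hk, hc⟩ := h
  by_contra hlt
  push Not at hlt
  apply hk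
  apply hr
  have key : ∀ j ≤ k, edist (c j) x ≤ ENNReal.ofReal (j * R) := by
    intro j
    induction j with
    | zero => intro _; simp [h0]
    | succ j ih =>
      intro hj
      calc edist (c (j+1)) x ≤ edist (c (j+1)) (c j) + edist (c j) x := edist_triangle _ _ _
        _ ≤ ENNReal.ofReal R + ENNReal.ofReal (j * R) := by
          gcongr
          · rw [edist_comm]; exact hc j (by omega)
          · exact ih (by omega)
        _ = ENNReal.ofReal ((j + 1 : ℕ) * R) := by
          rw [← ENNReal.ofReal_add hR.le (by positivity)]
          congr 1; push_cast; ring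
  exact (key k le_rfl).trans (ENNReal.ofReal_le_ofReal hlt)

theorem l1_bound {S : Type} (F : Finset S) (a b : S → ℝ) (ε N : ℝ) (hε : 0 < ε)
    (hb : ∀ s, 0 ≤ b s) (hab : ∀ s, |a s - b s| ≤ 1) (hF : 2 * (F.card : ℝ) ≤ N)
    (hA : 0 < ∑ s ∈ F, a s) (hB : 0 < ∑ s ∈ F, b s) (hN : N ≤ ε * ∑ s ∈ F, a s) :
    ∑ s ∈ F, |a s / (∑ t ∈ F, a t) - b s / (∑ t ∈ F, b t)| ≤ ε := by
  set A := ∑ s ∈ F, a s with hAd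
  set B := ∑ s ∈ F, b s with hBd
  have hd : ∑ s ∈ F, |a s - b s| ≤ F.card := by
    calc _ ≤ ∑ s ∈ F, (1 : ℝ) := Finset.sum_le_sum fun s _ => hab s
      _ = _ := by simp
  have hAB : |B - A| ≤ F.card := by
    rw [abs_sub_comm, hAd, hBd, ← Finset.sum_sub_distrib]
    exact (Finset.abs_sum_le_sum_abs _ _).trans hd
  have h1 : ∀ s ∈ F, |a s / A - b s / B| ≤ |a s - b s| / A + b s * (|B - A| / (A * B)) := by
    intro s _
    have : a s / A - b s / B = (a s - b s) / A + b s * ((B - A) / (A * B)) := by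
      field_simp; ring
    rw [this]
    refine (abs_add_le _ _).trans (le_of_eq ?_)
    rw [abs_div, abs_mul, abs_div, abs_of_pos hA, abs_of_nonneg (hb s),
      abs_of_pos (mul_pos hA hB)]
  calc _ ≤ ∑ s ∈ F, (|a s - b s| / A + b s * (|B - A| / (A * B))) := Finset.sum_le_sum h1
    _ = (∑ s ∈ F, |a s - b s|) / A + B * (|B - A| / (A * B)) := by
      rw [Finset.sum_add_distrib, Finset.sum_div, ← Finset.sum_mul]
    _ = ((∑ s ∈ F, |a s - b s|) + |B - A|) / A := by field_simp
    _ ≤ ε := by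
      rw [div_le_iff₀ hA]; linarith

/-- If `𝒱 = {V_s}` is a cover of an ∞-pseudo-metric space `X` of multiplicity
at most `m` and Lebesgue number at least `4mR/ε`, then `φ_R^𝒱` is a well-defined partition
of unity on `X` which is `(ε,R)`-continuous. -/
theorem stmt2 {X S : Type} [PseudoEMetricSpace X] (m : ℕ) (hm : 0 < m)
    (R ε : ℝ) (hR : 0 < R) (hε : 0 < ε) (V : S → Set X)
    (hcover : ∀ x : X, ∃ s, x ∈ V s)
    (hmult : ∀ x : X, {s | x ∈ V s}.Finite ∧ {s | x ∈ V s}.ncard ≤ m)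
    (hleb : ∀ x : X, ∃ s, EMetric.closedBall x (ENNReal.ofReal (4 * m * R / ε)) ⊆ V s) :
    (∀ s x, 0 ≤ phiV R V s x ∧ phiV R V s x ≤ 1) ∧
    (∀ x, HasSum (fun s => phiV R V s x) 1) ∧
    (∀ x y : X, edist x y ≤ ENNReal.ofReal R →
      (∑' s, |phiV R V s x - phiV R V s y|) ≤ ε) := by
  classical
  have hz : ∀ x s, x ∉ V s → idxR R x (V s) = 0 := fun x s h => idxR_zero h
  have htopfin : ∀ x, {t | idxR R x (V t) = ⊤}.Finite := fun x =>
    (hmult x).1.subset fun t ht => by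
      by_contra hc
      have h1 := hz x t hc
      rw [Set.mem_ofPred_eq] at ht
      rw [h1] at ht
      exact ENat.zero_ne_top ht
  have hsupp : ∀ x (F : Finset S), (∀ s, x ∈ V s → s ∈ F) →
      ∑' t, ((idxR R x (V t)).toNat : ℝ) = ∑ t ∈ F, ((idxR R x (V t)).toNat : ℝ) := by
    intro x F hF
    refine tsum_eq_sum fun t ht => ?_
    rw [hz x t fun h => ht (hF t h)]
    simp
  have hbig : ∀ x (F : Finset S), (∀ s, x ∈ V s → s ∈ F) → (∀ t, idxR R x (V t) ≠ ⊤) →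
      4 * m < ε * ∑ t ∈ F, ((idxR R x (V t)).toNat : ℝ) := by
    intro x F hF hfin
    obtain ⟨s, hs⟩ := hleb x
    have h1 := (hasChain_of_ne_top (hfin s)).lt hR hs
    have hsF : s ∈ F := hF s (hs (show edist x x ≤ _ by simp))
    have h2 : ((idxR R x (V s)).toNat : ℝ) ≤ ∑ t ∈ F, ((idxR R x (V t)).toNat : ℝ) :=
      Finset.single_le_sum (f := fun t => ((idxR R x (V t)).toNat : ℝ))
        (fun _ _ => Nat.cast_nonneg _) hsF
    rw [div_lt_iff₀ hε] at h1
    have h3 : 4 * (m : ℝ) < (idxR R x (V s)).toNat * ε := by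
      by_contra hc
      push Not at hc
      nlinarith
    nlinarith
  have hpos : ∀ x (F : Finset S), (∀ s, x ∈ V s → s ∈ F) → (∀ t, idxR R x (V t) ≠ ⊤) →
      0 < ∑ t ∈ F, ((idxR R x (V t)).toNat : ℝ) := by
    intro x F hF hfin
    have h1 := hbig x F hF hfin
    have h2 : (0 : ℝ) ≤ 4 * m := by positivity
    exact pos_of_mul_pos_right (h2.trans_lt h1) hε.le
  have hnonneg : ∀ s x, 0 ≤ phiV R V s x := by
    intro s x
    unfold phiV
    split_ifs
    · exact div_nonneg (Nat.cast_nonneg _) (tsum_nonneg fun _ => Nat.cast_nonneg _)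
    · positivity
    · exact le_rfl
  have hsum : ∀ x, HasSum (fun s => phiV R V s x) 1 := by
    intro x
    by_cases hfin : ∀ t, idxR R x (V t) ≠ ⊤
    · set F := (hmult x).1.toFinset with hFd
      have hF : ∀ s, x ∈ V s → s ∈ F := fun s hs => by simpa [hFd] using hs
      have hp := hpos x F hF hfin
      have e : (∑ s ∈ F, phiV R V s x) = 1 := by
        simp only [phiV, if_pos hfin, hsupp x F hF]
        rw [← Finset.sum_div, div_self hp.ne']
      rw [← e]
      refine hasSum_sum_of_ne_finset_zero fun s hs => ?_
      simp only [phiV, if_pos hfin]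
      rw [hz x s fun h => hs (hF s h)]
      simp
    · set F := (htopfin x).toFinset with hFd
      have hF : ∀ s, s ∈ F ↔ idxR R x (V s) = ⊤ := fun s => by simp [hFd]
      have e : (∑ s ∈ F, phiV R V s x) = 1 := by
        have e1 : ∀ s ∈ F, phiV R V s x = 1 / (F.card : ℝ) := by
          intro s hs
          simp only [phiV, if_neg hfin, if_pos ((hF s).1 hs)]
          rw [Set.ncard_eq_toFinset_card _ (htopfin x)]
        rw [Finset.sum_congr rfl e1]
        push Not at hfin
        obtain ⟨t, ht⟩ := hfin
        have : (F.card : ℝ) ≠ 0 := by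
          exact_mod_cast (Finset.card_pos.2 ⟨t, (hF t).2 ht⟩).ne'
        simp [this]
      rw [← e]
      refine hasSum_sum_of_ne_finset_zero fun s hs => ?_
      have hs' : ¬ idxR R x (V s) = ⊤ := fun h => hs ((hF s).2 h)
      simp only [phiV, if_neg hfin, if_neg hs']
  refine ⟨fun s x => ⟨hnonneg s x, le_hasSum (hsum x) s fun t _ => hnonneg t x⟩, hsum, ?_⟩
  intro x y hxy
  have hyx : edist y x ≤ ENNReal.ofReal R := by rwa [edist_comm]
  have htop : ∀ s, idxR R x (V s) = ⊤ ↔ idxR R y (V s) = ⊤ := fun s =>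
    not_iff_not.1 ⟨fun h => (idxR_step hyx h).1, fun h => (idxR_step hxy h).1⟩
  by_cases hfin : ∀ t, idxR R x (V t) ≠ ⊤
  · have hfiny : ∀ t, idxR R y (V t) ≠ ⊤ := fun t h => hfin t ((htop t).2 h)
    set F := (hmult x).1.toFinset ∪ (hmult y).1.toFinset with hFd
    have hFx : ∀ s, x ∈ V s → s ∈ F := fun s hs => by simp [hFd, hs]
    have hFy : ∀ s, y ∈ V s → s ∈ F := fun s hs => by simp [hFd, hs]
    have hcard : F.card ≤ 2 * m := by
      have h1 := (hmult x).2
      have h2 := (hmult y).2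
      rw [Set.ncard_eq_toFinset_card _ (hmult x).1] at h1
      rw [Set.ncard_eq_toFinset_card _ (hmult y).1] at h2
      have := Finset.card_union_le (hmult x).1.toFinset (hmult y).1.toFinset
      rw [← hFd] at this
      omega
    have hcard' : (F.card : ℝ) ≤ 2 * m := by exact_mod_cast hcard
    rw [tsum_eq_sum (s := F)]
    · simp only [phiV, if_pos hfin, if_pos hfiny, hsupp x F hFx, hsupp y F hFy]
      refine l1_bound F (fun s => ((idxR R x (V s)).toNat : ℝ))
        (fun s => ((idxR R y (V s)).toNat : ℝ)) ε (4 * m) hε (fun _ => Nat.cast_nonneg _) ?_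
        (by linarith) (hpos x F hFx hfin) (hpos y F hFy hfiny) (hbig x F hFx hfin).le
      intro s
      have h1 := (idxR_step hxy (hfiny s)).2
      have h2 := (idxR_step hyx (hfin s)).2
      have h1' : ((idxR R x (V s)).toNat : ℝ) ≤ (idxR R y (V s)).toNat + 1 := by exact_mod_cast h1
      have h2' : ((idxR R y (V s)).toNat : ℝ) ≤ (idxR R x (V s)).toNat + 1 := by exact_mod_cast h2
      rw [abs_le]
      constructor <;> linarith
    · intro s hs
      simp only [phiV, if_pos hfin, if_pos hfiny]
      rw [hz x s fun h => hs (hFx s h), hz y s fun h => hs (hFy s h)]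
      simp
  · have hfiny : ¬ ∀ t, idxR R y (V t) ≠ ⊤ := fun h => hfin fun t ht => h t ((htop t).1 ht)
    have : ∀ s, phiV R V s x = phiV R V s y := by
      intro s
      simp only [phiV, if_neg hfin, if_neg hfiny, htop]
    simp [this, hε.le]
end

section
/- Let X be an ∞-pseudo-metric space. If for each R > 0, X can be expressed as a finite union X = ⋃_{i=1}^m X_i where each X_i is the union of an R-disjoint family of uniformly bounded subsets of X, then for every R > 0 there is a point-finite partition of unity on X whose strata are uniformly bounded and whose family of strata has Lebesgue number at least R. -/
open scoped ENNReal

/-- If for each `R > 0` the ∞-pseudo-metric space `X` is a finite union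
`X = ⋃_{i=1}^m X_i` with each `X_i` the union of an `R`-disjoint uniformly bounded family,
then for every `R > 0` there is a point-finite partition of unity on `X` whose strata are
uniformly bounded and form a family of Lebesgue number at least `R`. -/
theorem stmt3 {X : Type} [PseudoEMetricSpace X]
    (hdec : ∀ R : ℝ, 0 < R → ∃ (m : ℕ) (F : Fin m → Set (Set X)) (D : ℝ), 0 < D ∧
      (⋃ i, ⋃₀ F i) = Set.univ ∧
      (∀ i, ∀ A ∈ F i, ∀ B ∈ F i, A ≠ B → ∀ x ∈ A, ∀ y ∈ B,
        ENNReal.ofReal R ≤ edist x y) ∧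
      (∀ i, ∀ A ∈ F i, EMetric.diam A ≤ ENNReal.ofReal D)) :
    ∀ R : ℝ, 0 < R → ∃ (S : Type) (φ : S → X → ℝ),
      (∀ s x, 0 ≤ φ s x ∧ φ s x ≤ 1) ∧
      (∀ x, HasSum (fun s => φ s x) 1) ∧
      (∀ x : X, {s | 0 < φ s x}.Finite) ∧
      (∃ D : ℝ, 0 < D ∧ ∀ s, EMetric.diam {x | 0 < φ s x} ≤ ENNReal.ofReal D) ∧
      (∀ x : X, ∃ s, EMetric.closedBall x (ENNReal.ofReal R) ⊆ {x' | 0 < φ s x'}) := by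
  classical
  intro R hR
  obtain ⟨m, F, D, hD, hcov, hdis, hbd⟩ := hdec (3 * R) (by positivity)
  let S : Type := {p : Fin m × Set X // p.2 ∈ F p.1}
  let N : S → Set X := fun s => {x | ∃ a ∈ s.1.2, edist x a ≤ ENNReal.ofReal R}
  have hfin : ∀ x, {s : S | x ∈ N s}.Finite := by
    intro x
    refine Set.Finite.of_finite_image (f := fun s : S => s.1.1) (Set.toFinite _) ?_
    rintro ⟨⟨i, A⟩, hA⟩ ⟨a, ha, hxa⟩ ⟨⟨j, B⟩, hB⟩ ⟨b, hb, hxb⟩ hij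
    dsimp only at hij hA hB ha hb
    subst hij
    by_cases hAB : A = B
    · subst hAB; rfl
    · exfalso
      have h1 := hdis i A hA B hB hAB a ha b hb
      have h2 : edist a b ≤ ENNReal.ofReal (R + R) := by
        rw [ENNReal.ofReal_add hR.le hR.le]
        exact (edist_triangle_left a b x).trans (add_le_add hxa hxb)
      have h3 := (ENNReal.ofReal_le_ofReal_iff (by positivity)).1 (h1.trans h2)
      linarith
  have hex : ∀ x, ∃ s : S, x ∈ s.1.2 := by
    intro x
    have hx : x ∈ ⋃ i, ⋃₀ F i := by rw [hcov]; trivial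
    obtain ⟨i, A, hA, hxA⟩ := Set.mem_iUnion.1 hx
    exact ⟨⟨(i, A), hA⟩, hxA⟩
  have hcard : ∀ x, 1 ≤ (hfin x).toFinset.card := by
    intro x
    obtain ⟨s, hs⟩ := hex x
    refine Finset.card_pos.2 ⟨s, (hfin x).mem_toFinset.2 ⟨x, hs, by simp⟩⟩
  have hcard' : ∀ x, (1 : ℝ) ≤ ((hfin x).toFinset.card : ℝ) := fun x => by
    exact_mod_cast hcard x
  let φ : S → X → ℝ := fun s x => if x ∈ N s then ((hfin x).toFinset.card : ℝ)⁻¹ else 0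
  have hpos : ∀ s x, 0 < φ s x ↔ x ∈ N s := by
    intro s x
    by_cases h : x ∈ N s
    · have : (0 : ℝ) < ((hfin x).toFinset.card : ℝ)⁻¹ :=
        inv_pos.2 (lt_of_lt_of_le one_pos (hcard' x))
      simp only [φ, if_pos h, h, this]
    · simp only [φ, if_neg h, h, lt_irrefl]
  refine ⟨S, φ, ?_, ?_, ?_, ?_, ?_⟩
  · intro s x
    by_cases h : x ∈ N s
    · simp only [φ, if_pos h]
      exact ⟨by positivity, inv_le_one_of_one_le₀ (hcard' x)⟩
    · simp only [φ, if_neg h]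
      norm_num
  · intro x
    have h : HasSum (fun s => φ s x) (∑ s ∈ (hfin x).toFinset, φ s x) := hasSum_sum_of_ne_finset_zero (f := fun s => φ s x) (s := (hfin x).toFinset)
      (fun s hs => if_neg (fun h => hs ((hfin x).mem_toFinset.2 h)))
    have h1 : ∑ s ∈ (hfin x).toFinset, φ s x = 1 := by
      rw [Finset.sum_congr rfl (f := fun s => φ s x) (g := fun _ => ((hfin x).toFinset.card : ℝ)⁻¹)
        (fun s hs => if_pos ((hfin x).mem_toFinset.1 hs)), Finset.sum_const, nsmul_eq_mul]
      exact mul_inv_cancel₀ (by linarith [hcard' x])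
    rwa [h1] at h
  · intro x
    simp only [hpos]
    exact hfin x
  · refine ⟨R + D + R, by positivity, fun s => ?_⟩
    simp only [hpos]
    refine Metric.ediam_le ?_
    rintro x ⟨a, ha, hxa⟩ y ⟨b, hb, hyb⟩
    rw [ENNReal.ofReal_add (by positivity) hR.le, ENNReal.ofReal_add hR.le hD.le]
    refine (edist_triangle4 x a b y).trans (add_le_add (add_le_add hxa ?_) ?_)
    · exact (Metric.edist_le_ediam_of_mem ha hb).trans (hbd _ _ s.2)
    · rwa [edist_comm]
  · intro x
    obtain ⟨s, hs⟩ := hex x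
    refine ⟨s, fun y hy => (hpos s y).2 ⟨x, hs, hy⟩⟩
end

section
/- Let X be an ∞-pseudo-metric space. Suppose that (a) X is exact, and (b) for every R > 0 there is a point-finite partition of unity on X whose strata are uniformly bounded and whose family of strata has Lebesgue number at least R. Then for every R, ε > 0 there is a point-finite (ε,R)-continuous partition of unity on X whose strata are uniformly bounded and whose family of strata has Lebesgue number at least R. -/
open scoped ENNReal

/-- If `X` is exact and for every `R > 0` it admits a point-finite partition
of unity with uniformly bounded strata and Lebesgue number at least `R`, then for every
`R, ε > 0` there is a point-finite `(ε,R)`-continuous partition of unity on `X` with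
uniformly bounded strata and Lebesgue number at least `R`. -/
theorem stmt4 {X : Type} [PseudoEMetricSpace X]
    (hexact : ∀ R ε : ℝ, 0 < R → 0 < ε → ∃ (S : Type) (φ : S → X → ℝ),
      (∀ s x, 0 ≤ φ s x ∧ φ s x ≤ 1) ∧
      (∀ x, HasSum (fun s => φ s x) 1) ∧
      (∀ x y : X, edist x y ≤ ENNReal.ofReal R → (∑' s, |φ s x - φ s y|) ≤ ε) ∧
      (∃ D : ℝ, 0 < D ∧ ∀ s, EMetric.diam {x | 0 < φ s x} ≤ ENNReal.ofReal D))
    (hpf : ∀ R : ℝ, 0 < R → ∃ (S : Type) (φ : S → X → ℝ),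
      (∀ s x, 0 ≤ φ s x ∧ φ s x ≤ 1) ∧
      (∀ x, HasSum (fun s => φ s x) 1) ∧
      (∀ x : X, {s | 0 < φ s x}.Finite) ∧
      (∃ D : ℝ, 0 < D ∧ ∀ s, EMetric.diam {x | 0 < φ s x} ≤ ENNReal.ofReal D) ∧
      (∀ x : X, ∃ s, EMetric.closedBall x (ENNReal.ofReal R) ⊆ {x' | 0 < φ s x'})) :
    ∀ R ε : ℝ, 0 < R → 0 < ε → ∃ (S : Type) (φ : S → X → ℝ),
      (∀ s x, 0 ≤ φ s x ∧ φ s x ≤ 1) ∧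
      (∀ x, HasSum (fun s => φ s x) 1) ∧
      (∀ x : X, {s | 0 < φ s x}.Finite) ∧
      (∀ x y : X, edist x y ≤ ENNReal.ofReal R → (∑' s, |φ s x - φ s y|) ≤ ε) ∧
      (∃ D : ℝ, 0 < D ∧ ∀ s, EMetric.diam {x | 0 < φ s x} ≤ ENNReal.ofReal D) ∧
      (∀ x : X, ∃ s, EMetric.closedBall x (ENNReal.ofReal R) ⊆ {x' | 0 < φ s x'}) := by
  intro R ε hR hε
  rcases isEmpty_or_nonempty X with hX | hX
  · obtain ⟨S, φ, h1, h2, h3, h4, h5⟩ := hpf R hR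
    exact ⟨S, φ, h1, h2, h3, fun x => isEmptyElim x, h4, h5⟩
  obtain ⟨S, φ, a1, a2, a3, D, hD, a4⟩ := hexact R (ε / 2) hR (by positivity)
  obtain ⟨T, ψ, b1, b2, b3, b4, b5⟩ := hpf (max D R) (lt_max_of_lt_left hD)
  have hf : ∀ s, ∃ t, {x | 0 < φ s x} ⊆ {x | 0 < ψ t x} := by
    intro s
    by_cases hs : ∃ x, 0 < φ s x
    · obtain ⟨x, hx⟩ := hs
      obtain ⟨t, ht⟩ := b5 x
      refine ⟨t, fun y hy => ht ?_⟩
      have h := (Metric.edist_le_ediam_of_mem (s := {x | 0 < φ s x}) hy hx).trans (a4 s)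
      exact h.trans (ENNReal.ofReal_le_ofReal (le_max_left _ _))
    · obtain ⟨t, _⟩ := b5 hX.some
      exact ⟨t, fun y hy => (hs ⟨y, hy⟩).elim⟩
  choose f hf using hf
  let χ : T → X → ℝ := fun t x => ∑' s : f ⁻¹' {t}, φ s x
  have c0 : ∀ t x, 0 ≤ χ t x := fun t x => tsum_nonneg fun s => (a1 s x).1
  have c1 : ∀ x, HasSum (fun t => χ t x) 1 := fun x => (a2 x).tsum_fiberwise f
  have c2 : ∀ t x, 0 < χ t x → 0 < ψ t x := by
    intro t x h
    by_contra hn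
    have h0 : χ t x = 0 := by
      have : (fun s : f ⁻¹' {t} => φ s x) = fun _ => 0 := by
        funext ⟨s, hs⟩
        by_contra hne
        have hpos : 0 < φ s x := lt_of_le_of_ne (a1 s x).1 (Ne.symm hne)
        have h' : 0 < ψ (f s) x := hf s hpos
        have hs' : f s = t := hs
        rw [hs'] at h'
        exact hn h'
      simp only [χ, this, tsum_zero]
    linarith
  have c3 : ∀ x y, Summable (fun t => |χ t x - χ t y|) := fun x y =>
    ((c1 x).summable.sub (c1 y).summable).abs
  have c4 : ∀ x y, ∑' t, |χ t x - χ t y| ≤ ∑' s, |φ s x - φ s y| := by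
    intro x y
    have hs : Summable (fun s => |φ s x - φ s y|) :=
      ((a2 x).summable.sub (a2 y).summable).abs
    have hF := hs.hasSum.tsum_fiberwise f
    rw [← hF.tsum_eq]
    refine (c3 x y).tsum_le_tsum (fun t => ?_) hF.summable
    have e : χ t x - χ t y = ∑' s : f ⁻¹' {t}, (φ s x - φ s y) :=
      (((a2 x).summable.subtype _).tsum_sub ((a2 y).summable.subtype _)).symm
    rw [e]
    have hs' : Summable (fun s : f ⁻¹' {t} => ‖φ s x - φ s y‖) := hs.subtype _
    exact norm_tsum_le_tsum_norm hs'
  have d3 : ∀ x y, Summable (fun t => |ψ t x - ψ t y|) := fun x y =>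
    ((b2 x).summable.sub (b2 y).summable).abs
  have d4 : ∀ x y, ∑' t, |ψ t x - ψ t y| ≤ 2 := by
    intro x y
    have h := (b2 x).add (b2 y)
    have : ∑' t, |ψ t x - ψ t y| ≤ ∑' t, (ψ t x + ψ t y) := by
      refine (d3 x y).tsum_le_tsum (fun t => ?_) h.summable
      have := (b1 t x).1
      have := (b1 t y).1
      rw [abs_le]
      constructor <;> linarith
    rw [h.tsum_eq] at this
    linarith
  obtain ⟨δ, hδ, hδ1, hδε⟩ : ∃ δ : ℝ, 0 < δ ∧ δ ≤ 1 ∧ δ ≤ ε / 4 :=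
    ⟨min 1 (ε / 4), lt_min one_pos (by positivity), min_le_left _ _, min_le_right _ _⟩
  let η : T → X → ℝ := fun t x => (1 - δ) * χ t x + δ * ψ t x
  have e0 : ∀ t x, 0 ≤ η t x := fun t x =>
    add_nonneg (mul_nonneg (by linarith) (c0 t x)) (mul_nonneg hδ.le (b1 t x).1)
  have e1 : ∀ x, HasSum (fun t => η t x) 1 := by
    intro x
    have := ((c1 x).mul_left (1 - δ)).add ((b2 x).mul_left δ)
    simpa [η] using this
  have e2 : ∀ t x, 0 < η t x ↔ 0 < ψ t x := by
    intro t x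
    constructor
    · intro h
      by_contra hn
      have h1 : ψ t x = 0 := le_antisymm (not_lt.mp hn) (b1 t x).1
      have h2 : χ t x = 0 := le_antisymm (not_lt.mp fun h => hn (c2 t x h)) (c0 t x)
      simp [η, h1, h2] at h
    · intro h
      exact add_pos_of_nonneg_of_pos (mul_nonneg (by linarith) (c0 t x)) (mul_pos hδ h)
  refine ⟨T, η, fun t x => ⟨e0 t x, le_hasSum (e1 x) t fun u _ => e0 u x⟩, e1, ?_, ?_, ?_, ?_⟩
  · simpa only [e2] using b3
  · intro x y hxy
    have hS := ((c3 x y).mul_left (1 - δ)).add ((d3 x y).mul_left δ)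
    have h1 : ∑' t, |η t x - η t y| ≤
        ∑' t, ((1 - δ) * |χ t x - χ t y| + δ * |ψ t x - ψ t y|) := by
      refine (((e1 x).summable.sub (e1 y).summable).abs).tsum_le_tsum (fun t => ?_) hS
      have : η t x - η t y = (1 - δ) * (χ t x - χ t y) + δ * (ψ t x - ψ t y) := by
        simp only [η]; ring
      rw [this]
      refine (abs_add_le _ _).trans (le_of_eq ?_)
      rw [abs_mul, abs_mul, abs_of_nonneg (by linarith : 0 ≤ 1 - δ), abs_of_pos hδ]
    rw [((c3 x y).mul_left (1 - δ)).tsum_add ((d3 x y).mul_left δ), tsum_mul_left,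
      tsum_mul_left] at h1
    have h2 := (c4 x y).trans (a3 x y hxy)
    have h3 := d4 x y
    have h4 : (1 - δ) * ∑' t, |χ t x - χ t y| ≤ (1 - δ) * (ε / 2) :=
      mul_le_mul_of_nonneg_left h2 (by linarith)
    have h5 : δ * ∑' t, |ψ t x - ψ t y| ≤ δ * 2 := mul_le_mul_of_nonneg_left h3 hδ.le
    have h6 : 0 < δ * ε := mul_pos hδ hε
    linarith
  · simpa only [e2] using b4
  · intro x
    obtain ⟨t, ht⟩ := b5 x
    refine ⟨t, fun y hy => (e2 t y).2 (ht ?_)⟩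
    exact le_trans hy (ENNReal.ofReal_le_ofReal (le_max_right _ _))
end

section
/- Let X be an ∞-pseudo-metric space and let S be a set whose cardinality is larger than the cardinality of X × ℕ. Then X is exact if and only if there exist functions α : (0,∞) → (0,∞) and M : (0,∞) × (0,∞) → (0,∞) such that for every δ > 0, every K > 0, every subset A ⊆ X, and every (α(δ),α(δ))-Lipschitz K-cobounded map f : A → Δ(S), the map f extends to a (δ,δ)-Lipschitz M(δ,K)-cobounded map g : X → Δ(S). -/
open scoped ENNReal

lemma l1_aux {T S : Type} (F : T → S → ℝ) (b : T → ℝ) (hF : ∀ t, Summable (F t))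
    (hb : ∀ t, ∑' s, |F t s| ≤ b t) (hs : Summable b) :
    Summable (fun p : T × S => F p.1 p.2) ∧ Summable (fun s => ∑' t, F t s) ∧
    (∀ s, Summable (fun t => F t s)) ∧ ∑' s, |∑' t, F t s| ≤ ∑' t, b t := by
  have h1 : Summable (fun p : T × S => |F p.1 p.2|) := by
    refine (summable_prod_of_nonneg (fun p => abs_nonneg _)).2 ⟨fun t => (hF t).abs, ?_⟩
    exact Summable.of_nonneg_of_le (fun t => tsum_nonneg fun s => abs_nonneg _) hb hs
  have h2 : Summable (fun p : T × S => F p.1 p.2) := h1.of_abs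
  have h1' : Summable (fun p : S × T => |F p.2 p.1|) := h1.prod_symm
  have h2' : Summable (fun p : S × T => F p.2 p.1) := h2.prod_symm
  refine ⟨h2, h2'.prod, fun s => h2'.prod_factor s, ?_⟩
  calc ∑' s, |∑' t, F t s| ≤ ∑' s, ∑' t, |F t s| := by
        refine Summable.tsum_le_tsum (fun s => ?_) h2'.prod.abs h1'.prod
        have := norm_tsum_le_tsum_norm (f := fun t => F t s) (h1'.prod_factor s)
        simpa using this
    _ = ∑' t, ∑' s, |F t s| := Summable.tsum_comm (f := fun t s => |F t s|) h1
    _ ≤ ∑' t, b t := Summable.tsum_le_tsum hb h1.prod hs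

lemma l1_tri {S : Type} {u v w : S → ℝ} (hu : Summable u) (hv : Summable v) (hw : Summable w) :
    ∑' s, |u s - w s| ≤ ∑' s, |u s - v s| + ∑' s, |v s - w s| := by
  rw [← Summable.tsum_add (hu.sub hv).abs (hv.sub hw).abs]
  exact Summable.tsum_le_tsum (fun s => abs_sub_le _ _ _) (hu.sub hw).abs
    ((hu.sub hv).abs.add (hv.sub hw).abs)

lemma l1_two {S : Type} {u v : S → ℝ} (hu0 : ∀ s, 0 ≤ u s) (hv0 : ∀ s, 0 ≤ v s)
    (hu : HasSum u 1) (hv : HasSum v 1) : ∑' s, |u s - v s| ≤ 2 := by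
  have h : ∑' s, (u s + v s) = 2 := by
    rw [(hu.add hv).tsum_eq]; norm_num
  rw [← h]
  refine Summable.tsum_le_tsum (fun s => ?_) (hu.summable.sub hv.summable).abs
    (hu.summable.add hv.summable)
  rw [abs_le]; constructor <;> linarith [hu0 s, hv0 s]

lemma card_supp {A S X : Type} (f : A → S → ℝ) (hf : ∀ a, Summable (f a))
    (h : Cardinal.mk A ≤ Cardinal.mk X) :
    Cardinal.mk (⋃ a, Function.support (f a) : Set S) ≤ Cardinal.mk (X × ℕ) := by
  refine (Cardinal.mk_iUnion_le_sum_mk).trans ?_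
  refine (Cardinal.sum_le_sum _ (fun _ => Cardinal.aleph0)
    (fun a => (hf a).countable_support.le_aleph0)).trans ?_
  simp only [Cardinal.sum_const, Cardinal.mk_prod, Cardinal.lift_id, Cardinal.mk_nat]
  gcongr

open Classical in
lemma exists_iota {X S T : Type} (hcard : Cardinal.mk (X × ℕ) < Cardinal.mk S)
    (U : Set S) (hU : Cardinal.mk U ≤ Cardinal.mk (X × ℕ))
    (V : Set T) (hV : Cardinal.mk V ≤ Cardinal.mk (X × ℕ)) :
    ∃ ι : T → S, (∀ t ∈ V, ι t ∉ U) ∧ Set.InjOn ι V := by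
  have h1 : Cardinal.mk (X × ℕ) < Cardinal.mk (Uᶜ : Set S) := by
    by_contra hcon
    push Not at hcon
    have h2 := Cardinal.mk_sum_compl U
    have h3 : Cardinal.mk (X × ℕ) + Cardinal.mk (X × ℕ) = Cardinal.mk (X × ℕ) := by
      simp only [Cardinal.mk_prod, Cardinal.lift_id, Cardinal.mk_nat]
      rw [← mul_add, Cardinal.aleph0_add_aleph0]
    have h4 : Cardinal.mk S ≤ Cardinal.mk (X × ℕ) := by
      rw [← h2, ← h3]; exact add_le_add hU hcon
    exact absurd hcard (not_lt.2 h4)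
  obtain ⟨j⟩ := Cardinal.le_def .. |>.1 (hV.trans h1.le)
  have hne : Nonempty S := by
    rw [← Cardinal.mk_ne_zero_iff]; exact (bot_le.trans_lt hcard).ne'
  obtain ⟨s0⟩ := hne
  refine ⟨fun t => if h : t ∈ V then (j ⟨t, h⟩ : S) else s0, ?_, ?_⟩
  · intro t ht; simp only [ht, dif_pos]; exact (j ⟨t, ht⟩).2
  · intro t ht t' ht' h
    simp only [ht, ht', dif_pos] at h
    simpa using j.injective (Subtype.ext h)

open Classical in
lemma extend_aux {X S T : Type} [PseudoEMetricSpace X]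
    (hcard : Cardinal.mk (X × ℕ) < Cardinal.mk S) (δ D : ℝ) (hδ : 0 < δ) (hD : 0 < D)
    (φ : T → X → ℝ) (φ0 : ∀ t x, 0 ≤ φ t x) (φ1 : ∀ x, HasSum (fun t => φ t x) 1)
    (φc : ∀ x y : X, edist x y ≤ ENNReal.ofReal (2 / δ) → (∑' t, |φ t x - φ t y|) ≤ δ / 2)
    (φD : ∀ t x y, 0 < φ t x → 0 < φ t y → edist x y ≤ ENNReal.ofReal D)
    (K : ℝ) (hK : 0 < K) (A : Set X) (f : A → S → ℝ) (f0 : ∀ a s, 0 ≤ f a s)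
    (f1 : ∀ a, HasSum (fun s => f a s) 1)
    (fL : ∀ a b : A, edist a b ≠ ⊤ →
          (∑' s, |f a s - f b s|) ≤ δ / (2 * (D + 1)) * (edist a b).toReal + δ / (2 * (D + 1)))
    (fK : ∀ s, ∀ a b : A, 0 < f a s → 0 < f b s → edist a b ≤ ENNReal.ofReal K) :
    ∃ g : X → S → ℝ,
      ((∀ x s, 0 ≤ g x s) ∧ ∀ x, HasSum (fun s => g x s) 1) ∧
      (∀ x y : X, edist x y ≠ ⊤ →
        (∑' s, |g x s - g y s|) ≤ δ * (edist x y).toReal + δ) ∧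
      (∀ s x y, 0 < g x s → 0 < g y s → edist x y ≤ ENNReal.ofReal (K + 2 * D)) ∧
      (∀ a : A, g (a : X) = f a) := by
  obtain ⟨ι, ιU, ιi⟩ := exists_iota hcard (⋃ a, Function.support (f a))
    (card_supp f (fun a => (f1 a).summable) (Cardinal.mk_set_le A))
    (⋃ x, Function.support (fun t => φ t x))
    (card_supp (X := X) (fun x t => φ t x) (fun x => (φ1 x).summable) le_rfl)
  have hV : ∀ t x, 0 < φ t x → t ∈ ⋃ x, Function.support (fun t => φ t x) := fun t x h =>
    Set.mem_iUnion.2 ⟨x, h.ne'⟩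
  have hfι : ∀ t x a, 0 < φ t x → f a (ι t) = 0 := by
    intro t x a h
    by_contra hc
    exact ιU t (hV t x h) (Set.mem_iUnion.2 ⟨a, hc⟩)
  have hv : ∃ v : T → S → ℝ, ∀ t, (∃ a : A, 0 < φ t a ∧ v t = f a) ∨
      ((∀ a : A, ¬ 0 < φ t a) ∧ v t = Pi.single (ι t) 1) := by
    refine ⟨fun t => if h : ∃ a : A, 0 < φ t a then f h.choose else Pi.single (ι t) 1, ?_⟩
    intro t
    by_cases h : ∃ a : A, 0 < φ t a
    · left; exact ⟨h.choose, h.choose_spec, by simp only [h, dif_pos]⟩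
    · right; exact ⟨fun a ha => h ⟨a, ha⟩, by simp only [h, dif_neg, not_false_eq_true]⟩
  obtain ⟨v, hv⟩ := hv
  have v0 : ∀ t s, 0 ≤ v t s := by
    intro t s
    rcases hv t with ⟨a, -, h⟩ | ⟨-, h⟩
    · rw [h]; exact f0 a s
    · rw [h]
      by_cases hs : s = ι t
      · subst hs; simp
      · simp [Pi.single_apply, hs]
  have v1 : ∀ t, HasSum (v t) 1 := by
    intro t
    rcases hv t with ⟨a, -, h⟩ | ⟨-, h⟩
    · rw [h]; exact f1 a
    · rw [h]; exact hasSum_pi_single (ι t) 1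
  -- general mixing estimate
  have mix : ∀ c : T → ℝ, Summable c →
      Summable (fun p : T × S => c p.1 * v p.1 p.2) ∧ Summable (fun s => ∑' t, c t * v t s) ∧
      (∀ s, Summable (fun t => c t * v t s)) ∧ ∑' s, |∑' t, c t * v t s| ≤ ∑' t, |c t| := by
    intro c hc
    refine l1_aux (fun t s => c t * v t s) (fun t => |c t|) (fun t => (v1 t).summable.mul_left _)
      (fun t => ?_) hc.abs
    have : ∀ s, |c t * v t s| = |c t| * v t s := fun s => by
      rw [abs_mul, abs_of_nonneg (v0 t s)]
    simp only [this]
    rw [tsum_mul_left, (v1 t).tsum_eq, mul_one]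
  set h : X → S → ℝ := fun x s => ∑' t, φ t x * v t s with hh
  have h0 : ∀ x s, 0 ≤ h x s := fun x s => tsum_nonneg fun t => mul_nonneg (φ0 t x) (v0 t s)
  have h1 : ∀ x, HasSum (h x) 1 := by
    intro x
    obtain ⟨m1, m2, m3, -⟩ := mix _ (φ1 x).summable
    have : ∑' s, h x s = 1 := by
      rw [hh]
      simp only
      rw [Summable.tsum_comm (f := fun t s => φ t x * v t s) m1]
      simp only [tsum_mul_left, (v1 _).tsum_eq, mul_one]
      exact (φ1 x).tsum_eq
    rw [← this]; exact m2.hasSum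
  have hL : ∀ x y, ∑' s, |h x s - h y s| ≤ ∑' t, |φ t x - φ t y| := by
    intro x y
    obtain ⟨-, -, -, m4⟩ := mix _ ((φ1 x).summable.sub (φ1 y).summable)
    refine le_trans (le_of_eq ?_) m4
    congr 1; ext s
    congr 1
    rw [hh]
    simp only
    rw [← Summable.tsum_sub ((mix _ (φ1 x).summable).2.2.1 s) ((mix _ (φ1 y).summable).2.2.1 s)]
    congr 1; ext t; ring
  have hpos : ∀ x s, 0 < h x s → ∃ t, 0 < φ t x ∧ 0 < v t s := by
    intro x s hp
    by_contra hc
    push Not at hc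
    have : h x s = 0 := by
      rw [hh]
      simp only
      have : ∀ t, φ t x * v t s = 0 := by
        intro t
        by_cases ht : 0 < φ t x
        · rw [le_antisymm (hc t ht) (v0 t s), mul_zero]
        · rw [le_antisymm (not_lt.1 ht) (φ0 t x), zero_mul]
      simp [this]
    exact hp.ne' this
  have hα : δ / (2 * (D + 1)) * D + δ / (2 * (D + 1)) = δ / 2 := by field_simp
  have hα0 : 0 < δ / (2 * (D + 1)) := by positivity
  have hαδ : δ / (2 * (D + 1)) ≤ δ := by
    apply div_le_self hδ.le; linarith
  have hf : ∀ a : A, ∑' s, |f a s - h a s| ≤ δ / 2 := by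
    intro a
    have key := l1_aux (fun t s => φ t a * (f a s - v t s)) (fun t => φ t a * (δ / 2))
      (fun t => ((f1 a).summable.sub (v1 t).summable).mul_left _) (fun t => ?_)
      ((φ1 a).summable.mul_right _)
    · refine le_trans (le_of_eq ?_) (key.2.2.2.trans (le_of_eq ?_))
      · congr 1; ext s; congr 1
        have e1 : ∑' t, φ t a * f a s = f a s := by
          rw [tsum_mul_right, (φ1 a).tsum_eq, one_mul]
        simp only [mul_sub]
        rw [Summable.tsum_sub ((φ1 a).summable.mul_right _) ((mix _ (φ1 a).summable).2.2.1 s), e1]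
      · rw [tsum_mul_right, (φ1 a).tsum_eq, one_mul]
    · simp only [abs_mul, abs_of_nonneg (φ0 t a)]
      rw [tsum_mul_left]
      by_cases ht : 0 < φ t a
      · refine mul_le_mul_of_nonneg_left ?_ ht.le
        rcases hv t with ⟨b, hb, e⟩ | ⟨hc, -⟩
        · rw [e]
          have hd : edist a b ≤ ENNReal.ofReal D := φD t a b ht hb
          refine (fL a b (ne_top_of_le_ne_top ENNReal.ofReal_ne_top hd)).trans ?_
          rw [← hα]
          have : (edist a b).toReal ≤ D := ENNReal.toReal_le_of_le_ofReal hD.le hd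
          gcongr
        · exact absurd ht (hc a)
      · rw [le_antisymm (not_lt.1 ht) (φ0 t a), zero_mul, zero_mul]
  set g : X → S → ℝ := fun x => if hx : x ∈ A then f ⟨x, hx⟩ else h x with hg
  have gA : ∀ a : A, g a = f a := fun a => by simp [hg]
  have gN : ∀ x, x ∉ A → g x = h x := fun x hx => by simp [hg, hx]
  have g0 : ∀ x s, 0 ≤ g x s := by
    intro x s
    by_cases hx : x ∈ A
    · rw [gA ⟨x, hx⟩]; exact f0 _ s
    · rw [gN x hx]; exact h0 x s
  have g1 : ∀ x, HasSum (g x) 1 := by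
    intro x
    by_cases hx : x ∈ A
    · rw [gA ⟨x, hx⟩]; exact f1 _
    · rw [gN x hx]; exact h1 x
  refine ⟨g, ⟨g0, g1⟩, ?_, ?_, gA⟩
  · intro x y hxy
    by_cases hfar : 2 / δ ≤ (edist x y).toReal
    · refine (l1_two (g0 x) (g0 y) (g1 x) (g1 y)).trans ?_
      rw [div_le_iff₀ hδ] at hfar
      linarith
    push Not at hfar
    have hc : ∑' s, |h x s - h y s| ≤ δ / 2 := (hL x y).trans
      (φc x y ((ENNReal.le_ofReal_iff_toReal_le hxy (by positivity)).2 hfar.le))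
    have hd : 0 ≤ δ * (edist x y).toReal := by positivity
    by_cases hx : x ∈ A
    · have ex : g x = f ⟨x, hx⟩ := gA ⟨x, hx⟩
      have hfx : ∑' s, |f ⟨x, hx⟩ s - h x s| ≤ δ / 2 := hf ⟨x, hx⟩
      by_cases hy : y ∈ A
      · rw [ex, gA ⟨y, hy⟩]
        refine (fL ⟨x, hx⟩ ⟨y, hy⟩ hxy).trans ?_
        have e : edist (⟨x, hx⟩ : A) ⟨y, hy⟩ = edist x y := rfl
        rw [e]
        gcongr
      · rw [ex, gN y hy]
        have := l1_tri (f1 ⟨x, hx⟩).summable (h1 x).summable (h1 y).summable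
        linarith
    · by_cases hy : y ∈ A
      · rw [gN x hx, gA ⟨y, hy⟩]
        have hfy : ∑' s, |f ⟨y, hy⟩ s - h y s| ≤ δ / 2 := hf ⟨y, hy⟩
        have := l1_tri (h1 x).summable (h1 y).summable (f1 ⟨y, hy⟩).summable
        simp only [abs_sub_comm (h y _) (f _ _)] at this
        linarith
      · rw [gN x hx, gN y hy]; linarith
  · -- every point of the support of `g · s` is close to a vertex of `f`, or in a stratum
    have near : ∀ s x, 0 < g x s → (∃ a : A, 0 < f a s ∧ edist x a ≤ ENNReal.ofReal D) ∨
        ∃ t, 0 < φ t x ∧ ι t = s := by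
      intro s x hp
      by_cases hx : x ∈ A
      · left
        rw [gA ⟨x, hx⟩] at hp
        exact ⟨⟨x, hx⟩, hp, by simp⟩
      · rw [gN x hx] at hp
        obtain ⟨t, ht, hvt⟩ := hpos x s hp
        rcases hv t with ⟨a, ha, e⟩ | ⟨-, e⟩
        · left
          rw [e] at hvt
          exact ⟨a, hvt, φD t x a ht ha⟩
        · right
          refine ⟨t, ht, ?_⟩
          by_contra hne
          rw [e, Pi.single_apply, if_neg (Ne.symm hne)] at hvt
          exact lt_irrefl _ hvt
    intro s x y hx hy
    rcases near s x hx with ⟨a, ha, hxa⟩ | ⟨t, ht, et⟩ <;>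
    rcases near s y hy with ⟨b, hb, hyb⟩ | ⟨t', ht', et'⟩
    · have hab : edist (a : X) b ≤ ENNReal.ofReal K := fK s a b ha hb
      calc edist x y ≤ edist x a + edist (a : X) b + edist (b : X) y := edist_triangle4 _ _ _ _
        _ ≤ ENNReal.ofReal D + ENNReal.ofReal K + ENNReal.ofReal D := by
            rw [edist_comm (b : X) y]; gcongr
        _ = ENNReal.ofReal (K + 2 * D) := by
            rw [← ENNReal.ofReal_add hD.le hK.le, ← ENNReal.ofReal_add (by positivity) hD.le]
            congr 1; ring
    · exact absurd (et' ▸ hfι t' y a ht') ha.ne'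
    · exact absurd (et ▸ hfι t x b ht) hb.ne'
    · have : t = t' := ιi (hV t x ht) (hV t' y ht') (et.trans et'.symm)
      subst this
      exact (φD t x y ht ht').trans (ENNReal.ofReal_le_ofReal (by linarith))

/-- For an ∞-pseudo-metric space `X` and a set `S` of cardinality larger than
`card (X × ℕ)`, exactness of `X` is equivalent to the existence of functions
`α : (0,∞) → (0,∞)` and `M : (0,∞)² → (0,∞)` such that every `(α(δ),α(δ))`-Lipschitz
`K`-cobounded map `f : A → Δ(S)` defined on a subset `A ⊆ X` extends to a
`(δ,δ)`-Lipschitz `M(δ,K)`-cobounded map `g : X → Δ(S)`. -/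
theorem stmt5 {X S : Type} [PseudoEMetricSpace X]
    (hcard : Cardinal.mk (X × ℕ) < Cardinal.mk S) :
    (∀ R ε : ℝ, 0 < R → 0 < ε → ∃ (T : Type) (φ : T → X → ℝ),
      (∀ t x, 0 ≤ φ t x ∧ φ t x ≤ 1) ∧
      (∀ x, HasSum (fun t => φ t x) 1) ∧
      (∀ x y : X, edist x y ≤ ENNReal.ofReal R → (∑' t, |φ t x - φ t y|) ≤ ε) ∧
      (∃ D : ℝ, 0 < D ∧ ∀ t, EMetric.diam {x | 0 < φ t x} ≤ ENNReal.ofReal D)) ↔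
    (∃ (α : ℝ → ℝ) (M : ℝ → ℝ → ℝ),
      (∀ δ : ℝ, 0 < δ → 0 < α δ) ∧
      (∀ δ K : ℝ, 0 < δ → 0 < K → 0 < M δ K) ∧
      ∀ δ : ℝ, 0 < δ → ∀ K : ℝ, 0 < K → ∀ A : Set X, ∀ f : A → S → ℝ,
        ((∀ a s, 0 ≤ f a s) ∧ ∀ a, HasSum (fun s => f a s) 1) →
        (∀ a b : A, edist a b ≠ ⊤ →
          (∑' s, |f a s - f b s|) ≤ α δ * (edist a b).toReal + α δ) →
        (∀ s, EMetric.diam {a : A | 0 < f a s} ≤ ENNReal.ofReal K) →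
        ∃ g : X → S → ℝ,
          ((∀ x s, 0 ≤ g x s) ∧ ∀ x, HasSum (fun s => g x s) 1) ∧
          (∀ x y : X, edist x y ≠ ⊤ →
            (∑' s, |g x s - g y s|) ≤ δ * (edist x y).toReal + δ) ∧
          (∀ s, EMetric.diam {x : X | 0 < g x s} ≤ ENNReal.ofReal (M δ K)) ∧
          (∀ a : A, g (a : X) = f a)) := by
  constructor
  · intro hex
    have hex' : ∀ δ : ℝ, ∃ D : ℝ, 0 < D ∧ (0 < δ → ∃ (T : Type) (φ : T → X → ℝ),
        (∀ t x, 0 ≤ φ t x) ∧ (∀ x, HasSum (fun t => φ t x) 1) ∧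
        (∀ x y : X, edist x y ≤ ENNReal.ofReal (2 / δ) → (∑' t, |φ t x - φ t y|) ≤ δ / 2) ∧
        (∀ t x y, 0 < φ t x → 0 < φ t y → edist x y ≤ ENNReal.ofReal D)) := by
      intro δ
      by_cases hδ : 0 < δ
      · obtain ⟨T, φ, h1, h2, h3, D, hD, h4⟩ := hex (2 / δ) (δ / 2) (by positivity) (by positivity)
        exact ⟨D, hD, fun _ => ⟨T, φ, fun t x => (h1 t x).1, h2, h3, fun t x y hx hy =>
          (EMetric.edist_le_diam_of_mem (s := {x | 0 < φ t x}) hx hy).trans (h4 t)⟩⟩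
      · exact ⟨1, one_pos, fun h => absurd h hδ⟩
    choose D hD hφ using hex'
    refine ⟨fun δ => δ / (2 * (D δ + 1)), fun δ K => K + 2 * D δ, ?_, ?_, ?_⟩
    · intro δ hδ
      have := hD δ
      positivity
    · intro δ K _ hK
      have := hD δ
      positivity
    · intro δ hδ K hK A f hf fL fK
      obtain ⟨T, φ, φ0, φ1, φc, φD⟩ := hφ δ hδ
      obtain ⟨g, hg, gL, gK, gA⟩ := extend_aux hcard δ (D δ) hδ (hD δ) φ φ0 φ1 φc φD K hK A f
        hf.1 hf.2 fL (fun s a b ha hb =>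
          (EMetric.edist_le_diam_of_mem (s := {a : A | 0 < f a s}) ha hb).trans (fK s))
      exact ⟨g, hg, gL, fun s => EMetric.diam_le fun x hx y hy => gK s x y hx hy, gA⟩
  · rintro ⟨α, M, hα, hM, H⟩ R ε hR hε
    have hδ : 0 < ε / (R + 1) := by positivity
    obtain ⟨g, ⟨g0, g1⟩, gL, gK, -⟩ := H (ε / (R + 1)) hδ 1 one_pos ∅ (fun a => (a.2.elim))
      ⟨fun a => a.2.elim, fun a => a.2.elim⟩ (fun a => a.2.elim) (fun s => by
        apply EMetric.diam_le
        intro a; exact a.2.elim)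
    refine ⟨S, fun s x => g x s, fun s x => ⟨g0 x s, le_hasSum (g1 x) s fun t _ => g0 x t⟩,
      g1, ?_, M _ 1, hM _ _ hδ one_pos, gK⟩
    intro x y hxy
    refine (gL x y (ne_top_of_le_ne_top ENNReal.ofReal_ne_top hxy)).trans ?_
    have : (edist x y).toReal ≤ R := ENNReal.toReal_le_of_le_ofReal hR.le hxy
    calc ε / (R + 1) * (edist x y).toReal + ε / (R + 1) ≤ ε / (R + 1) * R + ε / (R + 1) := by gcongr
      _ = ε := by field_simp
end

section
/- Exactness is closed under wedges in the following two senses: (1) if X is an exact pseudo-metric space, S is any set, and for each s ∈ S, (A_s, x_s) is a pointed isometric copy of X (i.e., A_s is isometric to X and x_s ∈ A_s), then the wedge ⋁_{s∈S}(A_s, x_s) is exact; (2) if {X_s}_{s∈S} is a finite family of exact pseudo-metric spaces, then for any choice of basepoints x_s ∈ X_s the wedge ⋁_{s∈S}(X_s, x_s) is exact. -/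
open scoped ENNReal

/-- Exactness of a space with a given distance function `d`: for all `R, ε > 0` there is an
`(ε,R)`-continuous partition of unity whose strata are uniformly bounded. -/
def ExactD {Y : Type} (d : Y → Y → ℝ) : Prop :=
  ∀ R ε : ℝ, 0 < R → 0 < ε → ∃ (T : Type) (φ : T → Y → ℝ),
    (∀ t y, 0 ≤ φ t y ∧ φ t y ≤ 1) ∧
    (∀ y, HasSum (fun t => φ t y) 1) ∧
    (∀ x y : Y, d x y ≤ R → (∑' t, |φ t x - φ t y|) ≤ ε) ∧
    (∃ D : ℝ, 0 < D ∧ ∀ t : T, ∀ x y : Y, 0 < φ t x → 0 < φ t y → d x y ≤ D)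

open Classical in
/-- The wedge pseudo-distance on the disjoint union of pointed pseudo-metric spaces
`(A_s, p_s)`: within one component it is the original distance, across components it is
`d(a, p_s) + d(p_t, b)`. -/
noncomputable def wedgeDist {S : Type} {A : S → Type} [∀ s, PseudoMetricSpace (A s)]
    (p : ∀ s, A s) : (Σ s, A s) → (Σ s, A s) → ℝ
  | ⟨s, a⟩, ⟨t, b⟩ =>
    if h : s = t then dist a (h.symm ▸ b) else dist a (p s) + dist (p t) b

open Classical in
/-- Extension by zero from one component, with an extra value at `none`. -/
noncomputable def wext {S : Type} {T : S → Type} (s : S) (c : ℝ) (g : T s → ℝ) :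
    Option (Σ s, T s) → ℝ
  | none => c
  | some i => if h : i.1 = s then g (h ▸ i.2) else 0

lemma wext_none {S : Type} {T : S → Type} (s : S) (c : ℝ) (g : T s → ℝ) :
    wext s c g none = c := rfl

lemma wext_same {S : Type} {T : S → Type} (s : S) (c : ℝ) (g : T s → ℝ) (t : T s) :
    wext s c g (some ⟨s, t⟩) = g t := by
  simp [wext]

lemma wext_ne {S : Type} {T : S → Type} (s : S) (c : ℝ) (g : T s → ℝ) {s' : S} (h : s' ≠ s)
    (t : T s') : wext s c g (some ⟨s', t⟩) = 0 := by
  simp [wext, h]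

lemma hasSum_wext {S : Type} {T : S → Type} (s : S) (c : ℝ) (g : T s → ℝ) {G : ℝ}
    (hg : HasSum g G) : HasSum (wext s c g) (c + G) := by
  have h1 : HasSum (fun i : Σ s, T s => wext s c g (some i)) G := by
    rw [← Function.Injective.hasSum_iff (sigma_mk_injective (i := s))]
    · simpa [Function.comp_def, wext_same] using hg
    · rintro ⟨s', t⟩ hx
      by_cases h : s' = s
      · subst h
        exact absurd ⟨t, rfl⟩ hx
      · exact wext_ne s c g h t
  have h2 : HasSum (fun i : Option (Σ s, T s) => if i = none then c else 0) c :=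
    hasSum_ite_eq none c
  have h3 : HasSum (fun i : Option (Σ s, T s) => i.elim 0 (fun j => wext s c g (some j))) G := by
    rw [← Function.Injective.hasSum_iff (Option.some_injective _)]
    · simpa [Function.comp_def] using h1
    · intro x hx
      cases x with
      | none => rfl
      | some j => exact absurd ⟨j, rfl⟩ hx
  convert h2.add h3 using 1
  funext i
  cases i <;> simp [wext_none]

lemma wedgeDist_same {S : Type} {A : S → Type} [∀ s, PseudoMetricSpace (A s)]
    (p : ∀ s, A s) (s : S) (a b : A s) : wedgeDist p ⟨s, a⟩ ⟨s, b⟩ = dist a b := by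
  simp [wedgeDist]

lemma wedgeDist_ne {S : Type} {A : S → Type} [∀ s, PseudoMetricSpace (A s)]
    (p : ∀ s, A s) {s t : S} (h : s ≠ t) (a : A s) (b : A t) :
    wedgeDist p ⟨s, a⟩ ⟨t, b⟩ = dist a (p s) + dist (p t) b := by
  simp [wedgeDist, h]

lemma wedgeDist_le {S : Type} {A : S → Type} [∀ s, PseudoMetricSpace (A s)]
    (p : ∀ s, A s) (s t : S) (a : A s) (b : A t) :
    wedgeDist p ⟨s, a⟩ ⟨t, b⟩ ≤ dist a (p s) + dist b (p t) := by
  by_cases h : s = t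
  · subst h
    rw [wedgeDist_same]
    exact dist_triangle_right a b (p s)
  · rw [wedgeDist_ne p h, dist_comm (p t) b]

/-- The wedge of an equi-exact family is exact. -/
lemma exact_wedge {S : Type} {A : S → Type} [∀ s, PseudoMetricSpace (A s)] (p : ∀ s, A s)
    (H : ∀ R ε : ℝ, 0 < R → 0 < ε → ∃ (T : S → Type) (φ : ∀ s, T s → A s → ℝ) (D : ℝ), 0 < D ∧
      ∀ s, (∀ t y, 0 ≤ φ s t y ∧ φ s t y ≤ 1) ∧
        (∀ y, HasSum (fun t => φ s t y) 1) ∧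
        (∀ x y, dist x y ≤ R → (∑' t, |φ s t x - φ s t y|) ≤ ε) ∧
        (∀ t x y, 0 < φ s t x → 0 < φ s t y → dist x y ≤ D)) :
    ExactD (wedgeDist p) := by
  intro R ε hR hε
  obtain ⟨T, φ, D, hD, hφ⟩ := H R (ε / 2) hR (by positivity)
  obtain ⟨L, hL⟩ : ∃ L : ℝ, L = 4 * R / ε := ⟨_, rfl⟩
  have hL0 : 0 < L := by rw [hL]; positivity
  have hRL : R / L = ε / 4 := by rw [hL]; field_simp
  let f : ∀ s, A s → ℝ := fun s a => min 1 (dist a (p s) / L)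
  have f0 : ∀ s a, 0 ≤ f s a := fun s a => le_min zero_le_one (by positivity)
  have f1 : ∀ s a, f s a ≤ 1 := fun s a => min_le_left _ _
  have fle : ∀ s a, f s a ≤ dist a (p s) / L := fun s a => min_le_right _ _
  have flip' : ∀ s (a b : A s), f s a - f s b ≤ dist a b / L := by
    intro s a b
    have h1 : dist a (p s) / L ≤ dist a b / L + dist b (p s) / L := by
      rw [← add_div]
      exact div_le_div_of_nonneg_right (dist_triangle _ _ _) hL0.le
    have h2 : 0 ≤ dist a b / L := by positivity
    have h3 := f1 s a
    have h4 := fle s a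
    rcases min_choice 1 (dist b (p s) / L) with h | h
    · have : f s b = 1 := h
      linarith
    · have : f s b = _ := h
      linarith
  have flip : ∀ s (a b : A s), |f s a - f s b| ≤ dist a b / L := by
    intro s a b
    rw [abs_le]
    have := flip' s a b
    have := flip' s b a
    rw [dist_comm b a] at this
    constructor <;> linarith
  let Ψ : Option (Σ s, T s) → (Σ s, A s) → ℝ := fun i x =>
    wext x.1 (1 - f x.1 x.2) (fun t => f x.1 x.2 * φ x.1 t x.2) i
  have hsum : ∀ s a, HasSum (fun t => f s a * φ s t a) (f s a) := by
    intro s a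
    simpa using ((hφ s).2.1 a).mul_left (f s a)
  have Ψsum : ∀ y, HasSum (fun i => Ψ i y) 1 := by
    rintro ⟨s, a⟩
    have := hasSum_wext s (1 - f s a) _ (hsum s a)
    simpa using this
  have Ψ0 : ∀ i y, 0 ≤ Ψ i y := by
    rintro (_ | ⟨s', t⟩) ⟨s, a⟩
    · have := f1 s a
      change 0 ≤ 1 - f s a
      linarith
    · by_cases h : s' = s
      · subst h
        simp only [Ψ, wext_same]
        exact mul_nonneg (f0 _ _) ((hφ _).1 _ _).1
      · simp only [Ψ, wext_ne _ _ _ h, le_refl]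
  have Ψbd : ∀ x y g G, HasSum g G → (∀ i, |Ψ i x - Ψ i y| ≤ g i) →
      ∑' i, |Ψ i x - Ψ i y| ≤ G := by
    intro x y g G hg h
    rw [← hg.tsum_eq]
    exact Summable.tsum_le_tsum h (((Ψsum x).summable.sub (Ψsum y).summable).abs) hg.summable
  refine ⟨Option (Σ s, T s), Ψ, fun i y => ⟨Ψ0 i y, le_hasSum (Ψsum y) i fun j _ => Ψ0 j y⟩,
    Ψsum, ?_, max D (2 * L), by positivity, ?_⟩
  · rintro ⟨s, a⟩ ⟨t, b⟩ hd
    by_cases h : s = t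
    · subst h
      rw [wedgeDist_same] at hd
      have hf : |f s a - f s b| ≤ ε / 4 :=
        (flip s a b).trans (hRL ▸ div_le_div_of_nonneg_right hd hL0.le)
      have hs := (((hφ s).2.1 a).summable.sub ((hφ s).2.1 b).summable).abs.hasSum
      have hc := (hφ s).2.2.1 a b hd
      have h1 := (((hφ s).2.1 a).mul_left |f s a - f s b|).add hs
      refine (Ψbd _ _ _ _ (hasSum_wext s |f s a - f s b| _ h1) ?_).trans (by linarith)
      rintro (_ | ⟨s', t⟩)
      · change |(1 - f s a) - (1 - f s b)| ≤ |f s a - f s b|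
        rw [abs_sub_comm (f s a)]
        apply le_of_eq
        congr 1
        ring
      · by_cases h : s' = s
        · subst h
          simp only [Ψ, wext_same]
          have e : f s' a * φ s' t a - f s' b * φ s' t b =
            (f s' a - f s' b) * φ s' t a + f s' b * (φ s' t a - φ s' t b) := by ring
          rw [e]
          refine (abs_add_le _ _).trans (add_le_add ?_ ?_)
          · rw [abs_mul, abs_of_nonneg ((hφ s').1 t a).1]
          · rw [abs_mul, abs_of_nonneg (f0 s' b)]
            exact mul_le_of_le_one_left (abs_nonneg _) (f1 _ _)
        · simp [Ψ, wext_ne _ _ _ h]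
    · rw [wedgeDist_ne p h, dist_comm (p t) b] at hd
      have hf : f s a + f t b ≤ ε / 4 := by
        rw [← hRL]
        refine (add_le_add (fle s a) (fle t b)).trans ?_
        rw [← add_div]
        exact div_le_div_of_nonneg_right hd hL0.le
      refine (Ψbd _ _ _ _ ((hasSum_wext s (f s a) _ (hsum s a)).add
        (hasSum_wext t (f t b) _ (hsum t b))) ?_).trans (by linarith)
      have ha := f0 s a
      have hb := f0 t b
      rintro (_ | ⟨s', t'⟩)
      · change |(1 - f s a) - (1 - f t b)| ≤ f s a + f t b
        rw [abs_le]
        constructor <;> linarith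
      · have h1 := Ψ0 (some ⟨s', t'⟩) ⟨s, a⟩
        have h2 := Ψ0 (some ⟨s', t'⟩) ⟨t, b⟩
        change |Ψ (some ⟨s', t'⟩) ⟨s, a⟩ - Ψ (some ⟨s', t'⟩) ⟨t, b⟩| ≤
          Ψ (some ⟨s', t'⟩) ⟨s, a⟩ + Ψ (some ⟨s', t'⟩) ⟨t, b⟩
        rw [abs_le]
        constructor <;> linarith
  · rintro (_ | ⟨s', t'⟩) ⟨s, a⟩ ⟨t, b⟩ hx hy
    · have key : ∀ s (a : A s), 0 < Ψ none ⟨s, a⟩ → dist a (p s) ≤ L := by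
        intro s a h
        change 0 < 1 - f s a at h
        by_contra hc
        push Not at hc
        have : f s a = 1 := min_eq_left ((one_le_div hL0).2 hc.le)
        linarith
      have := key s a hx
      have := key t b hy
      refine (wedgeDist_le p s t a b).trans (le_trans ?_ (le_max_right _ _))
      linarith
    · have key : ∀ s (a : A s), 0 < Ψ (some ⟨s', t'⟩) ⟨s, a⟩ → s' = s := by
        intro s a h
        by_contra hc
        simp [Ψ, wext_ne _ _ _ hc] at h
      obtain rfl := key s a hx
      obtain rfl := key t b hy
      rw [wedgeDist_same]
      simp only [Ψ, wext_same] at hx hy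
      exact ((hφ s').2.2.2 t' a b (pos_of_mul_pos_right hx (f0 _ _))
        (pos_of_mul_pos_right hy (f0 _ _))).trans (le_max_left _ _)

/-- Exactness is closed under wedges: (1) the wedge of arbitrarily many
pointed isometric copies of an exact pseudo-metric space is exact; (2) the wedge of a
finite family of exact pseudo-metric spaces is exact for any choice of basepoints. -/
theorem stmt6 :
    (∀ (X : Type) [PseudoMetricSpace X], ExactD (fun a b : X => dist a b) →
      ∀ (S : Type) (A : S → Type) [∀ s, PseudoMetricSpace (A s)],
        ∀ e : ∀ s, A s ≃ X, (∀ s (a b : A s), dist (e s a) (e s b) = dist a b) →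
        ∀ p : ∀ s, A s, ExactD (wedgeDist p)) ∧
    (∀ (S : Type) [Finite S] (X : S → Type) [∀ s, PseudoMetricSpace (X s)],
      (∀ s, ExactD (fun a b : X s => dist a b)) →
      ∀ p : ∀ s, X s, ExactD (wedgeDist p)) := by
  constructor
  · intro X _ hX S A _ e he p
    refine exact_wedge p fun R ε hR hε => ?_
    obtain ⟨T, φ, h1, h2, h3, D, hD, h4⟩ := hX R ε hR hε
    refine ⟨fun _ => T, fun s t a => φ t (e s a), D, hD, fun s => ⟨fun t y => h1 _ _,
      fun y => h2 _, fun x y h => h3 _ _ ?_, fun t x y hx hy => ?_⟩⟩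
    · simpa [he] using h
    · simpa [he] using h4 t _ _ hx hy
  · intro S _ X _ hX p
    refine exact_wedge p fun R ε hR hε => ?_
    choose T φ h1 h2 h3 D hD h4 using fun s => hX s R ε hR hε
    obtain ⟨M, hM⟩ := Finite.exists_le D
    exact ⟨T, φ, max M 1, by positivity, fun s => ⟨h1 s, h2 s, h3 s,
      fun t x y hx hy => (h4 s t x y hx hy).trans ((hM s).trans (le_max_left _ _))⟩⟩
end

section
/- Let X be a pseudo-metric space. The following conditions are equivalent: (1) there is a set A such that X coarsely embeds in ℓ¹(A); (2) there is a constant c > 0 such that for all R, ε > 0 there is S > 0 with the property that for any T > S there exist a set C and a function f from X to the unit sphere of ℓ¹(C) such that ‖f(x) − f(y)‖₁ ≤ ε whenever d(x,y) ≤ R, and ‖f(x) − f(y)‖₁ ≥ c whenever S ≤ d(x,y) ≤ T. -/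
/-- A coarse embedding with respect to given distance functions: there are non-decreasing
`ρ₋, ρ₊` with `ρ₋ → ∞` such that `ρ₋(d(x,y)) ≤ d(f x, f y) ≤ ρ₊(d(x,y))`. -/
def CoarseEmbedD {Y Z : Type} (dY : Y → Y → ℝ) (dZ : Z → Z → ℝ) (f : Y → Z) : Prop :=
  ∃ ρm ρp : ℝ → ℝ, Monotone ρm ∧ Monotone ρp ∧
    Filter.Tendsto ρm Filter.atTop Filter.atTop ∧
    ∀ x y : Y, ρm (dY x y) ≤ dZ (f x) (f y) ∧ dZ (f x) (f y) ≤ ρp (dY x y)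

lemma aux_congr {ι : Type} {f g : ι → ℝ} {a b : ℝ} (h : HasSum f a) (hfg : ∀ i, g i = f i)
    (hab : b = a) : HasSum g b := by
  have : g = f := funext hfg
  rw [this, hab]
  exact h

open MeasureTheory in
lemma aux_line : ∃ (B : Type) (g : ℝ → B → ℝ), (∀ i, g 0 i = 0) ∧
    ∀ r s, HasSum (fun i => (g r i - g s i) ^ 2) |r - s| := by
  let φ : ℝ → ℝ → ℝ := fun r =>
    (Set.Ioc 0 r).indicator (fun _ => 1) - (Set.Ioc r 0).indicator (fun _ => 1)
  have hm : ∀ a b : ℝ, MemLp ((Set.Ioc a b).indicator (fun _ => (1 : ℝ))) 2 volume := fun a b =>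
    memLp_indicator_const 2 measurableSet_Ioc 1 (Or.inr (by simp))
  have hφ : ∀ r, MemLp (φ r) 2 volume := fun r => (hm 0 r).sub (hm r 0)
  let v : ℝ → Lp ℝ 2 (volume : Measure ℝ) := fun r => (hφ r).toLp (φ r)
  have hd : ∀ r s, r ≤ s → φ s - φ r = (Set.Ioc r s).indicator (fun _ => 1) := by
    intro r s hrs
    funext z
    simp only [φ, Pi.sub_apply, Set.indicator_apply, Set.mem_Ioc]
    grind
  have hn1 : ∀ r s, r ≤ s → ‖v s - v r‖ ^ 2 = s - r := by
    intro r s hrs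
    have h1 : v s - v r = (hm r s).toLp _ := by
      rw [← MemLp.toLp_sub]
      exact MemLp.toLp_congr _ _ (by rw [hd r s hrs])
    rw [h1, Lp.norm_toLp, eLpNorm_indicator_const measurableSet_Ioc (by simp) (by simp)]
    simp only [enorm_one, one_mul, Real.volume_Ioc]
    rw [← ENNReal.toReal_rpow, ENNReal.toReal_ofReal (by linarith)]
    rw [← Real.rpow_natCast, ← Real.rpow_mul (by linarith)]
    simp
  have hn : ∀ r s, ‖v r - v s‖ ^ 2 = |r - s| := by
    intro r s
    rcases le_total r s with h | h
    · rw [norm_sub_rev, hn1 r s h, abs_sub_comm, abs_of_nonneg (by linarith)]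
    · rw [hn1 s r h, abs_of_nonneg (by linarith)]
  have hv0 : v 0 = 0 := by
    have : φ 0 = 0 := by
      funext z
      simp [φ]
    simp only [v]
    rw [← MemLp.toLp_zero (by simp)]
    exact MemLp.toLp_congr _ _ (by rw [this])
  obtain ⟨w, b, hb⟩ := exists_hilbertBasis ℝ (Lp ℝ 2 (volume : Measure ℝ))
  refine ⟨w, fun r i => inner ℝ (b i) (v r), fun i => by simp [hv0], fun r s => ?_⟩
  have h := b.hasSum_inner_mul_inner (v r - v s) (v r - v s)
  rw [real_inner_self_eq_norm_sq, hn] at h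
  refine aux_congr h (fun i => ?_) rfl
  rw [real_inner_comm (b i) (v r - v s), ← inner_sub_right, sq]

lemma aux_pow {B : Type} (w : B → ℝ) (hw : Summable fun b => |w b|) (n : ℕ) :
    Summable (fun p : Fin n → B => |∏ i, w (p i)|) ∧
      ∑' p : Fin n → B, ∏ i, w (p i) = (∑' b, w b) ^ n := by
  induction n with
  | zero =>
    constructor
    · exact Summable.of_finite
    · simp
  | succ n ih =>
    obtain ⟨h1, h2⟩ := ih
    let e : B × (Fin n → B) ≃ (Fin (n + 1) → B) := Fin.consEquiv (fun _ => B)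
    have he : ∀ q : B × (Fin n → B), ∏ i, w (e q i) = w q.1 * ∏ i, w (q.2 i) := by
      intro q
      simp [e, Fin.prod_univ_succ, Fin.consEquiv]
    constructor
    · rw [← e.summable_iff]
      have := Summable.mul_norm (f := w) (g := fun p : Fin n → B => ∏ i, w (p i)) hw h1
      refine this.congr fun q => ?_
      simp only [Function.comp, he, Real.norm_eq_abs]
    · rw [← e.tsum_eq]
      simp only [he]
      rw [← tsum_mul_tsum_of_summable_norm (f := w)
        (g := fun p : Fin n → B => ∏ i, w (p i)) hw h1, h2, pow_succ, mul_comm]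

lemma aux_exp {B : Type} (w : B → ℝ) (hw : Summable fun b => |w b|) (t : ℝ) (ht : 0 ≤ t) :
    HasSum (fun p : Σ n : ℕ, (Fin n → B) => t ^ p.1 / (p.1.factorial : ℝ) * ∏ i, w (p.2 i))
      (Real.exp (t * ∑' b, w b)) := by
  have key : ∀ z : ℝ, HasSum (fun n : ℕ => t ^ n / (n.factorial : ℝ) * z ^ n)
      (Real.exp (t * z)) := by
    intro z
    have := NormedSpace.expSeries_div_hasSum_exp (t * z)
    rw [← Real.exp_eq_exp_ℝ] at this
    refine aux_congr this (fun n => ?_) rfl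
    rw [mul_pow]
    ring
  have hs : Summable (fun p : Σ n : ℕ, (Fin n → B) =>
      t ^ p.1 / (p.1.factorial : ℝ) * ∏ i, w (p.2 i)) := by
    apply Summable.of_norm
    rw [summable_sigma_of_nonneg (fun _ => norm_nonneg _)]
    have h0 : ∀ (n : ℕ) (p : Fin n → B), ‖t ^ n / (n.factorial : ℝ) * ∏ i, w (p i)‖ =
        t ^ n / (n.factorial : ℝ) * |∏ i, w (p i)| := by
      intro n p
      rw [norm_mul, Real.norm_of_nonneg (by positivity), Real.norm_eq_abs]
    constructor
    · intro n
      simp only [h0]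
      exact (aux_pow w hw n).1.mul_left _
    · simp only [h0, tsum_mul_left]
      refine (key (∑' b, |w b|)).summable.congr fun n => ?_
      rw [← (aux_pow (fun b => |w b|) (by simpa using hw) n).2]
      simp only [Finset.abs_prod]
  refine HasSum.sigma_of_hasSum (key (∑' b, w b)) (fun n => ?_) hs
  have h := aux_pow w hw n
  rw [← h.2]
  exact (summable_abs_iff.1 h.1).hasSum.mul_left _

lemma aux_gauss {X B : Type} (u : X → B → ℝ) (hu : ∀ x, Summable fun b => (u x b) ^ 2)
    (t : ℝ) (ht : 0 ≤ t) : ∃ (C : Type) (ψ : X → C → ℝ), ∀ x y,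
      HasSum (fun c => ψ x c * ψ y c) (Real.exp (- t * ∑' b, (u x b - u y b) ^ 2)) := by
  refine ⟨Σ n : ℕ, (Fin n → B), fun x p => Real.exp (-t * ∑' b, (u x b) ^ 2) *
    (Real.sqrt ((2 * t) ^ p.1 / (p.1.factorial : ℝ)) * ∏ i, u x (p.2 i)), fun x y => ?_⟩
  have hw : Summable fun b => |u x b * u y b| := by
    refine Summable.of_nonneg_of_le (fun _ => abs_nonneg _) (fun b => ?_) ((hu x).add (hu y))
    rw [abs_mul]
    nlinarith [sq_nonneg (|u x b| - |u y b|), sq_abs (u x b), sq_abs (u y b),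
      sq_nonneg (u x b), sq_nonneg (u y b)]
  have h := (aux_exp (fun b => u x b * u y b) hw (2 * t) (by linarith)).mul_left
    (Real.exp (-t * ∑' b, (u x b) ^ 2) * Real.exp (-t * ∑' b, (u y b) ^ 2))
  have hD : ∑' b, (u x b - u y b) ^ 2 =
      ∑' b, (u x b) ^ 2 + ∑' b, (u y b) ^ 2 - 2 * ∑' b, u x b * u y b := by
    have h3 := (((hu x).hasSum.add (hu y).hasSum).sub
      ((summable_abs_iff.1 hw).hasSum.mul_left 2)).tsum_eq
    rw [← h3]
    refine tsum_congr fun b => ?_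
    ring
  refine aux_congr h (fun p => ?_) ?_
  · have hsq := Real.mul_self_sqrt (show 0 ≤ (2 * t) ^ p.1 / (p.1.factorial : ℝ) by positivity)
    simp only
    rw [Finset.prod_mul_distrib]
    linear_combination (Real.exp (-t * ∑' b, (u x b) ^ 2) * Real.exp (-t * ∑' b, (u y b) ^ 2) *
      ((∏ i, u x (p.2 i)) * ∏ i, u y (p.2 i))) * hsq
  · rw [← Real.exp_add, ← Real.exp_add, hD]
    congr 1
    ring

lemma aux_mazur_le (a b : ℝ) : |a * |a| - b * (|b|)| ≤ |a - b| * (|a| + |b|) := by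
  have : a * |a| - b * |b| = (a - b) * |a| + b * (|a| - |b|) := by ring
  rw [this]
  refine (abs_add_le _ _).trans ?_
  rw [abs_mul, abs_mul, abs_abs]
  nlinarith [abs_abs_sub_abs_le a b, abs_nonneg b, mul_le_mul_of_nonneg_left (abs_abs_sub_abs_le a b) (abs_nonneg b)]

lemma aux_mazur_ge (a b : ℝ) : (a - b) ^ 2 / 2 ≤ |a * |a| - b * (|b|)| := by
  rcases abs_cases a with ⟨h1, h1'⟩ | ⟨h1, h1'⟩ <;> rcases abs_cases b with ⟨h2, h2'⟩ | ⟨h2, h2'⟩ <;>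
    rw [h1, h2] <;> rcases le_total a b with h | h
  all_goals first
    | (refine le_trans ?_ (le_abs_self _); nlinarith [sq_nonneg (a+b), sq_nonneg (a-b), mul_nonneg (sub_nonneg.2 h) (sub_nonneg.2 h)])
    | (refine le_trans ?_ (neg_le_abs _); nlinarith [sq_nonneg (a+b), sq_nonneg (a-b), mul_nonneg (sub_nonneg.2 h) (sub_nonneg.2 h)])

lemma aux_forward {X : Type} [PseudoMetricSpace X] (A : Type) (f : X → A → ℝ)
    (hf : ∀ x, Summable fun a => |f x a|) (t : ℝ) (ht : 0 ≤ t) :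
    ∃ (C : Type) (F : X → C → ℝ), (∀ x, Summable fun c => |F x c|) ∧ (∀ x, ∑' c, |F x c| = 1) ∧
      ∀ x y, (∑' c, |F x c - F y c|) ^ 2 ≤ 8 * t * (∑' a, |f x a - f y a|) ∧
        1 - Real.exp (-t * ∑' a, |f x a - f y a|) ≤ ∑' c, |F x c - F y c| := by
  obtain ⟨B, g, g0, hg⟩ := aux_line
  have hfd : ∀ x y, Summable fun a => |f x a - f y a| := fun x y =>
    Summable.of_nonneg_of_le (fun _ => abs_nonneg _) (fun a => abs_sub _ _) ((hf x).add (hf y))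
  let u : X → A × B → ℝ := fun x p => g (f x p.1) p.2
  have hu2 : ∀ x, Summable fun p => (u x p) ^ 2 := by
    intro x
    rw [summable_prod_of_nonneg (fun _ => sq_nonneg _)]
    have h := fun a => hg (f x a) 0
    simp only [g0, sub_zero] at h
    refine ⟨fun a => (h a).summable, ?_⟩
    exact (hf x).congr fun a => (h a).tsum_eq.symm
  have hud : ∀ x y, ∑' p, (u x p - u y p) ^ 2 = ∑' a, |f x a - f y a| := by
    intro x y
    have hs : Summable fun p => (u x p - u y p) ^ 2 := by
      rw [summable_prod_of_nonneg (fun _ => sq_nonneg _)]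
      refine ⟨fun a => (hg (f x a) (f y a)).summable, ?_⟩
      exact (hfd x y).congr fun a => (hg (f x a) (f y a)).tsum_eq.symm
    rw [hs.tsum_prod]
    exact tsum_congr fun a => (hg (f x a) (f y a)).tsum_eq
  obtain ⟨C, ψ, hψ⟩ := aux_gauss u hu2 t ht
  simp only [hud] at hψ
  have hn : ∀ x, HasSum (fun c => (ψ x c) ^ 2) 1 := by
    intro x
    have := hψ x x
    simpa [← sq] using this
  have habs : ∀ x c, |ψ x c * (|ψ x c|)| = (ψ x c) ^ 2 := by
    intro x c
    rw [abs_mul, abs_abs, ← sq, sq_abs]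
  have hF : ∀ x, Summable fun c => |ψ x c * (|ψ x c|)| := fun x => by
    simpa only [habs] using (hn x).summable
  refine ⟨C, fun x c => ψ x c * |ψ x c|, hF, fun x => by simpa only [habs] using (hn x).tsum_eq,
    fun x y => ?_⟩
  have hd : HasSum (fun c => (ψ x c - ψ y c) ^ 2)
      (1 + 1 - 2 * Real.exp (-t * ∑' a, |f x a - f y a|)) := by
    have := ((hn x).add (hn y)).sub ((hψ x y).mul_left 2)
    refine aux_congr this (fun c => ?_) rfl
    ring
  have hFd : Summable fun c => |ψ x c * (|ψ x c|) - ψ y c * (|ψ y c|)| :=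
    Summable.of_nonneg_of_le (fun _ => abs_nonneg _) (fun a => abs_sub _ _) ((hF x).add (hF y))
  constructor
  · have h4 := ((hn x).add (hn y)).mul_left 2
    have hle : ∀ c, (|ψ x c| + |ψ y c|) ^ 2 ≤ 2 * (ψ x c ^ 2 + ψ y c ^ 2) := by
      intro c
      nlinarith [sq_nonneg (|ψ x c| - |ψ y c|), sq_abs (ψ x c), sq_abs (ψ y c)]
    have hb : ∑' c, |ψ x c * (|ψ x c|) - ψ y c * (|ψ y c|)| ≤
        Real.sqrt ((1 + 1 - 2 * Real.exp (-t * ∑' a, |f x a - f y a|)) * (2 * (1 + 1))) := by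
      refine hasSum_le_of_sum_le hFd.hasSum fun s => ?_
      refine (Finset.sum_le_sum fun c _ => aux_mazur_le (ψ x c) (ψ y c)).trans ?_
      apply Real.le_sqrt_of_sq_le
      refine (Finset.sum_mul_sq_le_sq_mul_sq s _ _).trans ?_
      have e1 : ∑ c ∈ s, |ψ x c - ψ y c| ^ 2 ≤
          1 + 1 - 2 * Real.exp (-t * ∑' a, |f x a - f y a|) := by
        simp only [sq_abs]
        exact sum_le_hasSum s (fun _ _ => sq_nonneg _) hd
      have e2 : ∑ c ∈ s, (|ψ x c| + |ψ y c|) ^ 2 ≤ 2 * (1 + 1) :=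
        (Finset.sum_le_sum fun c _ => hle c).trans (sum_le_hasSum s (fun _ _ => by positivity) h4)
      exact mul_le_mul e1 e2 (Finset.sum_nonneg fun _ _ => sq_nonneg _)
        ((Finset.sum_nonneg fun _ _ => sq_nonneg _).trans e1)
    have hnn : 0 ≤ 1 + 1 - 2 * Real.exp (-t * ∑' a, |f x a - f y a|) :=
      hd.nonneg fun _ => sq_nonneg _
    have hexp := Real.add_one_le_exp (-t * ∑' a, |f x a - f y a|)
    calc (∑' c, |ψ x c * (|ψ x c|) - ψ y c * (|ψ y c|)|) ^ 2
        ≤ Real.sqrt ((1 + 1 - 2 * Real.exp (-t * ∑' a, |f x a - f y a|)) * (2 * (1 + 1))) ^ 2 :=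
          pow_le_pow_left₀ (tsum_nonneg fun _ => abs_nonneg _) hb 2
      _ = (1 + 1 - 2 * Real.exp (-t * ∑' a, |f x a - f y a|)) * (2 * (1 + 1)) :=
          Real.sq_sqrt (by positivity)
      _ ≤ _ := by linarith
  · have := (hd.div_const 2)
    have h2 := hasSum_le (fun c => aux_mazur_ge (ψ x c) (ψ y c)) this hFd.hasSum
    linarith

lemma aux_lower {X : Type} [PseudoMetricSpace X] (δ : X → X → ℝ) (h0 : ∀ x y, 0 ≤ δ x y)
    (h : ∀ M : ℝ, ∃ D : ℝ, ∀ x y, D ≤ dist x y → M ≤ δ x y) :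
    ∃ ρ : ℝ → ℝ, Monotone ρ ∧ Filter.Tendsto ρ Filter.atTop Filter.atTop ∧
      ∀ x y, ρ (dist x y) ≤ δ x y := by
  let E : ℝ → Set ℝ := fun t => insert t {r | ∃ x y, t ≤ dist x y ∧ r = δ x y}
  have hbdd : ∀ t, BddBelow (E t) := by
    intro t
    refine ⟨min t 0, ?_⟩
    rintro r (rfl | ⟨x, y, -, rfl⟩)
    · exact min_le_left _ _
    · exact (min_le_right _ _).trans (h0 x y)
  have hne : ∀ t, (E t).Nonempty := fun t => ⟨t, Set.mem_insert _ _⟩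
  refine ⟨fun t => sInf (E t), ?_, ?_, ?_⟩
  · intro s t hst
    refine le_csInf (hne t) ?_
    rintro r (rfl | ⟨x, y, hxy, rfl⟩)
    · exact (csInf_le (hbdd s) (Set.mem_insert _ _)).trans hst
    · exact csInf_le (hbdd s) (Or.inr ⟨x, y, hst.trans hxy, rfl⟩)
  · rw [Filter.tendsto_atTop]
    intro M
    obtain ⟨D, hD⟩ := h M
    filter_upwards [Filter.eventually_ge_atTop (max D M)] with t ht
    refine le_csInf (hne t) ?_
    rintro r (rfl | ⟨x, y, hxy, rfl⟩)
    · exact (le_max_right _ _).trans ht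
    · exact hD x y (((le_max_left _ _).trans ht).trans hxy)
  · intro x y
    exact csInf_le (hbdd _) (Or.inr ⟨x, y, le_rfl, rfl⟩)

lemma aux_backward {X : Type} [PseudoMetricSpace X] [Nonempty X] (c : ℝ) (hc : 0 < c)
    (h : ∀ R ε : ℝ, 0 < R → 0 < ε → ∃ S : ℝ, 0 < S ∧ ∀ T : ℝ, S < T →
      ∃ (C : Type) (f : X → C → ℝ),
        (∀ x, Summable fun cc => |f x cc|) ∧
        (∀ x, (∑' cc, |f x cc|) = 1) ∧
        (∀ x y : X, dist x y ≤ R → (∑' cc, |f x cc - f y cc|) ≤ ε) ∧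
        (∀ x y : X, S ≤ dist x y → dist x y ≤ T →
          c ≤ ∑' cc, |f x cc - f y cc|)) :
    ∃ (A : Type) (f : X → A → ℝ), (∀ x, Summable fun a => |f x a|) ∧
      CoarseEmbedD (fun x y : X => dist x y) (fun u v => ∑' a, |u a - v a|) f := by
  choose S hS0 hS using fun n : ℕ => h (n + 1) ((1 / 2) ^ n) (by positivity) (by positivity)
  -- make the scales increasing
  let S' : ℕ → ℝ := fun n => ∑ i ∈ Finset.range (n + 1), (S i + 1)
  have hmono : StrictMono S' := by
    refine strictMono_nat_of_lt_succ fun n => ?_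
    simp only [S']
    rw [Finset.sum_range_succ _ (n + 1)]
    linarith [hS0 (n + 1)]
  have hSS' : ∀ n, S n ≤ S' n := by
    intro n
    have := Finset.single_le_sum (f := fun i => S i + 1) (s := Finset.range (n + 1))
      (fun i _ => by linarith [hS0 i]) (Finset.self_mem_range_succ n)
    simp only [S']
    linarith
  have hnS' : ∀ n : ℕ, (n : ℝ) ≤ S' n := by
    intro n
    have := Finset.sum_le_sum (s := Finset.range (n + 1)) (f := fun _ => (1 : ℝ))
      (g := fun i => S i + 1) (fun i _ => by linarith [hS0 i])
    simp at this
    simp only [S']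
    linarith
  have hT : ∀ n, S n < S' (2 * n + 1) := fun n =>
    (hSS' n).trans_lt (hmono (by omega))
  choose C f hf1 hf2 hf3 hf4 using fun n : ℕ => hS n (S' (2 * n + 1)) (hT n)
  have hfd : ∀ n x y, Summable fun a => |f n x a - f n y a| := fun n x y =>
    Summable.of_nonneg_of_le (fun _ => abs_nonneg _) (fun a => abs_sub _ _)
      ((hf1 n x).add (hf1 n y))
  have hfd2 : ∀ n x y, ∑' a, |f n x a - f n y a| ≤ 2 := by
    intro n x y
    refine ((hfd n x y).tsum_le_tsum (fun a => abs_sub _ _) ((hf1 n x).add (hf1 n y))).trans ?_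
    rw [(hf1 n x).tsum_add (hf1 n y), hf2, hf2]
    norm_num
  have hmaj : ∀ t : ℝ, HasSum (fun n : ℕ => (if n ∈ Finset.range ⌈t⌉₊ then (2 : ℝ) else 0) +
      (1 / 2) ^ n) (⌈t⌉₊ * 2 + 2) := by
    intro t
    refine HasSum.add ?_ hasSum_geometric_two
    refine aux_congr (hasSum_sum_of_ne_finset_zero (s := Finset.range ⌈t⌉₊)
      (f := fun n : ℕ => if n ∈ Finset.range ⌈t⌉₊ then (2 : ℝ) else 0) ?_) (fun _ => rfl) ?_
    · intro n hn
      simp [hn]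
    · rw [Finset.sum_congr rfl (fun n hn => if_pos hn)]
      simp
  have hle : ∀ x y n, ∑' a, |f n x a - f n y a| ≤
      (if n ∈ Finset.range ⌈dist x y⌉₊ then (2 : ℝ) else 0) + (1 / 2) ^ n := by
    intro x y n
    split_ifs with hn
    · have : (0 : ℝ) ≤ (1 / 2) ^ n := by positivity
      linarith [hfd2 n x y]
    · rw [zero_add]
      refine hf3 n x y ?_
      simp only [Finset.mem_range, not_lt] at hn
      have := Nat.ceil_le.1 hn
      linarith
  have hsn : ∀ x y, Summable fun n => ∑' a, |f n x a - f n y a| := fun x y =>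
    Summable.of_nonneg_of_le (fun n => tsum_nonneg fun _ => abs_nonneg _) (hle x y)
      (hmaj (dist x y)).summable
  have hsig : ∀ x y, Summable fun p : Σ n, C n => |f p.1 x p.2 - f p.1 y p.2| := by
    intro x y
    rw [summable_sigma_of_nonneg (fun _ => abs_nonneg _)]
    exact ⟨fun n => hfd n x y, hsn x y⟩
  have htsum : ∀ x y, ∑' p : Σ n, C n, |f p.1 x p.2 - f p.1 y p.2| =
      ∑' n, ∑' a, |f n x a - f n y a| := fun x y => (hsig x y).tsum_sigma
  obtain ⟨x0⟩ := ‹Nonempty X›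
  obtain ⟨ρ, hρ1, hρ2, hρ3⟩ := aux_lower
    (fun x y : X => ∑' n, ∑' a, |f n x a - f n y a|)
    (fun x y => tsum_nonneg fun n => tsum_nonneg fun _ => abs_nonneg _) (by
      intro M
      obtain ⟨K, hK⟩ := exists_nat_ge (M / c)
      refine ⟨S' (2 * K), fun x y hxy => ?_⟩
      have hex : ∃ m, dist x y < S' m := by
        obtain ⟨m, hm⟩ := exists_nat_gt (dist x y)
        exact ⟨m, hm.trans_le (hnS' m)⟩
      classical
      have hm := Nat.find_spec hex
      have hmin := fun k => Nat.find_min (m := k) hex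
      generalize Nat.find hex = m at hm hmin
      have hKm : 2 * K < m := by
        by_contra hcon
        have := hmono.monotone (not_lt.1 hcon)
        linarith
      have hlow : ∀ n ∈ Finset.Ico (m - 1 - K) (m - 1), c ≤ ∑' a, |f n x a - f n y a| := by
        intro n hn
        rw [Finset.mem_Ico] at hn
        refine hf4 n x y ?_ ?_
        · exact (hSS' n).trans (not_lt.1 (hmin n (by omega)))
        · exact hm.le.trans (hmono.monotone (by omega))
      have h1 := (hsn x y).sum_le_tsum (Finset.Ico (m - 1 - K) (m - 1))
        (fun n _ => tsum_nonneg fun _ => abs_nonneg _)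
      have h2 := Finset.sum_le_sum hlow
      have hcard : m - 1 - (m - 1 - K) = K := by omega
      rw [Finset.sum_const, Nat.card_Ico, hcard, nsmul_eq_mul] at h2
      rw [div_le_iff₀ hc] at hK
      linarith)
  refine ⟨Σ n, C n, fun x p => f p.1 x p.2 - f p.1 x0 p.2, fun x => hsig x x0, ρ,
    fun t => ⌈t⌉₊ * 2 + 2, hρ1, ?_, hρ2, fun x y => ?_⟩
  · intro s t hst
    have : (⌈s⌉₊ : ℝ) ≤ ⌈t⌉₊ := by exact_mod_cast Nat.ceil_mono hst
    simp only
    linarith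
  · simp only [sub_sub_sub_cancel_right, htsum]
    exact ⟨hρ3 x y, hasSum_le (hle x y) (hsn x y).hasSum (hmaj (dist x y))⟩

/-- A pseudo-metric space `X` coarsely embeds in `ℓ¹(A)` for some set `A` iff
there is `c > 0` such that for all `R, ε > 0` there is `S > 0` so that for any `T > S`
there are a set `C` and a map `f` from `X` to the unit sphere of `ℓ¹(C)` with
`‖f(x)−f(y)‖₁ ≤ ε` whenever `d(x,y) ≤ R` and `‖f(x)−f(y)‖₁ ≥ c` whenever
`S ≤ d(x,y) ≤ T`. -/
theorem stmt7 {X : Type} [PseudoMetricSpace X] :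
    (∃ (A : Type) (f : X → A → ℝ), (∀ x, Summable fun a => |f x a|) ∧
      CoarseEmbedD (fun x y : X => dist x y) (fun u v => ∑' a, |u a - v a|) f) ↔
    (∃ c : ℝ, 0 < c ∧ ∀ R ε : ℝ, 0 < R → 0 < ε → ∃ S : ℝ, 0 < S ∧ ∀ T : ℝ, S < T →
      ∃ (C : Type) (f : X → C → ℝ),
        (∀ x, Summable fun cc => |f x cc|) ∧
        (∀ x, (∑' cc, |f x cc|) = 1) ∧
        (∀ x y : X, dist x y ≤ R → (∑' cc, |f x cc - f y cc|) ≤ ε) ∧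
        (∀ x y : X, S ≤ dist x y → dist x y ≤ T →
          c ≤ ∑' cc, |f x cc - f y cc|)) := by
  constructor
  · rintro ⟨A, f, hf, ρm, ρp, -, hp, hm, hρ⟩
    simp only at hρ
    refine ⟨1 / 2, by norm_num, fun R ε hR hε => ?_⟩
    set t : ℝ := ε ^ 2 / (8 * (|ρp R| + 1)) with ht
    have htpos : 0 < t := by positivity
    obtain ⟨S, hS⟩ := ((Filter.tendsto_atTop.1 hm (1 / t)).and
      (Filter.eventually_gt_atTop 0)).exists_forall_of_atTop
    refine ⟨S, (hS S le_rfl).2, fun T _ => ?_⟩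
    obtain ⟨C, F, h1, h2, h3⟩ := aux_forward A f hf t htpos.le
    refine ⟨C, F, h1, h2, fun x y hxy => ?_, fun x y hxy _ => ?_⟩
    · have h4 : ∑' a, |f x a - f y a| ≤ |ρp R| + 1 :=
        ((hρ x y).2.trans (hp hxy)).trans (by linarith [le_abs_self (ρp R)])
      have h5 : 8 * t * (∑' a, |f x a - f y a|) ≤ ε ^ 2 := by
        have h6 : 8 * t * (|ρp R| + 1) = ε ^ 2 := by
          rw [ht]
          field_simp
        rw [← h6]
        exact mul_le_mul_of_nonneg_left h4 (by positivity)
      exact (abs_le_of_sq_le_sq ((h3 x y).1.trans h5) hε.le) |> (le_abs_self _).trans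
    · have h4 : 1 / t ≤ ∑' a, |f x a - f y a| := (hS _ hxy).1.trans (hρ x y).1
      have h5 : -t * ∑' a, |f x a - f y a| ≤ -1 := by
        rw [div_le_iff₀ htpos] at h4
        linarith
      have h6 : Real.exp (-t * ∑' a, |f x a - f y a|) ≤ 1 / 2 := by
        refine (Real.exp_le_exp.2 h5).trans ?_
        rw [Real.exp_neg, ← one_div]
        exact one_div_le_one_div_of_le (by norm_num) (by linarith [Real.add_one_le_exp (1 : ℝ)])
      linarith [(h3 x y).2]
  · rintro ⟨c, hc, h⟩
    rcases isEmpty_or_nonempty X with hX | hX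
    · exact ⟨Empty, fun _ _ => 0, fun x => isEmptyElim x, id, id, monotone_id, monotone_id,
        Filter.tendsto_id, fun x => isEmptyElim x⟩
    · exact aux_backward c hc h
end

section
/- Let X be a pseudo-metric space that coarsely embeds in ℓ¹(A) for some set A. Then for every set S and every choice of basepoints x_s ∈ X (s ∈ S), the wedge ⋁_{s∈S}(X_s, x_s) of the pointed copies (X_s, x_s) of X coarsely embeds in ℓ¹(B) for some set B. -/
open Classical in
/-- The wedge distance on `S` copies of `X`, the `s`-th copy pointed at `p s`. -/
noncomputable def wedgeCopiesDist {S X : Type} [PseudoMetricSpace X] (p : S → X)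
    (u v : S × X) : ℝ :=
  if u.1 = v.1 then dist u.2 v.2 else dist u.2 (p u.1) + dist (p v.1) v.2

open Classical in
theorem hasSum_fibre {S A : Type} (s : S) (h : A → ℝ) (c : ℝ) (hc : HasSum h c) :
    HasSum (fun b : S × A => if b.1 = s then h b.2 else 0) c := by
  have hinj : Function.Injective (fun a : A => (s, a)) := fun a b hab => (Prod.mk.inj hab).2
  rw [← hinj.hasSum_iff]
  · simpa [Function.comp_def] using hc
  · rintro ⟨t, a⟩ hb
    by_cases hts : t = s
    · subst hts
      exact absurd ⟨a, rfl⟩ hb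
    · simp [hts]

/-- If a pseudo-metric space `X` coarsely embeds in `ℓ¹(A)` for some set `A`,
then for every set `S` and every choice of basepoints `x_s ∈ X` the wedge of the pointed
copies `(X_s, x_s)` of `X` coarsely embeds in `ℓ¹(B)` for some set `B`. -/
theorem stmt8 {X : Type} [PseudoMetricSpace X]
    (A : Type) (f : X → A → ℝ) (hsum : ∀ x, Summable fun a => |f x a|)
    (hf : CoarseEmbedD (fun x y : X => dist x y) (fun u v => ∑' a, |u a - v a|) f)
    (S : Type) (p : S → X) :
    ∃ (B : Type) (g : S × X → B → ℝ),
      (∀ w, Summable fun b => |g w b|) ∧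
      CoarseEmbedD (wedgeCopiesDist p) (fun u v => ∑' b, |u b - v b|) g := by
  classical
  obtain ⟨ρm, ρp, hm, hp, ht, hb⟩ := hf
  have hd : ∀ x y, Summable fun a => |f x a - f y a| := fun x y =>
    Summable.of_nonneg_of_le (fun a => abs_nonneg _) (fun a => abs_sub (f x a) (f y a))
      ((hsum x).add (hsum y))
  have hn : ∀ x y, 0 ≤ ∑' a, |f x a - f y a| := fun x y => tsum_nonneg fun a => abs_nonneg _
  have hl : ∀ x y, ρm (dist x y) ≤ ∑' a, |f x a - f y a| := fun x y => (hb x y).1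
  have hu : ∀ x y, ∑' a, |f x a - f y a| ≤ ρp (dist x y) := fun x y => (hb x y).2
  let g : S × X → S × A → ℝ := fun w b => if b.1 = w.1 then f w.2 b.2 - f (p w.1) b.2 else 0
  have hgs : ∀ s x y, ∑' b, |g (s, x) b - g (s, y) b| = ∑' a, |f x a - f y a| := by
    intro s x y
    rw [← (hasSum_fibre s _ _ (hd x y).hasSum).tsum_eq]
    refine tsum_congr fun b => ?_
    by_cases h : b.1 = s <;> simp [g, h]
  have hgd : ∀ s t x y, s ≠ t → ∑' b, |g (s, x) b - g (t, y) b| =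
      ∑' a, |f x a - f (p s) a| + ∑' a, |f (p t) a - f y a| := by
    intro s t x y hst
    rw [← ((hasSum_fibre s _ _ (hd x (p s)).hasSum).add
      (hasSum_fibre t _ _ (hd (p t) y).hasSum)).tsum_eq]
    refine tsum_congr fun b => ?_
    by_cases h : b.1 = s
    · have h2 : b.1 ≠ t := fun h' => hst (h.symm.trans h')
      simp [g, h, hst]
    · by_cases h2 : b.1 = t
      · simp [g, h2, hst.symm]
      · simp [g, h, h2]
  refine ⟨S × A, g, ?_, fun r => ρm (r / 2), fun r => 2 * max (ρp r) 0, ?_, ?_, ?_, ?_⟩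
  · rintro ⟨s, x⟩
    refine (hasSum_fibre s _ _ (hd x (p s)).hasSum).summable.congr fun b => ?_
    by_cases h : b.1 = s <;> simp [g, h]
  · intro a b hab
    exact hm (by linarith)
  · intro a b hab
    have := max_le_max_right 0 (hp hab)
    simp only
    linarith
  · exact ht.comp (Filter.tendsto_id.atTop_div_const (by norm_num))
  · rintro ⟨s, x⟩ ⟨t, y⟩
    by_cases hst : s = t
    · subst hst
      simp only [hgs, wedgeCopiesDist, if_true]
      have h0 : 0 ≤ dist x y := dist_nonneg
      refine ⟨(hm (by linarith)).trans (hl x y), ?_⟩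
      have := hu x y
      have h1 := le_max_left (ρp (dist x y)) 0
      have h2 := le_max_right (ρp (dist x y)) 0
      linarith
    · simp only [hgd s t x y hst, wedgeCopiesDist, if_neg hst]
      have a0 : 0 ≤ dist x (p s) := dist_nonneg
      have b0 : 0 ≤ dist (p t) y := dist_nonneg
      have na := hn x (p s)
      have nb := hn (p t) y
      constructor
      · rcases le_total (dist x (p s)) (dist (p t) y) with h | h
        · have := (hm (show (dist x (p s) + dist (p t) y) / 2 ≤ dist (p t) y by linarith)).trans
            (hl (p t) y)
          linarith
        · have := (hm (show (dist x (p s) + dist (p t) y) / 2 ≤ dist x (p s) by linarith)).trans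
            (hl x (p s))
          linarith
      · have h1 := (hu x (p s)).trans
          (hp (show dist x (p s) ≤ dist x (p s) + dist (p t) y by linarith))
        have h2 := (hu (p t) y).trans
          (hp (show dist (p t) y ≤ dist x (p s) + dist (p t) y by linarith))
        have h3 := le_max_left (ρp (dist x (p s) + dist (p t) y)) 0
        linarith
end

section
/- Let W be the wedge of two copies of the real line at the basepoint 0, i.e., W = ℝ × {0,1} with metric d((a,i),(b,j)) = |a − b| if i = j and d((a,i),(b,j)) = |a| + |b| if i ≠ j. Then there is no coarse embedding of W into ℝ. -/
/-- The metric of the wedge `W` of two copies of the real line at the basepoint `0`. -/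
noncomputable def twoLinesDist (u v : ℝ × Bool) : ℝ :=
  if u.2 = v.2 then |u.1 - v.1| else |u.1| + |v.1|

theorem cross_aux (C : ℝ) (a b : ℕ → ℝ) (ha : ∀ n, |a (n+1) - a n| ≤ C)
    (hab : ∀ n m, C < |a n - b m|) (hua : ∀ M, ∃ n, M < a n) (h0 : a 0 ≤ b 0) : False := by
  have key : ∀ n, a n ≤ b 0 := by
    intro n
    induction n with
    | zero => exact h0
    | succ k ih =>
      by_contra hlt
      push Not at hlt
      have h1 := abs_le.1 (ha k)
      have h2 := hab (k+1) 0
      rw [abs_of_pos (by linarith)] at h2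
      linarith [h1.2]
  obtain ⟨n, hn⟩ := hua (b 0)
  linarith [key n]

theorem cross (C : ℝ) (a b : ℕ → ℝ) (ha : ∀ n, |a (n+1) - a n| ≤ C)
    (hb : ∀ n, |b (n+1) - b n| ≤ C)
    (hab : ∀ n m, C < |a n - b m|) (hua : ∀ M, ∃ n, M < a n) (hub : ∀ M, ∃ n, M < b n) :
    False := by
  rcases le_total (a 0) (b 0) with h | h
  · exact cross_aux C a b ha hab hua h
  · exact cross_aux C b a hb (fun n m => by rw [abs_sub_comm]; exact hab m n) hub h

theorem cross_neg (C : ℝ) (a b : ℕ → ℝ) (ha : ∀ n, |a (n+1) - a n| ≤ C)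
    (hb : ∀ n, |b (n+1) - b n| ≤ C)
    (hab : ∀ n m, C < |a n - b m|) (hua : ∀ M, ∃ n, M < - a n) (hub : ∀ M, ∃ n, M < - b n) :
    False := by
  have e : ∀ x y : ℝ, |-x - -y| = |x - y| := fun x y => by
    rw [← abs_neg]; congr 1; ring
  refine cross C (fun n => - a n) (fun n => - b n) ?_ ?_ ?_ hua hub
  · intro n; simpa only [e] using ha n
  · intro n; simpa only [e] using hb n
  · intro n m; simpa only [e] using hab n m

theorem ray_sign (C c : ℝ) (a : ℕ → ℝ) (ha : ∀ n, |a (n+1) - a n| ≤ C)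
    (hc : ∀ n, C < |a n - c|) (hu : ∀ M, ∃ n, M < |a n - c|) :
    (∀ M, ∃ n, M < a n) ∨ (∀ M, ∃ n, M < - a n) := by
  have hC : 0 ≤ C := (abs_nonneg _).trans (ha 0)
  rcases le_total c (a 0) with h | h
  · left
    have key : ∀ n, c ≤ a n := by
      intro n
      induction n with
      | zero => exact h
      | succ k ih =>
        have h1 := abs_le.1 (ha k)
        have h2 := hc k
        rw [abs_of_nonneg (by linarith)] at h2
        linarith [h1.1]
    intro M
    obtain ⟨n, hn⟩ := hu (M - c)
    rw [abs_of_nonneg (by linarith [key n])] at hn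
    exact ⟨n, by linarith⟩
  · right
    have key : ∀ n, a n ≤ c := by
      intro n
      induction n with
      | zero => exact h
      | succ k ih =>
        have h1 := abs_le.1 (ha k)
        have h2 := hc k
        rw [abs_of_nonpos (by linarith)] at h2
        linarith [h1.2]
    intro M
    obtain ⟨n, hn⟩ := hu (M + c)
    rw [abs_of_nonpos (by linarith [key n])] at hn
    exact ⟨n, by linarith⟩

/-- There is no coarse embedding of the wedge of two copies of `ℝ`
(joined at `0`) into `ℝ`. -/
theorem stmt9 :
    ¬ ∃ f : ℝ × Bool → ℝ, CoarseEmbedD twoLinesDist (fun a b : ℝ => dist a b) f := by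
  rintro ⟨f, ρm, ρp, hm, hp, ht, hf⟩
  simp only [Real.dist_eq] at hf
  obtain ⟨N, hN⟩ := Filter.eventually_atTop.1
    ((Filter.tendsto_atTop.1 ht (ρp 1 + 1)).and (Filter.eventually_ge_atTop 0))
  have hN0 : 0 ≤ N := (hN N le_rfl).2
  have step : ∀ u v, twoLinesDist u v = 1 → |f u - f v| ≤ ρp 1 := by
    intro u v h
    have := (hf u v).2
    rwa [h] at this
  have far : ∀ u v, N ≤ twoLinesDist u v → ρp 1 < |f u - f v| := by
    intro u v h
    have h1 := (hf u v).1
    have h2 := (hN _ h).1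
    linarith
  have unb : ∀ g : ℕ → ℝ × Bool, (∀ n : ℕ, twoLinesDist (g n) (0, false) = n + N) →
      ∀ M, ∃ n, M < |f (g n) - f (0, false)| := by
    intro g hg M
    obtain ⟨K, hK⟩ := Filter.eventually_atTop.1 (Filter.tendsto_atTop.1 ht (M + 1))
    obtain ⟨n, hn⟩ := exists_nat_ge K
    refine ⟨n, ?_⟩
    have h1 := (hf (g n) (0, false)).1
    rw [hg n] at h1
    have h2 := hK (n + N) (by linarith)
    linarith
  have main : ∀ g : ℕ → ℝ × Bool, (∀ n : ℕ, twoLinesDist (g n) (0, false) = n + N) →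
      (∀ n, twoLinesDist (g (n+1)) (g n) = 1) →
      (∀ M, ∃ n, M < f (g n)) ∨ (∀ M, ∃ n, M < - f (g n)) := by
    intro g hg hs
    refine ray_sign (ρp 1) (f (0, false)) (fun n => f (g n)) (fun n => step _ _ (hs n))
      (fun n => far _ _ ?_) (unb g hg)
    rw [hg n]
    have : (0:ℝ) ≤ n := n.cast_nonneg
    linarith
  have pos : ∀ n : ℕ, |(n:ℝ) + N| = n + N := fun n => abs_of_nonneg (by positivity)
  have pos' : ∀ n : ℕ, |-((n:ℝ) + N)| = n + N := fun n => by rw [abs_neg, pos]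
  let g1 : ℕ → ℝ × Bool := fun n => ((n:ℝ) + N, false)
  let g2 : ℕ → ℝ × Bool := fun n => (-((n:ℝ) + N), false)
  let g3 : ℕ → ℝ × Bool := fun n => ((n:ℝ) + N, true)
  have s1 : ∀ n, twoLinesDist (g1 (n+1)) (g1 n) = 1 := by
    intro n
    simp only [twoLinesDist, g1, if_true]
    push_cast
    rw [show (n:ℝ) + 1 + N - (n + N) = 1 by ring, abs_one]
  have s2 : ∀ n, twoLinesDist (g2 (n+1)) (g2 n) = 1 := by
    intro n
    simp only [twoLinesDist, g2, if_true]
    push_cast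
    rw [show -((n:ℝ) + 1 + N) - -(n + N) = -1 by ring, abs_neg, abs_one]
  have s3 : ∀ n, twoLinesDist (g3 (n+1)) (g3 n) = 1 := by
    intro n
    simp only [twoLinesDist, g3, if_true]
    push_cast
    rw [show (n:ℝ) + 1 + N - (n + N) = 1 by ring, abs_one]
  have m1 := main g1 (fun n => by simp [twoLinesDist, g1, pos]) s1
  have m2 := main g2 (fun n => by
    simp only [twoLinesDist, g2, if_true, sub_zero]; exact pos' n) s2
  have m3 := main g3 (fun n => by simp [twoLinesDist, g3, pos]) s3
  have f12 : ∀ n m, ρp 1 < |f (g1 n) - f (g2 m)| := by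
    intro n m
    apply far
    simp only [twoLinesDist, g1, g2, if_true]
    have h1 : (0:ℝ) ≤ n := n.cast_nonneg
    have h2 : (0:ℝ) ≤ m := m.cast_nonneg
    refine le_trans ?_ (le_abs_self _)
    linarith
  have f13 : ∀ n m, ρp 1 < |f (g1 n) - f (g3 m)| := by
    intro n m
    apply far
    have h1 : (0:ℝ) ≤ n := n.cast_nonneg
    have h2 : (0:ℝ) ≤ m := m.cast_nonneg
    have : twoLinesDist (g1 n) (g3 m) = (n + N) + (m + N) := by
      simp [twoLinesDist, g1, g3, pos]
    linarith
  have f23 : ∀ n m, ρp 1 < |f (g2 n) - f (g3 m)| := by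
    intro n m
    apply far
    have h1 : (0:ℝ) ≤ n := n.cast_nonneg
    have h2 : (0:ℝ) ≤ m := m.cast_nonneg
    have : twoLinesDist (g2 n) (g3 m) = (n + N) + (m + N) := by
      rw [← pos' n, ← pos m]; simp [twoLinesDist, g2, g3]
    linarith
  have t1 := fun n => step _ _ (s1 n)
  have t2 := fun n => step _ _ (s2 n)
  have t3 := fun n => step _ _ (s3 n)
  rcases m1 with m1 | m1 <;> rcases m2 with m2 | m2 <;> rcases m3 with m3 | m3
  · exact cross _ (fun n => f (g1 n)) (fun n => f (g2 n)) t1 t2 f12 m1 m2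
  · exact cross _ (fun n => f (g1 n)) (fun n => f (g2 n)) t1 t2 f12 m1 m2
  · exact cross _ (fun n => f (g1 n)) (fun n => f (g3 n)) t1 t3 f13 m1 m3
  · exact cross_neg _ (fun n => f (g2 n)) (fun n => f (g3 n)) t2 t3 f23 m2 m3
  · exact cross _ (fun n => f (g2 n)) (fun n => f (g3 n)) t2 t3 f23 m2 m3
  · exact cross_neg _ (fun n => f (g1 n)) (fun n => f (g3 n)) t1 t3 f13 m1 m3
  · exact cross_neg _ (fun n => f (g1 n)) (fun n => f (g2 n)) t1 t2 f12 m1 m2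
  · exact cross_neg _ (fun n => f (g1 n)) (fun n => f (g2 n)) t1 t2 f12 m1 m2
end

section
/- Let X be an ∞-pseudo-metric space with asymptotic property C: for every sequence {R_i}_{i≥1} of positive real numbers there exist a natural number n and a decomposition X = ⋃_{i=1}^n X_i such that each X_i is the union of an R_i-disjoint family of subsets of X that is uniformly bounded. Then X is exact: for every R, ε > 0 there is an (ε,R)-continuous partition of unity on X whose strata are uniformly bounded. -/
open scoped ENNReal

lemma stick_aux (f g : ℕ → ℝ) (hf : ∀ i, 0 ≤ f i ∧ f i ≤ 1) (hg : ∀ i, 0 ≤ g i ∧ g i ≤ 1) (n : ℕ) :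
    (∑ i ∈ Finset.range n, |f i * ∏ j ∈ Finset.range i, (1 - f j)
        - g i * ∏ j ∈ Finset.range i, (1 - g j)|)
      + |∏ j ∈ Finset.range n, (1 - f j) - ∏ j ∈ Finset.range n, (1 - g j)|
      ≤ 2 * ∑ i ∈ Finset.range n, |f i - g i| := by
  induction n with
  | zero => simp
  | succ n ih =>
    rw [Finset.sum_range_succ, Finset.sum_range_succ, Finset.prod_range_succ,
      Finset.prod_range_succ]
    have hQ0 : 0 ≤ ∏ j ∈ Finset.range n, (1 - g j) :=
      Finset.prod_nonneg fun j _ => by linarith [hg j]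
    have hQ1 : ∏ j ∈ Finset.range n, (1 - g j) ≤ 1 :=
      Finset.prod_le_one (fun j _ => by linarith [hg j]) (fun j _ => by linarith [hg j])
    generalize ∏ j ∈ Finset.range n, (1 - f j) = P at *
    generalize ∏ j ∈ Finset.range n, (1 - g j) = Q at *
    obtain ⟨h0, h1⟩ := hf n
    have e1 : |f n * P - g n * Q| ≤ f n * |P - Q| + |f n - g n| := by
      calc |f n * P - g n * Q| = |f n * (P - Q) + (f n - g n) * Q| := by congr 1; ring
        _ ≤ |f n * (P - Q)| + |(f n - g n) * Q| := abs_add_le _ _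
        _ = f n * |P - Q| + |f n - g n| * Q := by
          rw [abs_mul, abs_mul, abs_of_nonneg h0, abs_of_nonneg hQ0]
        _ ≤ _ := by nlinarith [abs_nonneg (f n - g n)]
    have e2 : |P * (1 - f n) - Q * (1 - g n)| ≤ (1 - f n) * |P - Q| + |f n - g n| := by
      calc |P * (1 - f n) - Q * (1 - g n)| = |(1 - f n) * (P - Q) - (f n - g n) * Q| := by
            congr 1; ring
        _ ≤ |(1 - f n) * (P - Q)| + |(f n - g n) * Q| := abs_sub _ _
        _ = (1 - f n) * |P - Q| + |f n - g n| * Q := by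
          rw [abs_mul, abs_mul, abs_of_nonneg (by linarith : 0 ≤ 1 - f n), abs_of_nonneg hQ0]
        _ ≤ _ := by nlinarith [abs_nonneg (f n - g n)]
    linarith

lemma stick_sum (f : ℕ → ℝ) (n : ℕ) :
    ∑ i ∈ Finset.range n, f i * ∏ j ∈ Finset.range i, (1 - f j)
      = 1 - ∏ j ∈ Finset.range n, (1 - f j) := by
  induction n with
  | zero => simp
  | succ n ih => rw [Finset.sum_range_succ, ih, Finset.prod_range_succ]; ring

/-- bump function around `U` of radius `r` -/
noncomputable def bumpU {X : Type} [PseudoEMetricSpace X] (U : Set X) (r : ℝ) (x : X) : ℝ :=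
  1 - (min 1 (Metric.infEDist x U / ENNReal.ofReal r)).toReal

lemma bumpU_mem {X : Type} [PseudoEMetricSpace X] (U : Set X) (r : ℝ) (x : X) :
    0 ≤ bumpU U r x ∧ bumpU U r x ≤ 1 := by
  unfold bumpU
  have h1 : (min 1 (Metric.infEDist x U / ENNReal.ofReal r)).toReal ≤ 1 := by
    have := ENNReal.toReal_mono ENNReal.one_ne_top
      (min_le_left 1 (Metric.infEDist x U / ENNReal.ofReal r))
    simpa using this
  have h0 : 0 ≤ (min 1 (Metric.infEDist x U / ENNReal.ofReal r)).toReal := ENNReal.toReal_nonneg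
  constructor <;> linarith

lemma bumpU_one {X : Type} [PseudoEMetricSpace X] (U : Set X) (r : ℝ) (x : X) (hx : x ∈ U) :
    bumpU U r x = 1 := by
  simp [bumpU, Metric.infEDist_zero_of_mem hx]

lemma bumpU_near {X : Type} [PseudoEMetricSpace X] (U : Set X) (r : ℝ) (hr : 0 < r) (x : X)
    (hx : bumpU U r x ≠ 0) : ∃ p ∈ U, edist x p < ENNReal.ofReal r := by
  rw [← Metric.infEDist_lt_iff]
  by_contra h
  push Not at h
  apply hx
  have h2 : 1 ≤ Metric.infEDist x U / ENNReal.ofReal r := by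
    rw [ENNReal.le_div_iff_mul_le (by simp [hr]) (by simp)]
    simpa using h
  simp [bumpU, min_eq_left h2]

lemma bumpU_lip_aux {X : Type} [PseudoEMetricSpace X] (U : Set X) (r : ℝ) (hr : 0 < r) (x y : X)
    (R : ℝ) (hR : 0 < R) (h : edist x y ≤ ENNReal.ofReal R) :
    bumpU U r y - bumpU U r x ≤ R / r := by
  have h1 : min 1 (Metric.infEDist x U / ENNReal.ofReal r) ≤
      min 1 (Metric.infEDist y U / ENNReal.ofReal r) + ENNReal.ofReal (R / r) := by
    have h2 : Metric.infEDist x U / ENNReal.ofReal r ≤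
        Metric.infEDist y U / ENNReal.ofReal r + ENNReal.ofReal (R / r) := by
      rw [ENNReal.ofReal_div_of_pos hr, ← ENNReal.add_div]
      apply ENNReal.div_le_div_right
      calc _ ≤ Metric.infEDist y U + edist x y := Metric.infEDist_le_infEDist_add_edist
        _ ≤ _ := by gcongr
    rcases le_total 1 (Metric.infEDist y U / ENNReal.ofReal r) with h3 | h3
    · rw [min_eq_left h3]
      exact (min_le_left _ _).trans le_self_add
    · rw [min_eq_right h3]
      exact (min_le_right _ _).trans h2
  have hne : min 1 (Metric.infEDist y U / ENNReal.ofReal r) ≠ ⊤ :=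
    ne_top_of_le_ne_top ENNReal.one_ne_top (min_le_left _ _)
  have h4 := ENNReal.toReal_mono (ENNReal.add_ne_top.2 ⟨hne, ENNReal.ofReal_ne_top⟩) h1
  rw [ENNReal.toReal_add hne ENNReal.ofReal_ne_top, ENNReal.toReal_ofReal (by positivity)] at h4
  unfold bumpU
  linarith

lemma bumpU_lip {X : Type} [PseudoEMetricSpace X] (U : Set X) (r : ℝ) (hr : 0 < r) (x y : X)
    (R : ℝ) (hR : 0 < R) (h : edist x y ≤ ENNReal.ofReal R) :
    |bumpU U r x - bumpU U r y| ≤ R / r := by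
  rw [abs_sub_le_iff]
  exact ⟨bumpU_lip_aux U r hr y x R hR (by rwa [edist_comm]), bumpU_lip_aux U r hr x y R hR h⟩

/-- If an ∞-pseudo-metric space `X` has asymptotic property C (for every
sequence `{R_i}` of positive reals there is a finite decomposition `X = ⋃_{i=1}^n X_i`
with each `X_i` the union of an `R_i`-disjoint uniformly bounded family), then `X` is
exact: for every `R, ε > 0` there is an `(ε,R)`-continuous partition of unity on `X`
whose strata are uniformly bounded. -/
theorem stmt10 {X : Type} [PseudoEMetricSpace X]
    (hC : ∀ R : ℕ → ℝ, (∀ i, 0 < R i) →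
      ∃ (n : ℕ) (F : Fin n → Set (Set X)) (D : ℝ), 0 < D ∧
        (⋃ i, ⋃₀ F i) = Set.univ ∧
        (∀ i : Fin n, ∀ A ∈ F i, ∀ B ∈ F i, A ≠ B → ∀ x ∈ A, ∀ y ∈ B,
          ENNReal.ofReal (R i.val) ≤ edist x y) ∧
        (∀ i, ∀ A ∈ F i, EMetric.diam A ≤ ENNReal.ofReal D)) :
    ∀ R ε : ℝ, 0 < R → 0 < ε → ∃ (S : Type) (φ : S → X → ℝ),
      (∀ s x, 0 ≤ φ s x ∧ φ s x ≤ 1) ∧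
      (∀ x, HasSum (fun s => φ s x) 1) ∧
      (∀ x y : X, edist x y ≤ ENNReal.ofReal R → (∑' s, |φ s x - φ s y|) ≤ ε) ∧
      (∃ D : ℝ, 0 < D ∧ ∀ s, EMetric.diam {x | 0 < φ s x} ≤ ENNReal.ofReal D) := by
  classical
  intro R ε hR hε
  set r : ℕ → ℝ := fun i => R * 2 ^ (i + 2) / ε with hrdef
  have hr : ∀ i, 0 < r i := fun i => by simp only [hrdef]; positivity
  obtain ⟨n, F, D, hD, hcov, hdisj, hdiam⟩ := hC (fun i => 2 * r i + R)
    (fun i => by have := hr i; positivity)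
  set G : ℕ → Set (Set X) := fun i => if h : i < n then F ⟨i, h⟩ else ∅ with hG
  have hGdisj : ∀ i, ∀ A ∈ G i, ∀ B ∈ G i, A ≠ B → ∀ x ∈ A, ∀ y ∈ B,
      ENNReal.ofReal (2 * r i + R) ≤ edist x y := by
    intro i A hA B hB
    by_cases h : i < n
    · simp only [hG, h, dite_true] at hA hB
      exact hdisj ⟨i, h⟩ A hA B hB
    · simp [hG, h] at hA
  have hGdiam : ∀ i, ∀ A ∈ G i, Metric.ediam A ≤ ENNReal.ofReal D := by
    intro i A hA
    by_cases h : i < n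
    · simp only [hG, h, dite_true] at hA
      exact hdiam ⟨i, h⟩ A hA
    · simp [hG, h] at hA
  have hGcov : ∀ x : X, ∃ i < n, x ∈ ⋃₀ G i := by
    intro x
    have hx : x ∈ ⋃ i, ⋃₀ F i := by rw [hcov]; trivial
    obtain ⟨i, hi⟩ := Set.mem_iUnion.1 hx
    refine ⟨i, i.2, ?_⟩
    simpa [hG] using hi
  set f : X → ℕ → ℝ := fun x i => bumpU (⋃₀ G i) (r i) x with hf
  have hf01 : ∀ x i, 0 ≤ f x i ∧ f x i ≤ 1 := fun x i => bumpU_mem _ _ _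
  set ψ : X → ℕ → ℝ := fun x i => f x i * ∏ j ∈ Finset.range i, (1 - f x j) with hψ
  have hψ0 : ∀ x i, 0 ≤ ψ x i := fun x i =>
    mul_nonneg (hf01 x i).1 (Finset.prod_nonneg fun j _ => by linarith [hf01 x j])
  have hψsum : ∀ x, ∑ i ∈ Finset.range n, ψ x i = 1 := by
    intro x
    simp only [hψ]
    rw [stick_sum]
    obtain ⟨i, hi, hx⟩ := hGcov x
    rw [Finset.prod_eq_zero (Finset.mem_range.2 hi)]
    · simp
    · simp only [hf]; rw [bumpU_one _ _ _ hx]; simp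
  have hex : ∀ i x, ∃ A : Set X, ψ x i ≠ 0 → A ∈ G i ∧ ∃ p ∈ A, edist x p < ENNReal.ofReal (r i) := by
    intro i x
    by_cases h : ψ x i = 0
    · exact ⟨∅, fun h' => absurd h h'⟩
    · obtain ⟨p, ⟨A, hA, hp⟩, hxp⟩ := bumpU_near _ _ (hr i) x (left_ne_zero_of_mul h)
      exact ⟨A, fun _ => ⟨hA, p, hp, hxp⟩⟩
  choose a ha using hex
  set φ : ℕ × Set X → X → ℝ := fun s x =>
    ∑ j ∈ Finset.range n, if s = (j, a j x) then ψ x j else 0 with hφ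
  have hφ0 : ∀ s x, 0 ≤ φ s x := fun s x =>
    Finset.sum_nonneg fun j _ => by split_ifs; exacts [hψ0 x j, le_rfl]
  have hφsum : ∀ x, HasSum (fun s => φ s x) 1 := by
    intro x
    rw [← hψsum x]
    exact hasSum_sum fun j _ => hasSum_ite_eq (j, a j x) (ψ x j)
  refine ⟨ℕ × Set X, φ, fun s x => ⟨hφ0 s x, le_hasSum (hφsum x) s fun t _ => hφ0 t x⟩, hφsum, ?_, ?_⟩
  · intro x y hxy
    have key : ∀ j, ∃ c : ℕ × Set X, ∀ s,
        |(if s = (j, a j x) then ψ x j else 0) - (if s = (j, a j y) then ψ y j else 0)|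
          ≤ if s = c then |ψ x j - ψ y j| else 0 := by
      intro j
      by_cases hx : ψ x j = 0
      · refine ⟨(j, a j y), fun s => ?_⟩
        split_ifs <;> simp [hx]
      by_cases hy : ψ y j = 0
      · refine ⟨(j, a j x), fun s => ?_⟩
        split_ifs <;> simp [hy]
      have hEq : a j x = a j y := by
        obtain ⟨hA, p, hp, hxp⟩ := ha j x hx
        obtain ⟨hB, q, hq, hyq⟩ := ha j y hy
        by_contra hne
        have h1 := hGdisj j _ hA _ hB hne p hp q hq
        have h2 : edist p q < ENNReal.ofReal (2 * r j + R) := by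
          have hrj := hr j
          calc edist p q ≤ edist p x + edist x y + edist y q := edist_triangle4 _ _ _ _
            _ ≤ edist p x + ENNReal.ofReal R + edist y q := by gcongr
            _ < ENNReal.ofReal (r j) + ENNReal.ofReal R + ENNReal.ofReal (r j) := by
              rw [edist_comm p x]
              exact ENNReal.add_lt_add
                (ENNReal.add_lt_add_right ENNReal.ofReal_ne_top hxp) hyq
            _ = _ := by
              rw [← ENNReal.ofReal_add hrj.le hR.le, ← ENNReal.ofReal_add (by positivity) hrj.le]
              congr 1; ring
        exact absurd h1 (not_le.2 h2)
      refine ⟨(j, a j x), fun s => ?_⟩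
      rw [← hEq]
      split_ifs <;> simp
    choose c hc using key
    have hb : HasSum (fun s => ∑ j ∈ Finset.range n, if s = c j then |ψ x j - ψ y j| else 0)
        (∑ j ∈ Finset.range n, |ψ x j - ψ y j|) :=
      hasSum_sum fun j _ => hasSum_ite_eq (c j) _
    have hle : ∀ s, |φ s x - φ s y| ≤
        ∑ j ∈ Finset.range n, if s = c j then |ψ x j - ψ y j| else 0 := by
      intro s
      simp only [hφ]
      rw [← Finset.sum_sub_distrib]
      exact (Finset.abs_sum_le_sum_abs _ _).trans (Finset.sum_le_sum fun j _ => hc j s)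
    have hs : Summable fun s => |φ s x - φ s y| :=
      Summable.of_nonneg_of_le (fun _ => abs_nonneg _) hle hb.summable
    have h1 : ∑' s, |φ s x - φ s y| ≤ ∑ j ∈ Finset.range n, |ψ x j - ψ y j| :=
      hasSum_le hle hs.hasSum hb
    have h2 := stick_aux (f x) (f y) (hf01 x) (hf01 y) n
    have h3 : ∑ i ∈ Finset.range n, |f x i - f y i| ≤ ε / 2 := by
      have h4 : ∀ i, |f x i - f y i| ≤ ε / 4 * (1 / 2) ^ i := by
        intro i
        refine (bumpU_lip _ _ (hr i) x y R hR hxy).trans (le_of_eq ?_)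
        simp only [hrdef]
        rw [one_div, inv_pow, pow_add]
        field_simp
        norm_num
      calc _ ≤ ∑ i ∈ Finset.range n, ε / 4 * (1 / 2 : ℝ) ^ i := Finset.sum_le_sum fun i _ => h4 i
        _ = ε / 4 * ∑ i ∈ Finset.range n, (1 / 2 : ℝ) ^ i := by rw [Finset.mul_sum]
        _ ≤ ε / 4 * 2 := by gcongr; exact sum_geometric_two_le n
        _ = ε / 2 := by ring
    have h5 := abs_nonneg (∏ j ∈ Finset.range n, (1 - f x j) - ∏ j ∈ Finset.range n, (1 - f y j))
    have h6 : ∑ j ∈ Finset.range n, |ψ x j - ψ y j| ≤ 2 * ∑ i ∈ Finset.range n, |f x i - f y i| := by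
      simp only [hψ]
      linarith
    linarith
  · have hsum0 : 0 ≤ ∑ i ∈ Finset.range n, r i := Finset.sum_nonneg fun i _ => (hr i).le
    refine ⟨D + 2 * ∑ i ∈ Finset.range n, r i, by positivity, fun s => ?_⟩
    have hpos : ∀ x, 0 < φ s x → s.1 < n ∧ s.2 ∈ G s.1 ∧
        ∃ p ∈ s.2, edist x p < ENNReal.ofReal (r s.1) := by
      intro x hx
      obtain ⟨j, hj, hj2⟩ := Finset.exists_ne_zero_of_sum_ne_zero hx.ne'
      have hs : s = (j, a j x) := by
        by_contra h
        simp [h] at hj2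
      rw [if_pos hs] at hj2
      subst hs
      exact ⟨Finset.mem_range.1 hj, ha j x hj2⟩
    apply Metric.ediam_le
    intro x hx y hy
    obtain ⟨hn, hA, p, hp, hxp⟩ := hpos x hx
    obtain ⟨-, -, q, hq, hyq⟩ := hpos y hy
    have hrs := hr s.1
    have hle : r s.1 ≤ ∑ i ∈ Finset.range n, r i :=
      Finset.single_le_sum (fun i _ => (hr i).le) (Finset.mem_range.2 hn)
    calc edist x y ≤ edist x p + edist p q + edist q y := edist_triangle4 _ _ _ _
      _ ≤ ENNReal.ofReal (r s.1) + ENNReal.ofReal D + ENNReal.ofReal (r s.1) := by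
        rw [edist_comm q y]
        gcongr
        exact (Metric.edist_le_ediam_of_mem hp hq).trans (hGdiam _ _ hA)
      _ = ENNReal.ofReal (r s.1 + D + r s.1) := by
        rw [← ENNReal.ofReal_add hrs.le hD.le, ← ENNReal.ofReal_add (by positivity) hrs.le]
      _ ≤ _ := ENNReal.ofReal_le_ofReal (by linarith)
end

section
/- Let X be an ∞-pseudo-metric space of bounded geometry, i.e., for every r > 0 there is a natural number N such that every ball B(x,r) contains at most N points. Then for each R > 0 there is a natural number n and a decomposition X = ⋃_{i=1}^n X_i such that each X_i is R-discrete: any two distinct points of X_i are at distance greater than R (so each X_i is the union of an R-disjoint uniformly bounded family of singletons). -/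
open scoped ENNReal

/-- If an ∞-pseudo-metric space `X` has bounded geometry (for every `r > 0`
there is `N` with every ball `B(x,r)` containing at most `N` points), then for each
`R > 0` there are `n` and a decomposition `X = ⋃_{i=1}^n X_i` with each `X_i`
`R`-discrete: distinct points of `X_i` are at distance greater than `R`. -/
theorem stmt11 {X : Type} [PseudoEMetricSpace X]
    (hbg : ∀ r : ℝ, 0 < r → ∃ N : ℕ, ∀ x : X,
      (EMetric.closedBall x (ENNReal.ofReal r)).Finite ∧
      (EMetric.closedBall x (ENNReal.ofReal r)).ncard ≤ N) :
    ∀ R : ℝ, 0 < R → ∃ (n : ℕ) (Xi : Fin n → Set X),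
      (⋃ i, Xi i) = Set.univ ∧
      (∀ i, ∀ x ∈ Xi i, ∀ y ∈ Xi i, x ≠ y → ENNReal.ofReal R < edist x y) := by
  intro R hR
  obtain ⟨N, hN⟩ := hbg R hR
  have wf : WellFounded (WellOrderingRel : X → X → Prop) := WellOrderingRel.isWellOrder.wf
  -- greedy colouring along a well-order
  let F : ∀ x : X, (∀ y, WellOrderingRel y x → ℕ) → ℕ := fun x f =>
    sInf {k | ∀ y (h : WellOrderingRel y x), edist y x ≤ ENNReal.ofReal R → k ≠ f y h}
  let c : X → ℕ := wf.fix F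
  have hc : ∀ x, c x =
      sInf {k | ∀ y, WellOrderingRel y x → edist y x ≤ ENNReal.ofReal R → k ≠ c y} :=
    fun x => wf.fix_eq F x
  have key : ∀ x, ∃ k, k < N + 1 ∧
      k ∈ {k | ∀ y, WellOrderingRel y x → edist y x ≤ ENNReal.ofReal R → k ≠ c y} := by
    intro x
    obtain ⟨hfin, hcard⟩ := hN x
    have h1 : (c '' (EMetric.closedBall x (ENNReal.ofReal R))).ncard
        < (Set.Iio (N + 1)).ncard := by
      have := Set.ncard_image_le (f := c) hfin
      have h2 : (Set.Iio (N + 1)).ncard = N + 1 := by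
        rw [← Finset.coe_Iio, Set.ncard_coe_finset, Nat.card_Iio]
      omega
    obtain ⟨k, hk, hk'⟩ := Set.exists_mem_notMem_of_ncard_lt_ncard h1 (hfin.image c)
    exact ⟨k, hk, fun y _ hy e => hk' ⟨y, hy, e.symm⟩⟩
  have hlt : ∀ x, c x < N + 1 := by
    intro x
    obtain ⟨k, hk, hk'⟩ := key x
    rw [hc x]
    exact (Nat.sInf_le hk').trans_lt hk
  have hne : ∀ x y, WellOrderingRel y x → edist y x ≤ ENNReal.ofReal R → c x ≠ c y := by
    intro x
    obtain ⟨k, _, hk'⟩ := key x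
    have := Nat.sInf_mem ⟨k, hk'⟩
    rw [← hc x] at this
    exact this
  refine ⟨N + 1, fun i => {x | c x = i}, ?_, ?_⟩
  · ext x
    simp only [Set.mem_iUnion, Set.mem_setOf_eq, Set.mem_univ, iff_true]
    exact ⟨⟨c x, hlt x⟩, rfl⟩
  · intro i x hx y hy hxy
    have hcc : c x = c y := Eq.trans hx (Eq.symm hy)
    by_contra hle
    rw [not_lt] at hle
    rcases trichotomous_of WellOrderingRel x y with h | h | h
    · exact hne y x h hle hcc.symm
    · exact hxy h
    · exact hne x y h (by rwa [edist_comm]) hcc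
end

section
/- Let X be an ∞-pseudo-metric space. Suppose that for every R, ε > 0 there exist an (ε,R)-continuous partition of unity φ on X and a constant M > 0 such that every stratum of φ admits an (ε,R)-continuous partition of unity (of that stratum) all of whose strata have diameter at most M. Then X is exact. -/
open scoped ENNReal

/-- Suppose that for every `R, ε > 0` there are an `(ε,R)`-continuous
partition of unity `φ` on the ∞-pseudo-metric space `X` and `M > 0` such that every
stratum of `φ` admits an `(ε,R)`-continuous partition of unity all of whose strata have
diameter at most `M`. Then `X` is exact. -/
theorem stmt12 {X : Type} [PseudoEMetricSpace X]
    (h : ∀ R ε : ℝ, 0 < R → 0 < ε → ∃ (S : Type) (φ : S → X → ℝ) (M : ℝ), 0 < M ∧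
      (∀ s x, 0 ≤ φ s x ∧ φ s x ≤ 1) ∧
      (∀ x, HasSum (fun s => φ s x) 1) ∧
      (∀ x y : X, edist x y ≤ ENNReal.ofReal R → (∑' s, |φ s x - φ s y|) ≤ ε) ∧
      (∀ s : S, ∃ (T : Type) (ψ : T → {x : X // 0 < φ s x} → ℝ),
        (∀ t z, 0 ≤ ψ t z ∧ ψ t z ≤ 1) ∧
        (∀ z, HasSum (fun t => ψ t z) 1) ∧
        (∀ z w : {x : X // 0 < φ s x}, edist z w ≤ ENNReal.ofReal R →
          (∑' t, |ψ t z - ψ t w|) ≤ ε) ∧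
        (∀ t, EMetric.diam {z : {x : X // 0 < φ s x} | 0 < ψ t z} ≤ ENNReal.ofReal M))) :
    ∀ R ε : ℝ, 0 < R → 0 < ε → ∃ (S : Type) (φ : S → X → ℝ),
      (∀ s x, 0 ≤ φ s x ∧ φ s x ≤ 1) ∧
      (∀ x, HasSum (fun s => φ s x) 1) ∧
      (∀ x y : X, edist x y ≤ ENNReal.ofReal R → (∑' s, |φ s x - φ s y|) ≤ ε) ∧
      (∃ D : ℝ, 0 < D ∧ ∀ s, EMetric.diam {x | 0 < φ s x} ≤ ENNReal.ofReal D) := by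
  classical
  intro R ε hR hε
  obtain ⟨S, φ, M, hM, hφ, hsum, hcont, hstr⟩ := h R (ε / 2) hR (by linarith)
  choose T ψ hψ hψsum hψcont hψdiam using hstr
  let θ : (Σ s, T s) → X → ℝ := fun p x =>
    if hx : 0 < φ p.1 x then φ p.1 x * ψ p.1 p.2 ⟨x, hx⟩ else 0
  have θpos : ∀ (s : S) (t : T s) (x : X) (hx : 0 < φ s x),
      θ ⟨s, t⟩ x = φ s x * ψ s t ⟨x, hx⟩ := fun s t x hx => dif_pos hx
  have θneg : ∀ (s : S) (t : T s) (x : X) (hx : ¬ 0 < φ s x), θ ⟨s, t⟩ x = 0 :=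
    fun s t x hx => dif_neg hx
  have φz : ∀ s x, ¬ 0 < φ s x → φ s x = 0 := fun s x hx =>
    le_antisymm (not_lt.mp hx) (hφ s x).1
  have θb : ∀ p x, 0 ≤ θ p x ∧ θ p x ≤ 1 := by
    rintro ⟨s, t⟩ x
    by_cases hx : 0 < φ s x
    · rw [θpos s t x hx]
      exact ⟨mul_nonneg (hφ s x).1 (hψ s t _).1,
        mul_le_one₀ (hφ s x).2 (hψ s t _).1 (hψ s t _).2⟩
    · rw [θneg s t x hx]; norm_num
  have θf : ∀ s x, HasSum (fun t => θ ⟨s, t⟩ x) (φ s x) := by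
    intro s x
    by_cases hx : 0 < φ s x
    · simp only [θpos s _ x hx]
      simpa using (hψsum s ⟨x, hx⟩).mul_left (φ s x)
    · simp only [θneg s _ x hx, φz s x hx]
      exact hasSum_zero
  have θsm : ∀ x, Summable (fun p => θ p x) := by
    intro x
    rw [summable_sigma_of_nonneg (fun p => (θb p x).1)]
    refine ⟨fun s => (θf s x).summable, ?_⟩
    simp only [(θf _ x).tsum_eq]
    exact (hsum x).summable
  refine ⟨Σ s, T s, θ, θb, ?_, ?_, M, hM, ?_⟩
  · intro x
    exact HasSum.sigma_of_hasSum (hsum x) (fun s => θf s x) (θsm x)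
  · intro x y hxy
    have hs : Summable (fun p => |θ p x - θ p y|) := ((θsm x).sub (θsm y)).abs
    have hsf : ∀ s, Summable (fun t => |θ ⟨s, t⟩ x - θ ⟨s, t⟩ y|) := fun s =>
      ((θf s x).summable.sub (θf s y).summable).abs
    have hφs : Summable (fun s => |φ s x - φ s y|) :=
      ((hsum x).summable.sub (hsum y).summable).abs
    have hφe : HasSum (fun s => φ s x * (ε / 2)) (ε / 2) := by
      simpa using (hsum x).mul_right (ε / 2)
    have key : ∀ s, (∑' t, |θ ⟨s, t⟩ x - θ ⟨s, t⟩ y|) ≤ φ s x * (ε / 2) + |φ s x - φ s y| := by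
      intro s
      by_cases hx : 0 < φ s x
      · by_cases hy : 0 < φ s y
        · have hd : Summable (fun t => |ψ s t ⟨x, hx⟩ - ψ s t ⟨y, hy⟩|) :=
            ((hψsum s ⟨x, hx⟩).summable.sub (hψsum s ⟨y, hy⟩).summable).abs
          have h1 := (hd.hasSum.mul_left (φ s x)).add
            ((hψsum s ⟨y, hy⟩).mul_left |φ s x - φ s y|)
          have h2 : (∑' t, |θ ⟨s, t⟩ x - θ ⟨s, t⟩ y|) ≤ _ :=
            hasSum_le (fun t => ?_) (hsf s).hasSum h1
          · refine h2.trans ?_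
            have := mul_le_mul_of_nonneg_left (hψcont s ⟨x, hx⟩ ⟨y, hy⟩ hxy) hx.le
            linarith
          · rw [θpos s t x hx, θpos s t y hy]
            have e : φ s x * ψ s t ⟨x, hx⟩ - φ s y * ψ s t ⟨y, hy⟩ =
              φ s x * (ψ s t ⟨x, hx⟩ - ψ s t ⟨y, hy⟩) +
                (φ s x - φ s y) * ψ s t ⟨y, hy⟩ := by ring
            rw [e]
            refine (abs_add_le _ _).trans (le_of_eq ?_)
            rw [abs_mul, abs_mul, abs_of_pos hx, abs_of_nonneg (hψ s t ⟨y, hy⟩).1]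
        · have : ∀ t, |θ ⟨s, t⟩ x - θ ⟨s, t⟩ y| = θ ⟨s, t⟩ x := fun t => by
            rw [θneg s t y hy, sub_zero, abs_of_nonneg (θb _ _).1]
          simp only [this, (θf s x).tsum_eq, φz s y hy, sub_zero, abs_of_pos hx]
          have := mul_nonneg hx.le hε.le
          linarith
      · have : ∀ t, |θ ⟨s, t⟩ x - θ ⟨s, t⟩ y| = θ ⟨s, t⟩ y := fun t => by
          rw [θneg s t x hx, zero_sub, abs_neg, abs_of_nonneg (θb _ _).1]
        simp only [this, (θf s y).tsum_eq, φz s x hx, zero_sub, abs_neg,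
          abs_of_nonneg (hφ s y).1]
        linarith
    rw [hs.tsum_sigma' hsf]
    have := hasSum_le key hs.sigma.hasSum (hφe.add hφs.hasSum)
    have h3 := hcont x y hxy
    linarith
  · rintro ⟨s, t⟩
    refine le_trans (EMetric.diam_le ?_) (hψdiam s t)
    have aux : ∀ z, 0 < θ ⟨s, t⟩ z → ∃ hz : 0 < φ s z, 0 < ψ s t ⟨z, hz⟩ := by
      intro z hz
      by_cases hx : 0 < φ s z
      · rw [θpos s t z hx] at hz
        exact ⟨hx, pos_of_mul_pos_right hz hx.le⟩
      · rw [θneg s t z hx] at hz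
        exact absurd hz (lt_irrefl _)
    intro x hx y hy
    obtain ⟨hx, hx'⟩ := aux x hx
    obtain ⟨hy, hy'⟩ := aux y hy
    exact EMetric.edist_le_diam_of_mem (s := {z : {x : X // 0 < φ s x} | 0 < ψ s t z})
      (x := ⟨x, hx⟩) (y := ⟨y, hy⟩) hx' hy'
end

section
/- Let X be a pseudo-metric space and let S be a set whose cardinality is larger than the cardinality of X × ℕ. Suppose there exist functions α : (0,∞) → (0,∞) and M : (0,∞) × (0,∞) → (0,∞) such that for every bounded subset Z of X, every δ > 0, every K > 0, every subset A ⊆ Z, and every (α(δ),α(δ))-Lipschitz K-cobounded map f : A → Δ(S), the map f extends to a (δ,δ)-Lipschitz M(δ,K)-cobounded map g : Z → Δ(S) (so that all bounded subsets of X are exact uniformly). Then X is exact. -/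
/-- Tent functions on the line. -/
noncomputable def tentFn (n : ℕ) (u : ℝ) : ℝ := max 0 (1 - |u - n|)

theorem tentFn_nonneg (n : ℕ) (u : ℝ) : 0 ≤ tentFn n u := le_max_left _ _

theorem tentFn_lip (n : ℕ) (u v : ℝ) : |tentFn n u - tentFn n v| ≤ |u - v| := by
  unfold tentFn
  refine (abs_max_sub_max_le_max _ _ _ _).trans ?_
  have h : |(1 - |u - n|) - (1 - |v - n|)| ≤ |u - v| := by
    have := abs_abs_sub_abs_le_abs_sub (v - n) (u - n)
    rw [show (1 - |u - n|) - (1 - |v - n|) = |v - n| - |u - n| by ring]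
    refine this.trans (le_of_eq ?_)
    rw [abs_sub_comm]; congr 1; ring
  simpa using h

theorem tentFn_eq_zero (n : ℕ) (u : ℝ) (hu : 0 ≤ u)
    (hn : n ∉ ({⌊u⌋₊, ⌊u⌋₊ + 1} : Finset ℕ)) : tentFn n u = 0 := by
  have h1 := Nat.floor_le hu
  have h2 := Nat.lt_floor_add_one u
  simp only [Finset.mem_insert, Finset.mem_singleton, not_or] at hn
  unfold tentFn
  apply max_eq_left
  rcases lt_or_gt_of_ne hn.1 with h | h
  · have : ((n + 1 : ℕ) : ℝ) ≤ ⌊u⌋₊ := by exact_mod_cast h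
    push_cast at this
    have := le_abs_self (u - n)
    linarith
  · have h' : ⌊u⌋₊ + 2 ≤ n := by omega
    have : ((⌊u⌋₊ + 2 : ℕ) : ℝ) ≤ n := by exact_mod_cast h'
    push_cast at this
    have := neg_le_abs (u - n)
    linarith

theorem tentFn_hasSum (u : ℝ) (hu : 0 ≤ u) : HasSum (fun n => tentFn n u) 1 := by
  have h := hasSum_sum_of_ne_finset_zero (L := .unconditional ℕ) (f := fun n => tentFn n u)
    (s := {⌊u⌋₊, ⌊u⌋₊ + 1}) (fun n hn => tentFn_eq_zero n u hu hn)
  have h1 := Nat.floor_le hu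
  have h2 := Nat.lt_floor_add_one u
  convert h using 1
  rw [Finset.sum_pair (by omega)]
  unfold tentFn
  push_cast
  rw [abs_of_nonneg (by linarith), abs_of_nonpos (by linarith), max_eq_right (by linarith),
    max_eq_right (by linarith)]
  ring

theorem tentFn_diff (u v : ℝ) (hu : 0 ≤ u) (hv : 0 ≤ v) :
    Summable (fun n => |tentFn n u - tentFn n v|) ∧
      (∑' n, |tentFn n u - tentFn n v|) ≤ 4 * |u - v| := by
  classical
  have hz : ∀ n ∉ (({⌊u⌋₊, ⌊u⌋₊ + 1} : Finset ℕ) ∪ {⌊v⌋₊, ⌊v⌋₊ + 1}),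
      |tentFn n u - tentFn n v| = 0 := by
    intro n hn
    rw [Finset.mem_union, not_or] at hn
    rw [tentFn_eq_zero n u hu hn.1, tentFn_eq_zero n v hv hn.2]; simp
  refine ⟨summable_of_ne_finset_zero hz, ?_⟩
  rw [tsum_eq_sum hz]
  refine (Finset.sum_le_card_nsmul _ _ _ (fun n _ => tentFn_lip n u v)).trans ?_
  rw [nsmul_eq_mul]
  refine mul_le_mul_of_nonneg_right ?_ (abs_nonneg _)
  have := (Finset.card_union_le ({⌊u⌋₊, ⌊u⌋₊ + 1} : Finset ℕ) {⌊v⌋₊, ⌊v⌋₊ + 1}).trans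
    (add_le_add Finset.card_le_two Finset.card_le_two)
  exact_mod_cast this

theorem tentFn_lt (n : ℕ) (u : ℝ) (h : tentFn n u ≠ 0) : u < n + 1 := by
  by_contra! hc
  apply h
  unfold tentFn
  apply max_eq_left
  have := le_abs_self (u - n)
  linarith

/-- Let `X` be a pseudo-metric space and `S` a set of cardinality larger
than `card (X × ℕ)`. If there are functions `α : (0,∞) → (0,∞)` and
`M : (0,∞)² → (0,∞)` such that for every bounded `Z ⊆ X`, every `δ, K > 0`, every
`A ⊆ Z`, and every `(α(δ),α(δ))`-Lipschitz `K`-cobounded map `f : A → Δ(S)`, the map `f`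
extends to a `(δ,δ)`-Lipschitz `M(δ,K)`-cobounded map `g : Z → Δ(S)` (so that all bounded
subsets of `X` are exact uniformly), then `X` is exact. -/
theorem stmt13 {X S : Type} [PseudoMetricSpace X]
    (hcard : Cardinal.mk (X × ℕ) < Cardinal.mk S)
    (α : ℝ → ℝ) (M : ℝ → ℝ → ℝ)
    (hα : ∀ δ : ℝ, 0 < δ → 0 < α δ)
    (hM : ∀ δ K : ℝ, 0 < δ → 0 < K → 0 < M δ K)
    (hext : ∀ Z : Set X, Bornology.IsBounded Z →
      ∀ δ : ℝ, 0 < δ → ∀ K : ℝ, 0 < K → ∀ A : Set X, ∀ hAZ : A ⊆ Z, ∀ f : A → S → ℝ,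
        ((∀ a s, 0 ≤ f a s) ∧ ∀ a, HasSum (fun s => f a s) 1) →
        (∀ a b : A, (∑' s, |f a s - f b s|) ≤ α δ * dist (a : X) (b : X) + α δ) →
        (∀ s, ∀ a b : A, 0 < f a s → 0 < f b s → dist (a : X) (b : X) ≤ K) →
        ∃ g : Z → S → ℝ,
          ((∀ z s, 0 ≤ g z s) ∧ ∀ z, HasSum (fun s => g z s) 1) ∧
          (∀ z w : Z, (∑' s, |g z s - g w s|) ≤ δ * dist (z : X) (w : X) + δ) ∧
          (∀ s, ∀ z w : Z, 0 < g z s → 0 < g w s → dist (z : X) (w : X) ≤ M δ K) ∧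
          (∀ (x : X) (hx : x ∈ A), g ⟨x, hAZ hx⟩ = f ⟨x, hx⟩)) :
    ∀ R ε : ℝ, 0 < R → 0 < ε → ∃ (T : Type) (φ : T → X → ℝ),
      (∀ t x, 0 ≤ φ t x ∧ φ t x ≤ 1) ∧
      (∀ x, HasSum (fun t => φ t x) 1) ∧
      (∀ x y : X, dist x y ≤ R → (∑' t, |φ t x - φ t y|) ≤ ε) ∧
      (∃ D : ℝ, 0 < D ∧ ∀ t, ∀ x y : X, 0 < φ t x → 0 < φ t y → dist x y ≤ D) := by
  classical
  intro R ε hR hε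
  rcases isEmpty_or_nonempty X with hX | ⟨⟨x0⟩⟩
  · exact ⟨Unit, fun _ _ => 0, fun _ x => (hX.false x).elim, fun x => (hX.false x).elim,
      fun x => (hX.false x).elim, 1, one_pos, fun _ x => (hX.false x).elim⟩
  set δ : ℝ := ε / (2 * (R + 1)) with hδdef
  have hδ : 0 < δ := by positivity
  set L : ℝ := R + 8 * R / ε with hLdef
  have hRL : R ≤ L := by
    have : 0 < 8 * R / ε := by positivity
    linarith
  have hL : 0 < L := lt_of_lt_of_le hR hRL
  have hg : ∀ n : ℕ, ∃ g : X → S → ℝ,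
      (∀ x, dist x x0 ≤ (n + 2) * L → (∀ s, 0 ≤ g x s) ∧ HasSum (fun s => g x s) 1) ∧
      (∀ x y, dist x x0 ≤ (n + 2) * L → dist y x0 ≤ (n + 2) * L →
        (∑' s, |g x s - g y s|) ≤ δ * dist x y + δ) ∧
      (∀ s x y, dist x x0 ≤ (n + 2) * L → dist y x0 ≤ (n + 2) * L →
        0 < g x s → 0 < g y s → dist x y ≤ M δ 1) := by
    intro n
    obtain ⟨g, ⟨h1, h2⟩, h3, h4, -⟩ := hext (Metric.closedBall x0 ((n + 2) * L))
      Metric.isBounded_closedBall δ hδ 1 one_pos ∅ (Set.empty_subset _)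
      (fun a => (Set.notMem_empty _ a.2).elim)
      ⟨fun a => (Set.notMem_empty _ a.2).elim, fun a => (Set.notMem_empty _ a.2).elim⟩
      (fun a => (Set.notMem_empty _ a.2).elim) (fun _ a => (Set.notMem_empty _ a.2).elim)
    refine ⟨fun x s => if h : x ∈ Metric.closedBall x0 ((n + 2) * L) then g ⟨x, h⟩ s else 0,
      ?_, ?_, ?_⟩
    · intro x hx
      have hx' : x ∈ Metric.closedBall x0 ((n + 2) * L) := hx
      simp only [hx', dif_pos]
      exact ⟨h1 _, h2 _⟩
    · intro x y hx hy
      have hx' : x ∈ Metric.closedBall x0 ((n + 2) * L) := hx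
      have hy' : y ∈ Metric.closedBall x0 ((n + 2) * L) := hy
      simp only [hx', hy', dif_pos]
      exact h3 ⟨x, hx'⟩ ⟨y, hy'⟩
    · intro s x y hx hy
      have hx' : x ∈ Metric.closedBall x0 ((n + 2) * L) := hx
      have hy' : y ∈ Metric.closedBall x0 ((n + 2) * L) := hy
      simp only [hx', hy', dif_pos]
      exact h4 s ⟨x, hx'⟩ ⟨y, hy'⟩
  choose g hg1 hg2 hg3 using hg
  set ψ : ℕ → X → ℝ := fun n x => tentFn n (dist x x0 / L) with hψ
  have hu : ∀ x, 0 ≤ dist x x0 / L := fun x => by positivity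
  have hψ0 : ∀ n x, 0 ≤ ψ n x := fun n x => tentFn_nonneg _ _
  have hψs : ∀ x, HasSum (fun n => ψ n x) 1 := fun x => tentFn_hasSum _ (hu x)
  have hψlt : ∀ n x, ψ n x ≠ 0 → dist x x0 ≤ (n + 1) * L := by
    intro n x h
    have := tentFn_lt n _ h
    rw [div_lt_iff₀ hL] at this
    exact this.le
  have hball : ∀ n x, ψ n x ≠ 0 → dist x x0 ≤ (n + 2) * L := by
    intro n x h
    have := hψlt n x h
    linarith
  have hrow : ∀ n x, HasSum (fun s => ψ n x * g n x s) (ψ n x) := by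
    intro n x
    by_cases h : ψ n x = 0
    · simp only [h, zero_mul]; exact hasSum_zero
    · simpa using (hg1 n x (hball n x h)).2.mul_left (ψ n x)
  have hnn : ∀ (t : ℕ × S) x, 0 ≤ ψ t.1 x * g t.1 x t.2 := by
    intro t x
    by_cases h : ψ t.1 x = 0
    · simp [h]
    · exact mul_nonneg (hψ0 _ _) ((hg1 _ x (hball _ x h)).1 _)
  have hsum : ∀ x, HasSum (fun t : ℕ × S => ψ t.1 x * g t.1 x t.2) 1 := by
    intro x
    have hsm : Summable (fun t : ℕ × S => ψ t.1 x * g t.1 x t.2) := by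
      rw [summable_prod_of_nonneg (fun t => hnn t x)]
      refine ⟨fun n => (hrow n x).summable, ?_⟩
      simp only [(hrow _ x).tsum_eq]
      exact (hψs x).summable
    have := hsm.hasSum.prod_fiberwise (fun n => hrow n x)
    rw [(hψs x).unique this]
    exact hsm.hasSum
  refine ⟨ℕ × S, fun t x => ψ t.1 x * g t.1 x t.2, ?_, hsum, ?_, M δ 1, hM _ _ hδ one_pos, ?_⟩
  · intro t x
    exact ⟨hnn t x, le_hasSum (hsum x) t (fun j _ => hnn j x)⟩
  · intro x y hxy
    have hsm : Summable (fun t : ℕ × S => |ψ t.1 x * g t.1 x t.2 - ψ t.1 y * g t.1 y t.2|) :=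
      ((hsum x).summable.sub (hsum y).summable).abs
    rw [hsm.tsum_prod]
    obtain ⟨hd1, hd2⟩ := tentFn_diff _ _ (hu x) (hu y)
    have hinner : ∀ n, (∑' s, |ψ n x * g n x s - ψ n y * g n y s|) ≤
        |ψ n x - ψ n y| + ψ n y * (δ * R + δ) := by
      intro n
      by_cases h0 : ψ n x = 0 ∧ ψ n y = 0
      · simp [h0.1, h0.2]
      have hb : dist x x0 ≤ (n + 2) * L ∧ dist y x0 ≤ (n + 2) * L := by
        rw [not_and_or] at h0
        rcases h0 with h | h
        · have h1 := hψlt n x h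
          have h2 := dist_triangle_left y x0 x
          exact ⟨hball n x h, by linarith⟩
        · have h1 := hψlt n y h
          have h2 := dist_triangle x y x0
          exact ⟨by linarith, hball n y h⟩
      obtain ⟨hx0, hxs⟩ := hg1 n x hb.1
      obtain ⟨hy0, hys⟩ := hg1 n y hb.2
      have hdiff : Summable (fun s => |g n x s - g n y s|) :=
        (hxs.summable.sub hys.summable).abs
      have hA := hxs.mul_left |ψ n x - ψ n y|
      have hB := hdiff.hasSum.mul_left (ψ n y)
      have hle : (∑' s, |ψ n x * g n x s - ψ n y * g n y s|) ≤
          |ψ n x - ψ n y| * 1 + ψ n y * ∑' s, |g n x s - g n y s| := by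
        refine hasSum_le (fun s => ?_)
          (((hrow n x).summable.sub (hrow n y).summable).abs.hasSum) (hA.add hB)
        have : ψ n x * g n x s - ψ n y * g n y s =
          (ψ n x - ψ n y) * g n x s + ψ n y * (g n x s - g n y s) := by ring
        rw [this]
        refine (abs_add_le _ _).trans (le_of_eq ?_)
        rw [abs_mul, abs_mul, abs_of_nonneg (hx0 s), abs_of_nonneg (hψ0 n y)]
      have h2 := hg2 n x y hb.1 hb.2
      have h3 : δ * dist x y ≤ δ * R := mul_le_mul_of_nonneg_left hxy hδ.le
      have h4 : ψ n y * ∑' s, |g n x s - g n y s| ≤ ψ n y * (δ * R + δ) :=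
        mul_le_mul_of_nonneg_left (by linarith) (hψ0 n y)
      linarith
    have htot := hasSum_le hinner hsm.prod.hasSum (hd1.hasSum.add ((hψs y).mul_right _))
    refine htot.trans ?_
    have e1 : |dist x x0 / L - dist y x0 / L| ≤ R / L := by
      rw [← sub_div, abs_div, abs_of_pos hL]
      exact div_le_div_of_nonneg_right ((abs_dist_sub_le x y x0).trans hxy) hL.le
    have e2 : 4 * (R / L) ≤ ε / 2 := by
      rw [← mul_div_assoc, div_le_iff₀ hL, hLdef]
      have : ε / 2 * (R + 8 * R / ε) = ε * R / 2 + 4 * R := by field_simp; ring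
      rw [this]
      have : 0 < ε * R := by positivity
      linarith
    have e3 : δ * R + δ = ε / 2 := by
      rw [hδdef]; field_simp
    rw [e3]
    linarith
  · intro t x y hx hy
    have key : ∀ z, 0 < ψ t.1 z * g t.1 z t.2 → ψ t.1 z ≠ 0 ∧ 0 < g t.1 z t.2 := by
      intro z hz
      exact ⟨left_ne_zero_of_mul hz.ne', pos_of_mul_pos_right hz (hψ0 _ _)⟩
    obtain ⟨a1, a2⟩ := key x hx
    obtain ⟨b1, b2⟩ := key y hy
    exact hg3 t.1 t.2 x y (hball _ _ a1) (hball _ _ b1) a2 b2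
end

section
/- Let X be an ∞-pseudo-metric space and n ≥ 0 a natural number. The following conditions are equivalent: (1) for every R, ε > 0 there is an (ε,R)-continuous partition of unity on X of dimension at most n (each point belongs to at most n+1 strata) whose strata are uniformly bounded; (2) for every R > 0, X decomposes as a finite union X = ⋃_{k=0}^n X_k where each X_k is the union of an R-disjoint uniformly bounded family of subsets of X; (3) for every R > 0, X has a uniformly bounded cover of Lebesgue number at least R and multiplicity at most n+1. -/
open scoped ENNReal

def CondPU (X : Type) [PseudoEMetricSpace X] (n : ℕ) : Prop :=
  ∀ R ε : ℝ, 0 < R → 0 < ε → ∃ (S : Type) (φ : S → X → ℝ),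
        (∀ s x, 0 ≤ φ s x ∧ φ s x ≤ 1) ∧
        (∀ x, HasSum (fun s => φ s x) 1) ∧
        (∀ x : X, ∃ F : Finset S, F.card ≤ n + 1 ∧ ∀ s, 0 < φ s x → s ∈ F) ∧
        (∀ x y : X, edist x y ≤ ENNReal.ofReal R → (∑' s, |φ s x - φ s y|) ≤ ε) ∧
        (∃ D : ℝ, 0 < D ∧ ∀ s, EMetric.diam {x | 0 < φ s x} ≤ ENNReal.ofReal D)

def CondDec (X : Type) [PseudoEMetricSpace X] (n : ℕ) : Prop :=
  ∀ R : ℝ, 0 < R → ∃ (F : Fin (n + 1) → Set (Set X)) (D : ℝ), 0 < D ∧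
        (⋃ k, ⋃₀ F k) = Set.univ ∧
        (∀ k, ∀ A ∈ F k, ∀ B ∈ F k, A ≠ B → ∀ x ∈ A, ∀ y ∈ B,
          ENNReal.ofReal R ≤ edist x y) ∧
        (∀ k, ∀ A ∈ F k, EMetric.diam A ≤ ENNReal.ofReal D)

def CondCov (X : Type) [PseudoEMetricSpace X] (n : ℕ) : Prop :=
  ∀ R : ℝ, 0 < R → ∃ (𝒱 : Set (Set X)) (D : ℝ), 0 < D ∧
        ⋃₀ 𝒱 = Set.univ ∧
        (∀ x : X, ∃ V ∈ 𝒱, EMetric.closedBall x (ENNReal.ofReal R) ⊆ V) ∧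
        (∀ x : X, ∃ G : Finset (Set X), G.card ≤ n + 1 ∧ ∀ V ∈ 𝒱, x ∈ V → V ∈ G) ∧
        (∀ V ∈ 𝒱, EMetric.diam V ≤ ENNReal.ofReal D)

/-- A gap between the values of a finitely supported probability vector. -/
lemma exists_gap {S : Type} (n : ℕ) (v : S → ℝ) (h0 : ∀ s, 0 ≤ v s) (hs : HasSum v 1)
    (F : Finset S) (hF : F.card ≤ n + 1) (hFv : ∀ s, 0 < v s → s ∈ F) (δ : ℝ) (hδ : 0 < δ)
    (hδn : (n + 1 : ℝ) * ((n + 1) * δ) < 1) :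
    ∃ σ : Finset S, σ.Nonempty ∧ σ.card ≤ n + 1 ∧ (∀ s ∈ σ, 0 < v s) ∧
      ∀ s ∈ σ, ∀ t ∉ σ, v t + δ < v s := by
  classical
  have hsum : ∑ s ∈ F, v s = 1 := by
    refine HasSum.unique (hasSum_sum_of_ne_finset_zero ?_) hs
    intro s hsF
    by_contra hne
    exact hsF (hFv s (lt_of_le_of_ne (h0 s) (Ne.symm hne)))
  obtain ⟨m, hmF, hm⟩ : ∃ m ∈ F, (n + 1) * δ < v m := by
    by_contra! hcon
    have h1 : ∑ s ∈ F, v s ≤ F.card • ((n + 1) * δ) := Finset.sum_le_card_nsmul _ _ _ hcon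
    rw [hsum, nsmul_eq_mul] at h1
    have h2 : (F.card : ℝ) ≤ n + 1 := by exact_mod_cast hF
    have h3 : (F.card : ℝ) * ((n + 1) * δ) ≤ (n + 1) * ((n + 1) * δ) := by
      gcongr
    linarith
  let g : S → ℕ := fun s => ⌈v s / δ⌉₊ - 1
  have hcard : ((F.erase m).image g).card < (Finset.range (n + 1)).card := by
    have := Finset.card_image_le (s := F.erase m) (f := g)
    have h2 := Finset.card_erase_of_mem hmF
    have h3 := Finset.card_pos.mpr ⟨m, hmF⟩
    simp only [Finset.card_range]
    omega
  obtain ⟨j, hj, hjg⟩ := Finset.exists_mem_notMem_of_card_lt_card hcard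
  have hjn : j ≤ n := by simpa [Nat.lt_succ_iff] using hj
  have hjn' : (j : ℝ) ≤ n := by exact_mod_cast hjn
  have key : ∀ t, v t ≤ (j + 1) * δ → v t ≤ j * δ := by
    intro t ht
    by_contra! hlt
    have hpos : 0 < v t := lt_of_le_of_lt (by positivity) hlt
    have htm : t ≠ m := by
      rintro rfl
      have : ((j : ℝ) + 1) * δ ≤ (n + 1) * δ := by gcongr
      linarith
    apply hjg
    refine Finset.mem_image.mpr ⟨t, Finset.mem_erase.mpr ⟨htm, hFv t hpos⟩, ?_⟩
    have hc : ⌈v t / δ⌉₊ = j + 1 := by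
      rw [Nat.ceil_eq_iff (by omega)]
      refine ⟨?_, ?_⟩
      · rw [lt_div_iff₀ hδ]; simpa using hlt
      · rw [div_le_iff₀ hδ]; push_cast; exact ht
    simp [g, hc]
  have hjp : 0 ≤ ((j : ℝ) + 1) * δ := by positivity
  refine ⟨F.filter (fun s => (j + 1) * δ < v s), ⟨m, ?_⟩, ?_, ?_, ?_⟩
  · refine Finset.mem_filter.mpr ⟨hmF, lt_of_le_of_lt ?_ hm⟩
    gcongr
  · exact (Finset.card_filter_le _ _).trans hF
  · intro s hs
    exact lt_of_le_of_lt hjp (Finset.mem_filter.mp hs).2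
  · intro s hs t ht
    have h1 := (Finset.mem_filter.mp hs).2
    have h2 : v t ≤ (j + 1) * δ := by
      by_contra! hlt
      exact ht (Finset.mem_filter.mpr ⟨hFv t (lt_of_le_of_lt hjp hlt), hlt⟩)
    have h3 := key t h2
    linarith

lemma dec_of_pu {X : Type} [PseudoEMetricSpace X] (n : ℕ) (h : CondPU X n) : CondDec X n := by
  intro R hR
  obtain ⟨δ, hδ, hδn⟩ : ∃ δ : ℝ, 0 < δ ∧ (n + 1 : ℝ) * ((n + 1) * δ) < 1 := by
    refine ⟨1 / (2 * (n + 1) ^ 2), by positivity, ?_⟩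
    field_simp
    norm_num
  obtain ⟨S, φ, h01, hsum, hdim, hcont, D, hD, hdiam⟩ := h R δ hR hδ
  let U : Finset S → Set X := fun σ =>
    {x | (∀ s ∈ σ, 0 < φ s x) ∧ ∀ s ∈ σ, ∀ t ∉ σ, φ t x + δ < φ s x}
  refine ⟨fun k => {A | ∃ σ : Finset S, σ.card = k.val + 1 ∧ A = U σ}, D, hD, ?_, ?_, ?_⟩
  · rw [Set.eq_univ_iff_forall]
    intro x
    obtain ⟨F, hF, hFv⟩ := hdim x
    obtain ⟨σ, hne, hc, hp, hg⟩ := exists_gap n (fun s => φ s x) (fun s => (h01 s x).1)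
      (hsum x) F hF hFv δ hδ hδn
    have := hne.card_pos
    refine Set.mem_iUnion.mpr ⟨⟨σ.card - 1, by omega⟩, Set.mem_sUnion.mpr ⟨U σ, ⟨σ, ?_, rfl⟩, hp, hg⟩⟩
    simp only
    omega
  · rintro k A ⟨σ, hσ, rfl⟩ B ⟨τ, hτ, rfl⟩ hAB x hx y hy
    by_contra! hlt
    have hne : σ ≠ τ := by rintro rfl; exact hAB rfl
    have hab : ∀ s, |φ s x - φ s y| ≤ δ := fun s =>
      (Summable.le_tsum ((hsum x).summable.sub (hsum y).summable).abs s
        (fun _ _ => abs_nonneg _)).trans (hcont x y hlt.le)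
    obtain ⟨s, hs, hs'⟩ : ∃ s ∈ σ, s ∉ τ := by
      by_contra! hc
      exact hne (Finset.eq_of_subset_of_card_le hc (by omega))
    obtain ⟨t, ht, ht'⟩ : ∃ t ∈ τ, t ∉ σ := by
      by_contra! hc
      exact hne (Finset.eq_of_subset_of_card_le hc (by omega)).symm
    have h1 := hx.2 s hs t ht'
    have h2 := hy.2 t ht s hs'
    have h3 := abs_le.mp (hab s)
    have h4 := abs_le.mp (hab t)
    linarith [h3.1, h3.2, h4.1, h4.2]
  · rintro k A ⟨σ, hσ, rfl⟩
    obtain ⟨s, hs⟩ : σ.Nonempty := Finset.card_pos.mp (by omega)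
    exact (Metric.ediam_mono (fun x hx => hx.1 s hs)).trans (hdiam s)

lemma cov_of_dec {X : Type} [PseudoEMetricSpace X] (n : ℕ) (h : CondDec X n) : CondCov X n := by
  classical
  intro R hR
  obtain ⟨F, D, hD, hcov, hdisj, hdiam⟩ := h (3 * R) (by positivity)
  let N : Set X → Set X := fun A => {x | ∃ a ∈ A, edist x a ≤ ENNReal.ofReal R}
  have hball : ∀ x : X, ∃ V ∈ {V | ∃ k, ∃ A ∈ F k, V = N A},
      EMetric.closedBall x (ENNReal.ofReal R) ⊆ V := by
    intro x
    have hx : x ∈ ⋃ k, ⋃₀ F k := by rw [hcov]; trivial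
    obtain ⟨k, A, hA, hxA⟩ := Set.mem_iUnion.mp hx
    exact ⟨N A, ⟨k, A, hA, rfl⟩, fun y hy => ⟨x, hxA, hy⟩⟩
  refine ⟨{V | ∃ k, ∃ A ∈ F k, V = N A}, D + 2 * R, by positivity, ?_, hball, ?_, ?_⟩
  · rw [Set.eq_univ_iff_forall]
    intro x
    obtain ⟨V, hV, hb⟩ := hball x
    exact ⟨V, hV, hb (by simp [EMetric.closedBall])⟩
  · intro x
    let c : Fin (n + 1) → Set X := fun k =>
      if hk : ∃ A ∈ F k, x ∈ N A then N hk.choose else ∅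
    refine ⟨Finset.univ.image c, Finset.card_image_le.trans (by simp), ?_⟩
    rintro V ⟨k, A, hA, rfl⟩ hxA
    have hk : ∃ A ∈ F k, x ∈ N A := ⟨A, hA, hxA⟩
    refine Finset.mem_image.mpr ⟨k, Finset.mem_univ _, ?_⟩
    have hc : c k = N hk.choose := dif_pos hk
    rw [hc]
    obtain ⟨hB, hxB⟩ := hk.choose_spec
    by_contra hne
    have hne' : hk.choose ≠ A := fun e => hne (by rw [e])
    obtain ⟨b, hb, hxb⟩ := hxB
    obtain ⟨a, ha, hxa⟩ := hxA
    have h1 := hdisj k _ hB _ hA hne' b hb a ha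
    have h2 : edist b a ≤ ENNReal.ofReal (R + R) := by
      rw [ENNReal.ofReal_add hR.le hR.le]
      exact (edist_triangle_left b a x).trans (add_le_add hxb hxa)
    have h3 := (ENNReal.ofReal_le_ofReal_iff (by positivity)).mp (h1.trans h2)
    linarith
  · rintro V ⟨k, A, hA, rfl⟩
    refine Metric.ediam_le ?_
    rintro x ⟨a, ha, hxa⟩ y ⟨b, hb, hyb⟩
    have hab : edist a b ≤ ENNReal.ofReal D := (Metric.edist_le_ediam_of_mem ha hb).trans (hdiam k A hA)
    have he : D + 2 * R = R + D + R := by ring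
    rw [he, ENNReal.ofReal_add (by positivity) hR.le, ENNReal.ofReal_add hR.le hD.le]
    refine (edist_triangle4 x a b y).trans ?_
    rw [edist_comm b y]
    gcongr

/-- truncated distance to the complement -/
noncomputable def bump {X : Type} [PseudoEMetricSpace X] (L : ℝ) (V : Set X) (x : X) : ℝ :=
  (min (ENNReal.ofReal L) (Metric.infEDist x Vᶜ)).toReal

lemma bump_lip {X : Type} [PseudoEMetricSpace X] (L R : ℝ) (hR : 0 ≤ R) (V : Set X) (x y : X)
    (h : edist x y ≤ ENNReal.ofReal R) : bump L V x ≤ bump L V y + R := by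
  unfold bump
  have h1 : min (ENNReal.ofReal L) (Metric.infEDist x Vᶜ) ≤
      min (ENNReal.ofReal L) (Metric.infEDist y Vᶜ) + ENNReal.ofReal R := by
    rw [← min_add_add_right]
    refine min_le_min le_self_add ?_
    exact Metric.infEDist_le_infEDist_add_edist.trans (by gcongr)
  have hf : min (ENNReal.ofReal L) (Metric.infEDist y Vᶜ) ≠ ⊤ :=
    ne_top_of_le_ne_top ENNReal.ofReal_ne_top (min_le_left _ _)
  have h2 := ENNReal.toReal_mono (ENNReal.add_ne_top.mpr ⟨hf, ENNReal.ofReal_ne_top⟩) h1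
  rwa [ENNReal.toReal_add hf ENNReal.ofReal_ne_top, ENNReal.toReal_ofReal hR] at h2

lemma bump_pos {X : Type} [PseudoEMetricSpace X] (L : ℝ) (V : Set X) (x : X)
    (h : 0 < bump L V x) : x ∈ V := by
  by_contra hx
  have : Metric.infEDist x Vᶜ = 0 := Metric.infEDist_zero_of_mem hx
  simp [bump, this] at h

lemma bump_nonneg {X : Type} [PseudoEMetricSpace X] (L : ℝ) (V : Set X) (x : X) :
    0 ≤ bump L V x := ENNReal.toReal_nonneg

lemma bump_ball {X : Type} [PseudoEMetricSpace X] (L : ℝ) (hL : 0 ≤ L) (V : Set X) (x : X)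
    (h : EMetric.closedBall x (ENNReal.ofReal L) ⊆ V) : bump L V x = L := by
  have : ENNReal.ofReal L ≤ Metric.infEDist x Vᶜ := by
    rw [Metric.le_infEDist]
    intro y hy
    by_contra! hlt
    refine hy (h ?_)
    have := hlt.le
    rw [edist_comm] at this
    exact this
  rw [bump, min_eq_left this, ENNReal.toReal_ofReal hL]

set_option maxHeartbeats 1000000 in
lemma pu_of_cov {X : Type} [PseudoEMetricSpace X] (n : ℕ) (h : CondCov X n) : CondPU X n := by
  classical
  intro R ε hR hε
  obtain ⟨L, hL, hLε⟩ : ∃ L : ℝ, 0 < L ∧ 2 * (2 * (n + 1) * R) ≤ ε * L := by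
    refine ⟨2 * (2 * (n + 1) * R) / ε, by positivity, ?_⟩
    field_simp
    exact le_rfl
  obtain ⟨𝒱, D, hD, hcov, hball, hmult, hdiam⟩ := h L hL
  have hm' : ∀ x : X, ∃ G : Finset 𝒱, G.card ≤ n + 1 ∧ ∀ V : 𝒱, 0 < bump L V.1 x → V ∈ G := by
    intro x
    obtain ⟨G, hG, hGV⟩ := hmult x
    refine ⟨G.subtype (· ∈ 𝒱), ?_, ?_⟩
    · rw [Finset.card_subtype]
      exact (Finset.card_filter_le _ _).trans hG
    · intro V hV
      exact Finset.mem_subtype.mpr (hGV V.1 V.2 (bump_pos L _ x hV))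
  choose G hGc hG using hm'
  have hz : ∀ x (V : 𝒱), V ∉ G x → bump L V.1 x = 0 := by
    intro x V hV
    by_contra hne
    exact hV (hG x V (lt_of_le_of_ne (bump_nonneg _ _ _) (Ne.symm hne)))
  obtain ⟨Ψ, hΨ⟩ : ∃ Ψ : X → ℝ, ∀ x, Ψ x = ∑ V ∈ G x, bump L V.1 x := ⟨_, fun _ => rfl⟩
  have hsingle : ∀ x (V : 𝒱), V ∈ G x → bump L V.1 x ≤ Ψ x := by
    intro x V hV
    rw [hΨ]
    exact Finset.single_le_sum (f := fun V : 𝒱 => bump L V.1 x)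
      (fun V _ => bump_nonneg L V.1 x) hV
  have hΨT : ∀ x (T : Finset 𝒱), G x ⊆ T → ∑ V ∈ T, bump L V.1 x = Ψ x := by
    intro x T hT
    rw [hΨ]
    exact (Finset.sum_subset hT (fun V _ hV => hz x V hV)).symm
  have hΨL : ∀ x, L ≤ Ψ x := by
    intro x
    obtain ⟨V, hV, hb⟩ := hball x
    have hbump := bump_ball L hL.le V x hb
    have hmem : (⟨V, hV⟩ : 𝒱) ∈ G x := hG x ⟨V, hV⟩ (by simpa [hbump] using hL)
    refine hbump.symm.le.trans ?_
    exact hsingle x ⟨V, hV⟩ hmem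
  have hΨ0 : ∀ x, 0 < Ψ x := fun x => hL.trans_le (hΨL x)
  have hle : ∀ x (V : 𝒱), bump L V.1 x ≤ Ψ x := by
    intro x V
    by_cases hV : V ∈ G x
    · exact hsingle x V hV
    · rw [hz x V hV]; exact (hΨ0 x).le
  have hpos : ∀ (V : 𝒱) x, 0 < bump L V.1 x / Ψ x → 0 < bump L V.1 x := by
    intro V x hx
    have := mul_pos hx (hΨ0 x)
    rwa [div_mul_cancel₀ _ (hΨ0 x).ne'] at this
  refine ⟨𝒱, fun V x => bump L V.1 x / Ψ x, ?_, ?_, ?_, ?_, D, hD, ?_⟩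
  · intro V x
    exact ⟨div_nonneg (bump_nonneg _ _ _) (hΨ0 x).le, (div_le_one (hΨ0 x)).mpr (hle x V)⟩
  · intro x
    have h1 : ∑ V ∈ G x, bump L V.1 x / Ψ x = 1 := by
      rw [← Finset.sum_div, ← hΨ]
      exact div_self (hΨ0 x).ne'
    rw [← h1]
    refine hasSum_sum_of_ne_finset_zero ?_
    intro V hV
    beta_reduce
    rw [hz x V hV, zero_div]
  · intro x
    exact ⟨G x, hGc x, fun V hV => hG x V (hpos V x hV)⟩
  · intro x y hxy
    have hTx : G x ⊆ G x ∪ G y := Finset.subset_union_left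
    have hTy : G y ⊆ G x ∪ G y := Finset.subset_union_right
    have hTc : (((G x ∪ G y).card : ℕ) : ℝ) ≤ 2 * (n + 1) := by
      have h1 := Finset.card_union_le (G x) (G y)
      have h2 := hGc x
      have h3 := hGc y
      have : (G x ∪ G y).card ≤ 2 * (n + 1) := by omega
      exact_mod_cast this
    generalize G x ∪ G y = T at hTx hTy hTc
    have hSx := hΨT x T hTx
    have hSy := hΨT y T hTy
    rw [tsum_eq_sum (s := T) (by
      intro V hV
      beta_reduce
      rw [hz x V (fun h => hV (hTx h)), hz y V (fun h => hV (hTy h))]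
      simp)]
    have hlip : ∀ V : 𝒱, |bump L V.1 x - bump L V.1 y| ≤ R := by
      intro V
      have h1 := bump_lip L R hR.le V.1 x y hxy
      have h2 := bump_lip L R hR.le V.1 y x (by rwa [edist_comm])
      rw [abs_le]
      constructor <;> linarith
    have hsumlip : ∑ V ∈ T, |bump L V.1 x - bump L V.1 y| ≤ 2 * (n + 1) * R := by
      have := Finset.sum_le_card_nsmul T _ R (fun V _ => hlip V)
      rw [nsmul_eq_mul] at this
      exact this.trans (by gcongr)
    have hΨlip : |Ψ y - Ψ x| ≤ 2 * (n + 1) * R := by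
      rw [← hSx, ← hSy, ← Finset.sum_sub_distrib]
      refine (Finset.abs_sum_le_sum_abs _ _).trans ?_
      simpa only [abs_sub_comm] using hsumlip
    have hterm : ∀ V : 𝒱, |bump L V.1 x / Ψ x - bump L V.1 y / Ψ y| ≤
        |bump L V.1 x - bump L V.1 y| / Ψ x + bump L V.1 y * (|Ψ y - Ψ x| / (Ψ x * Ψ y)) := by
      intro V
      have hx0 := hΨ0 x
      have hy0 := hΨ0 y
      have e : bump L V.1 x / Ψ x - bump L V.1 y / Ψ y =
          (bump L V.1 x - bump L V.1 y) / Ψ x + bump L V.1 y * ((Ψ y - Ψ x) / (Ψ x * Ψ y)) := by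
        field_simp
        ring
      rw [e]
      refine (abs_add_le _ _).trans ?_
      rw [abs_div, abs_mul, abs_div, abs_of_pos hx0, abs_of_pos (mul_pos hx0 hy0),
        abs_of_nonneg (bump_nonneg L V.1 y)]
    refine (Finset.sum_le_sum (fun V _ => hterm V)).trans ?_
    rw [Finset.sum_add_distrib, ← Finset.sum_div, ← Finset.sum_mul, hSy]
    have hx0 := hΨ0 x
    have hy0 := hΨ0 y
    have e2 : Ψ y * (|Ψ y - Ψ x| / (Ψ x * Ψ y)) = |Ψ y - Ψ x| / Ψ x := by
      field_simp
    rw [e2, ← add_div, div_le_iff₀ hx0]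
    have : ε * L ≤ ε * Ψ x := by gcongr; exact hΨL x
    linarith
  · intro V
    exact (Metric.ediam_mono (fun x hx => bump_pos L V.1 x (hpos V x hx))).trans (hdiam V.1 V.2)

/-- For an ∞-pseudo-metric space `X` and `n ≥ 0`, the following are
equivalent: (1) for every `R, ε > 0` there is an `(ε,R)`-continuous partition of unity of
dimension at most `n` with uniformly bounded strata; (2) for every `R > 0`, `X` is a union
of `n+1` sets each of which is a union of an `R`-disjoint uniformly bounded family;
(3) for every `R > 0`, `X` has a uniformly bounded cover of Lebesgue number at least `R`
and multiplicity at most `n+1`. -/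
theorem stmt14 {X : Type} [PseudoEMetricSpace X] (n : ℕ) :
    ((∀ R ε : ℝ, 0 < R → 0 < ε → ∃ (S : Type) (φ : S → X → ℝ),
        (∀ s x, 0 ≤ φ s x ∧ φ s x ≤ 1) ∧
        (∀ x, HasSum (fun s => φ s x) 1) ∧
        (∀ x : X, ∃ F : Finset S, F.card ≤ n + 1 ∧ ∀ s, 0 < φ s x → s ∈ F) ∧
        (∀ x y : X, edist x y ≤ ENNReal.ofReal R → (∑' s, |φ s x - φ s y|) ≤ ε) ∧
        (∃ D : ℝ, 0 < D ∧ ∀ s, EMetric.diam {x | 0 < φ s x} ≤ ENNReal.ofReal D)) ↔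
      (∀ R : ℝ, 0 < R → ∃ (F : Fin (n + 1) → Set (Set X)) (D : ℝ), 0 < D ∧
        (⋃ k, ⋃₀ F k) = Set.univ ∧
        (∀ k, ∀ A ∈ F k, ∀ B ∈ F k, A ≠ B → ∀ x ∈ A, ∀ y ∈ B,
          ENNReal.ofReal R ≤ edist x y) ∧
        (∀ k, ∀ A ∈ F k, EMetric.diam A ≤ ENNReal.ofReal D))) ∧
    ((∀ R : ℝ, 0 < R → ∃ (F : Fin (n + 1) → Set (Set X)) (D : ℝ), 0 < D ∧
        (⋃ k, ⋃₀ F k) = Set.univ ∧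
        (∀ k, ∀ A ∈ F k, ∀ B ∈ F k, A ≠ B → ∀ x ∈ A, ∀ y ∈ B,
          ENNReal.ofReal R ≤ edist x y) ∧
        (∀ k, ∀ A ∈ F k, EMetric.diam A ≤ ENNReal.ofReal D)) ↔
      (∀ R : ℝ, 0 < R → ∃ (𝒱 : Set (Set X)) (D : ℝ), 0 < D ∧
        ⋃₀ 𝒱 = Set.univ ∧
        (∀ x : X, ∃ V ∈ 𝒱, EMetric.closedBall x (ENNReal.ofReal R) ⊆ V) ∧
        (∀ x : X, ∃ G : Finset (Set X), G.card ≤ n + 1 ∧ ∀ V ∈ 𝒱, x ∈ V → V ∈ G) ∧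
        (∀ V ∈ 𝒱, EMetric.diam V ≤ ENNReal.ofReal D))) := by
  exact ⟨⟨dec_of_pu n, fun h => pu_of_cov n (cov_of_dec n h)⟩,
    ⟨cov_of_dec n, fun h => dec_of_pu n (pu_of_cov n h)⟩⟩
end

section
/- Let {X_s}_{s∈S} be a family of ∞-pseudo-metric spaces, let r > 0, and for each s ∈ S let A_s ⊆ X_s be nonempty. Let x_s ∈ B(A_s,r) (the set of points of X_s at distance at most r from A_s) and choose y_s ∈ A_s with d(x_s, y_s) ≤ r. Then the function f : ⋁_{s∈S}(A_s, y_s) → ⋁_{s∈S}(B(A_s,r), x_s) that is the identity on A_s ∖ {y_s} in each component and sends each basepoint (s, y_s) to (s, x_s) is a coarse equivalence. -/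
open scoped ENNReal

open Classical in
/-- The wedge `∞`-pseudo-distance on the disjoint union of pointed `∞`-pseudo-metric
spaces `(Y_s, p_s)`: within one component it is the original distance, across components
it is `d(a, p_s) + d(p_t, b)`. -/
noncomputable def wedgeEDist {S : Type} {Y : S → Type} [∀ s, PseudoEMetricSpace (Y s)]
    (p : ∀ s, Y s) : (Σ s, Y s) → (Σ s, Y s) → ℝ≥0∞
  | ⟨s, a⟩, ⟨t, b⟩ =>
    if h : s = t then edist a (h.symm ▸ b) else edist a (p s) + edist (p t) b

/-- A coarse equivalence with respect to given `∞`-pseudo-distances: bornologous,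
effectively proper, and with coarsely dense image. -/
def CoarseEquivE {A B : Type} (dA : A → A → ℝ≥0∞) (dB : B → B → ℝ≥0∞) (f : A → B) : Prop :=
  (∀ R : ℝ, 0 < R → ∃ S' : ℝ, 0 < S' ∧ ∀ a a',
    dA a a' ≤ ENNReal.ofReal R → dB (f a) (f a') ≤ ENNReal.ofReal S') ∧
  (∀ S' : ℝ, 0 < S' → ∃ R : ℝ, 0 < R ∧ ∀ a a',
    dB (f a) (f a') ≤ ENNReal.ofReal S' → dA a a' ≤ ENNReal.ofReal R) ∧
  (∃ C : ℝ, 0 ≤ C ∧ ∀ b, ∃ a, dB (f a) b ≤ ENNReal.ofReal C)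

/-- The `r`-ball `B(A,r)` around a subset `A`: all points at distance at most `r` from
some point of `A`. -/
def BallAround {X : Type} [PseudoEMetricSpace X] (A : Set X) (r : ℝ) : Set X :=
  {z | ∃ a ∈ A, edist z a ≤ ENNReal.ofReal r}

theorem wedge_same {S : Type} {Y : S → Type} [∀ s, PseudoEMetricSpace (Y s)]
    (p : ∀ s, Y s) (s : S) (a b : Y s) : wedgeEDist p ⟨s, a⟩ ⟨s, b⟩ = edist a b := by
  simp [wedgeEDist]

theorem wedge_ne {S : Type} {Y : S → Type} [∀ s, PseudoEMetricSpace (Y s)]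
    (p : ∀ s, Y s) (s t : S) (h : s ≠ t) (a : Y s) (b : Y t) :
    wedgeEDist p ⟨s, a⟩ ⟨t, b⟩ = edist a (p s) + edist (p t) b := by
  simp [wedgeEDist, h]

theorem edist_close {X : Type} [PseudoEMetricSpace X] {a a' b b' : X} {c : ℝ≥0∞}
    (h : edist a a' ≤ c) (h' : edist b b' ≤ c) : edist a b ≤ edist a' b' + (c + c) := by
  calc edist a b ≤ edist a a' + edist a' b' + edist b' b := edist_triangle4 _ _ _ _
    _ ≤ c + edist a' b' + c := by
      rw [edist_comm b' b]; gcongr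
    _ = _ := by ring

theorem wedge_close {S : Type} {X : S → Type} [∀ s, PseudoEMetricSpace (X s)]
    (A B : ∀ s, Set (X s)) (p : ∀ s, A s) (q : ∀ s, B s) (c : ℝ≥0∞)
    (hpq : ∀ s, edist (p s : X s) (q s : X s) ≤ c)
    (s t : S) (a : A s) (b : A t) (a' : B s) (b' : B t)
    (ha : edist (a : X s) (a' : X s) ≤ c) (hb : edist (b : X t) (b' : X t) ≤ c) :
    wedgeEDist (Y := fun s => ↥(A s)) p ⟨s, a⟩ ⟨t, b⟩ ≤
      wedgeEDist (Y := fun s => ↥(B s)) q ⟨s, a'⟩ ⟨t, b'⟩ + (c + c + (c + c)) := by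
  by_cases h : s = t
  · subst h
    rw [wedge_same, wedge_same, Subtype.edist_eq, Subtype.edist_eq]
    exact (edist_close ha hb).trans (by gcongr <;> exact le_self_add)
  · rw [wedge_ne _ _ _ h, wedge_ne _ _ _ h]
    simp only [Subtype.edist_eq]
    refine (add_le_add (edist_close ha (hpq s)) (edist_close (hpq t) hb)).trans (le_of_eq ?_)
    ring

open Classical in
/-- Given nonempty `A_s ⊆ X_s`, `x_s ∈ B(A_s,r)` and `y_s ∈ A_s` with
`d(x_s,y_s) ≤ r`, the map `⋁_s (A_s, y_s) → ⋁_s (B(A_s,r), x_s)` which is the identity on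
`A_s ∖ {y_s}` and sends the basepoint `y_s` to `x_s` is a coarse equivalence. -/
theorem stmt15 {S : Type} {X : S → Type} [∀ s, PseudoEMetricSpace (X s)]
    (r : ℝ) (hr : 0 < r) (A : ∀ s, Set (X s)) (hA : ∀ s, (A s).Nonempty)
    (x y : ∀ s, X s)
    (hy : ∀ s, y s ∈ A s)
    (hxy : ∀ s, edist (x s) (y s) ≤ ENNReal.ofReal r)
    (hxB : ∀ s, x s ∈ BallAround (A s) r)
    (hAB : ∀ s, A s ⊆ BallAround (A s) r) :
    CoarseEquivE
      (wedgeEDist (Y := fun s => ↥(A s)) (fun s => ⟨y s, hy s⟩))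
      (wedgeEDist (Y := fun s => ↥(BallAround (A s) r)) (fun s => ⟨x s, hxB s⟩))
      (fun u => ⟨u.1, if (u.2 : X u.1) = y u.1 then ⟨x u.1, hxB u.1⟩
                      else ⟨(u.2 : X u.1), hAB u.1 u.2.2⟩⟩) := by
  have hg : ∀ s (a : A s), edist (((if (a : X s) = y s then ⟨x s, hxB s⟩
      else ⟨(a : X s), hAB s a.2⟩ : BallAround (A s) r)) : X s) (a : X s) ≤ ENNReal.ofReal r := by
    intro s a
    split_ifs with h
    · simpa [h] using hxy s
    · simp
  have hc : ∀ R : ℝ, 0 < R → ENNReal.ofReal R + (ENNReal.ofReal r + ENNReal.ofReal r +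
      (ENNReal.ofReal r + ENNReal.ofReal r)) = ENNReal.ofReal (R + (r + r + (r + r))) := by
    intro R hR
    rw [ENNReal.ofReal_add, ENNReal.ofReal_add, ENNReal.ofReal_add] <;> positivity
  refine ⟨fun R hR => ⟨R + (r + r + (r + r)), by positivity, ?_⟩,
    fun R hR => ⟨R + (r + r + (r + r)), by positivity, ?_⟩, r + r, by positivity, ?_⟩
  · rintro ⟨s, a⟩ ⟨t, b⟩ h
    rw [← hc R hR]
    refine le_trans ?_ (add_le_add_left h _)
    exact wedge_close (fun s => BallAround (A s) r) A _ _ _ hxy s t _ _ _ _ (hg s a) (hg t b)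
  · rintro ⟨s, a⟩ ⟨t, b⟩ h
    rw [← hc R hR]
    refine le_trans ?_ (add_le_add_left h _)
    exact wedge_close A (fun s => BallAround (A s) r) _ _ _
      (fun s => by rw [edist_comm]; exact hxy s) s t _ _ _ _
      (by rw [edist_comm]; exact hg s a) (by rw [edist_comm]; exact hg t b)
  · rintro ⟨s, b, a, ha, hab⟩
    refine ⟨⟨s, a, ha⟩, ?_⟩
    rw [wedge_same, Subtype.edist_eq, ENNReal.ofReal_add hr.le hr.le]
    refine (edist_triangle _ a _).trans (add_le_add (hg s ⟨a, ha⟩) ?_)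
    rw [edist_comm]; exact hab
end

section
/- Let X be an ∞-pseudo-metric space, let {X_s}_{s∈S} be a family of subsets of X, and let x₀ ∈ ⋂_{s∈S} X_s be a point with the property that for each r > 0 there is t > 0 such that the family {X_s ∖ B(x₀,t)}_{s∈S} is r-disjoint. Then the function f : ⋁_{s∈S}(X_s, x₀) → ⋃_{s∈S} X_s that is the identity on each X_s is a coarse equivalence. -/
open scoped ENNReal

/-- If `x₀ ∈ ⋂_s X_s` and for each `r > 0` there is `t > 0` such that the
family `{X_s ∖ B(x₀,t)}` is `r`-disjoint, then the map `⋁_s (X_s, x₀) → ⋃_s X_s` which is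
the identity on each `X_s` is a coarse equivalence. -/
theorem stmt16 {S X : Type} [PseudoEMetricSpace X]
    (Xs : S → Set X) (x₀ : X) (h₀ : ∀ s, x₀ ∈ Xs s)
    (hd : ∀ r : ℝ, 0 < r → ∃ t : ℝ, 0 < t ∧ ∀ s s', s ≠ s' →
      ∀ a ∈ Xs s \ EMetric.closedBall x₀ (ENNReal.ofReal t),
      ∀ b ∈ Xs s' \ EMetric.closedBall x₀ (ENNReal.ofReal t),
        ENNReal.ofReal r ≤ edist a b) :
    CoarseEquivE
      (wedgeEDist (Y := fun s => ↥(Xs s)) (fun s => ⟨x₀, h₀ s⟩))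
      (fun a b : ↥(⋃ s, Xs s) => edist a b)
      (fun u => ⟨(u.2 : X), Set.mem_iUnion.mpr ⟨u.1, u.2.2⟩⟩) := by
  have hsame : ∀ (s : S) (a b : Xs s),
      wedgeEDist (Y := fun s => ↥(Xs s)) (fun s => ⟨x₀, h₀ s⟩) ⟨s, a⟩ ⟨s, b⟩
        = edist (a : X) (b : X) := by
    intro s a b
    simp [wedgeEDist, Subtype.edist_eq]
  have hdiff : ∀ (s t : S) (a : Xs s) (b : Xs t), s ≠ t →
      wedgeEDist (Y := fun s => ↥(Xs s)) (fun s => ⟨x₀, h₀ s⟩) ⟨s, a⟩ ⟨t, b⟩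
        = edist (a : X) x₀ + edist x₀ (b : X) := by
    intro s t a b hst
    simp [wedgeEDist, hst, Subtype.edist_eq]
  refine ⟨?_, ?_, ?_⟩
  · intro R hR
    refine ⟨R, hR, ?_⟩
    rintro ⟨s, a⟩ ⟨t, b⟩ h
    change edist (a : X) (b : X) ≤ _
    by_cases hst : s = t
    · subst hst
      rwa [hsame] at h
    · rw [hdiff s t a b hst] at h
      exact (edist_triangle _ x₀ _).trans h
  · intro R hR
    obtain ⟨t, ht, H⟩ := hd (R + 1) (by linarith)
    refine ⟨t + (t + R), by linarith, ?_⟩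
    rintro ⟨s, a⟩ ⟨s', b⟩ h
    change edist (a : X) (b : X) ≤ _ at h
    by_cases hst : s = s'
    · subst hst
      rw [hsame]
      exact h.trans (ENNReal.ofReal_le_ofReal (by linarith))
    · rw [hdiff s s' a b hst, ENNReal.ofReal_add ht.le (by linarith),
        ENNReal.ofReal_add ht.le hR.le]
      by_cases ha : edist (a : X) x₀ ≤ ENNReal.ofReal t
      · refine add_le_add ha ?_
        calc edist x₀ (b : X) ≤ edist x₀ (a : X) + edist (a : X) (b : X) := edist_triangle _ _ _
          _ ≤ _ := add_le_add (by rwa [edist_comm]) h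
      · by_cases hb : edist (b : X) x₀ ≤ ENNReal.ofReal t
        · rw [add_comm]
          refine add_le_add (by rwa [edist_comm]) ?_
          calc edist (a : X) x₀ ≤ edist (a : X) (b : X) + edist (b : X) x₀ := edist_triangle _ _ _
            _ ≤ ENNReal.ofReal R + ENNReal.ofReal t := add_le_add h hb
            _ = _ := add_comm _ _
        · exfalso
          have h1 := (H s s' hst a ⟨a.2, ha⟩ b ⟨b.2, hb⟩).trans h
          rw [ENNReal.ofReal_le_ofReal_iff hR.le] at h1
          linarith
  · refine ⟨0, le_rfl, ?_⟩
    rintro ⟨b, hb⟩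
    obtain ⟨s, hs⟩ := Set.mem_iUnion.mp hb
    exact ⟨⟨s, ⟨b, hs⟩⟩, by simp⟩
end

section
/- Let X be an ∞-pseudo-metric space, let m ≥ 1 be an integer, let R_1, …, R_m > 0 and D > 0, and suppose X admits a decomposition X = ⋃_{i=1}^m X^i where each X^i is the union of an R_i-disjoint family of subsets of X each of diameter at most D. Let {X_s}_{s∈S} be a family of subsets of X with chosen basepoints x_s ∈ X_s. Then there is D' > 0 such that the wedge ⋁_{s∈S}(X_s, x_s) admits a decomposition into m subsets Y^1, …, Y^m where each Y^i is the union of an R_i-disjoint family of subsets each of diameter at most D'. -/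
open scoped ENNReal

/-- If `X = ⋃_{i=1}^m X^i` where each `X^i` is a union of an `R_i`-disjoint
family of sets of diameter at most `D`, and `{X_s}` is a family of subsets of `X` with
basepoints `x_s ∈ X_s`, then there is `D' > 0` such that the wedge `⋁_s (X_s, x_s)`
decomposes into `m` subsets, the `i`-th being a union of an `R_i`-disjoint family of sets
of diameter at most `D'` (with respect to the wedge distance). -/
theorem stmt17 {X : Type} [PseudoEMetricSpace X] (m : ℕ) (hm : 1 ≤ m)
    (R : Fin m → ℝ) (hR : ∀ i, 0 < R i) (D : ℝ) (hD : 0 < D)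
    (F : Fin m → Set (Set X))
    (hcover : (⋃ i, ⋃₀ F i) = Set.univ)
    (hdisj : ∀ i, ∀ A ∈ F i, ∀ B ∈ F i, A ≠ B → ∀ x ∈ A, ∀ y ∈ B,
      ENNReal.ofReal (R i) ≤ edist x y)
    (hbdd : ∀ i, ∀ A ∈ F i, EMetric.diam A ≤ ENNReal.ofReal D)
    (S : Type) (Xs : S → Set X) (x : S → X) (hx : ∀ s, x s ∈ Xs s) :
    ∃ D' : ℝ, 0 < D' ∧ ∃ G : Fin m → Set (Set (Σ s, ↥(Xs s))),
      (⋃ i, ⋃₀ G i) = Set.univ ∧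
      (∀ i, ∀ A ∈ G i, ∀ B ∈ G i, A ≠ B → ∀ u ∈ A, ∀ v ∈ B,
        ENNReal.ofReal (R i) ≤
          wedgeEDist (Y := fun s => ↥(Xs s)) (fun s => ⟨x s, hx s⟩) u v) ∧
      (∀ i, ∀ A ∈ G i, ∀ u ∈ A, ∀ v ∈ A,
        wedgeEDist (Y := fun s => ↥(Xs s)) (fun s => ⟨x s, hx s⟩) u v
          ≤ ENNReal.ofReal D') := by
  have hsame : ∀ (s : S) (a b : ↥(Xs s)),
      wedgeEDist (Y := fun s => ↥(Xs s)) (fun s => ⟨x s, hx s⟩) ⟨s, a⟩ ⟨s, b⟩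
        = edist a.1 b.1 := by
    intro s a b
    simp [wedgeEDist, Subtype.edist_eq]
  have hdiff : ∀ (s t : S) (a : ↥(Xs s)) (b : ↥(Xs t)), s ≠ t →
      wedgeEDist (Y := fun s => ↥(Xs s)) (fun s => ⟨x s, hx s⟩) ⟨s, a⟩ ⟨t, b⟩
        = edist a.1 (x s) + edist (x t) b.1 := by
    intro s t a b h
    simp [wedgeEDist, h, Subtype.edist_eq]
  have hle : ∀ (s t : S) (a : ↥(Xs s)) (b : ↥(Xs t)),
      wedgeEDist (Y := fun s => ↥(Xs s)) (fun s => ⟨x s, hx s⟩) ⟨s, a⟩ ⟨t, b⟩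
        ≤ edist a.1 (x s) + edist (x t) b.1 := by
    intro s t a b
    by_cases h : s = t
    · subst h
      rw [hsame]
      exact edist_triangle _ _ _
    · rw [hdiff s t a b h]
  have hAD : ∀ i, ∀ A ∈ F i, ∀ a ∈ A, ∀ b ∈ A, edist a b ≤ ENNReal.ofReal D := by
    intro i A hA a ha b hb
    exact (Metric.edist_le_ediam_of_mem ha hb).trans (hbdd i A hA)
  have hRs : ∀ i, R i ≤ ∑ j, R j := fun i =>
    Finset.single_le_sum (f := R) (fun j _ => (hR j).le) (Finset.mem_univ i)
  have hS0 : 0 ≤ ∑ j, R j := Finset.sum_nonneg fun j _ => (hR j).le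
  -- the central piece, and the pieces far away from the base point
  let M : Fin m → Set (Σ s, ↥(Xs s)) := fun i =>
    {u | ∃ A ∈ F i, u.2.1 ∈ A ∧ ∃ a ∈ A, a ∈ Xs u.1 ∧ edist a (x u.1) < ENNReal.ofReal (R i)}
  let N : S → Set X → Set (Σ s, ↥(Xs s)) := fun s A => {u | u.1 = s ∧ u.2.1 ∈ A}
  let far : Fin m → S → Set X → Prop := fun i s A =>
    ∀ a ∈ A, a ∈ Xs s → ENNReal.ofReal (R i) ≤ edist a (x s)
  have hMN : ∀ i, ∀ s, ∀ A ∈ F i, far i s A → ∀ u ∈ M i, ∀ v ∈ N s A,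
      ENNReal.ofReal (R i) ≤
        wedgeEDist (Y := fun s => ↥(Xs s)) (fun s => ⟨x s, hx s⟩) u v ∧
      ENNReal.ofReal (R i) ≤
        wedgeEDist (Y := fun s => ↥(Xs s)) (fun s => ⟨x s, hx s⟩) v u := by
    rintro i s A hA hf ⟨t, u⟩ ⟨B, hB, huB, b, hbB, hbX, hb⟩ ⟨s', v⟩ ⟨hs, hv⟩
    dsimp only at hs huB hbX hb hv
    subst hs
    by_cases h : t = s'
    · subst h
      have hne : B ≠ A := by
        rintro rfl
        exact absurd (hf b hbB hbX) (not_le.2 hb)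
      rw [hsame, hsame]
      exact ⟨hdisj i B hB A hA hne _ huB _ hv, hdisj i A hA B hB hne.symm _ hv _ huB⟩
    · rw [hdiff _ _ _ _ h, hdiff _ _ _ _ (Ne.symm h)]
      have := hf v.1 hv v.2
      refine ⟨?_, this.trans le_self_add⟩
      rw [edist_comm] at this
      exact this.trans le_add_self
  refine ⟨2 * (∑ j, R j + D), by linarith, fun i =>
    {T | T = M i ∨ ∃ s, ∃ A ∈ F i, far i s A ∧ T = N s A}, ?_, ?_, ?_⟩
  · rw [Set.eq_univ_iff_forall]
    rintro ⟨s, u⟩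
    have hu : u.1 ∈ ⋃ i, ⋃₀ F i := by rw [hcover]; trivial
    obtain ⟨i, A, hA, huA⟩ := by simpa only [Set.mem_iUnion, Set.mem_sUnion] using hu
    refine Set.mem_iUnion.2 ⟨i, ?_⟩
    by_cases h : far i s A
    · exact ⟨N s A, Or.inr ⟨s, A, hA, h, rfl⟩, rfl, huA⟩
    · simp only [far, not_forall, not_le] at h
      obtain ⟨a, ha, haX, hlt⟩ := h
      exact ⟨M i, Or.inl rfl, A, hA, huA, a, ha, haX, hlt⟩
  · rintro i T (rfl | ⟨s, A, hA, hfA, rfl⟩) T' (rfl | ⟨t, B, hB, hfB, rfl⟩) hne u hu v hv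
    · exact absurd rfl hne
    · exact (hMN i t B hB hfB u hu v hv).1
    · exact (hMN i s A hA hfA v hv u hu).2
    · obtain ⟨s', u⟩ := u
      obtain ⟨t', v⟩ := v
      obtain ⟨h1, hu⟩ := hu
      obtain ⟨h2, hv⟩ := hv
      dsimp only at h1 h2 hu hv
      subst h1 h2
      by_cases h : s' = t'
      · subst h
        rw [hsame]
        refine hdisj i A hA B hB ?_ _ hu _ hv
        rintro rfl
        exact hne rfl
      · rw [hdiff _ _ _ _ h]
        exact (hfA u.1 hu u.2).trans le_self_add
  · rintro i T (rfl | ⟨s, A, hA, hfA, rfl⟩) ⟨s', u⟩ hu ⟨t', v⟩ hv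
    · have key : ∀ (s : S) (u : ↥(Xs s)), (⟨s, u⟩ : Σ s, ↥(Xs s)) ∈ M i →
          edist u.1 (x s) ≤ ENNReal.ofReal (∑ j, R j + D) := by
        rintro s u ⟨A, hA, huA, a, ha, -, hlt⟩
        dsimp only at huA hlt
        rw [add_comm, ENNReal.ofReal_add hD.le hS0]
        exact (edist_triangle _ a _).trans (add_le_add (hAD i A hA _ huA _ ha)
          (hlt.le.trans (ENNReal.ofReal_le_ofReal (hRs i))))
      refine (hle _ _ _ _).trans ?_
      rw [two_mul, ENNReal.ofReal_add (by linarith) (by linarith)]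
      refine add_le_add (key _ _ hu) ?_
      rw [edist_comm]
      exact key _ _ hv
    · obtain ⟨h1, hu⟩ := hu
      obtain ⟨h2, hv⟩ := hv
      dsimp only at h1 h2 hu hv
      subst h1
      subst h2
      rw [hsame]
      exact (hAD i A hA _ hu _ hv).trans (ENNReal.ofReal_le_ofReal (by linarith))
end
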